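/- Let s ∈ ℂ with 1 < Re(s) < 2 and s ≠ 3/2. Then the series below converges and ∑_{m,n ≥ 1} (m² + mn)^{−s} = ζ(s)² − s ζ(s−1) ζ(s+1) + Γ(1−s)Γ(2s−1)ζ(2s−1)/Γ(s) − ((2π)^s / (2Γ(s)cos(πs/2))) ∑_{n=1}^∞ [σ_{2s−1}(n)/n^{s−1/2}] ( 1/√n + (π/√2)·((−1)^n/sin(πs/2))·Y_{s−1/2}(πn) + (s(1−s)/(2πn^{3/2}))·cot(πs/2) ). -/

import Mathlib

/-!
Since `m² + mn = m(m + n)`, the double series is `∑_N ∑_n n⁻ˢ (n + N)⁻ˢ`. By the Gamma integral, the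
inner sum is, up to the factor `Γ(s)`, the Laplace transform at `N` of `yˢ⁻¹ Li_s(e⁻ʸ)`.

The polylogarithm is expanded exactly, for all `y > 0`. Lipschitz's formula (`lipschitz_formula`, Poisson
summation for `xᵖ e⁻ʸˣ`), integrated twice in `y`, gives
`Li_s(e⁻ʸ) = Γ(1-s) y^{s-1} + ζ(s) - ζ(s-1) y + Γ(1-s) ∑_{k ≠ 0} r_k(y)`,
where `r_k` is the first-order Taylor remainder at `0` of `(y + 2πik)^{s-1}` (`polyExp_neg`). The
constants of integration are zeta values because of `zeta_limit`, an Euler–Maclaurin type limit for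
`ζ(s-1)`, which lies inside the critical strip. Integrating termwise yields the three zeta terms of the
theorem and a series of remainder integrals (`tsum_inner_eq`).

The substitution `y = 2πkt` shows that the remainder integral for `(k, N)` is `k^{2s-1}` times a function
`remInt` of `2πkN`, up to a constant (`freqInt_eq`). The double series over `(k, N)` converges absolutely,
and grouping by `n = kN` produces `σ_{2s-1}(n)` (`hasSum_csigma`).

It remains to identify `remInt s (2πn)` with the bracket (`remInt_eq_bracket`). Without its Taylor terms it
is a combination of the integrals `∫₀^∞ tᵃ (1 ± it)ᵃ e^{-2xt} dt` with `a = s - 1`, `x = πn`. Multiplied by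
`e^{±ix}`, these solve the same first-order linear system as `J_{a+1/2}` and `J_{-a-1/2}`. The Wronskians
of the three solutions are constant and are computed as `x → 0⁺`, which expresses the integrals through
the two Bessel functions (`kInt_eq_gBes`); the combination at hand is `Y_{s-1/2}(πn)` (`kInt_comb`). The
hypothesis `s ≠ 3/2` enters only here, as `cos(πa) ≠ 0`. The constants agree by the reflection formula
(`const_match`).
-/

noncomputable section

/-- The Bessel function of the first kind
`J_ν(x) = ∑_{m=0}^∞ (−1)^m (x/2)^{2m+ν}/(m! Γ(m+1+ν))`, with
`(x/2)^{2m+ν} := exp((2m+ν) log(x/2))`. -/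
def besselJ (ν : ℂ) (x : ℝ) : ℂ :=
  ∑' m : ℕ, (-1) ^ m * ((x / 2 : ℝ) : ℂ) ^ (2 * (m : ℂ) + ν) /
    ((Nat.factorial m : ℂ) * Complex.Gamma ((m : ℂ) + 1 + ν))

/-- The Bessel function of the second kind `Y_ν(x)` for `ν ∉ ℤ`. -/
def besselY (ν : ℂ) (x : ℝ) : ℂ :=
  (besselJ ν x * Complex.cos ((Real.pi : ℂ) * ν) - besselJ (-ν) x) /
    Complex.sin ((Real.pi : ℂ) * ν)

/-- The generalized divisor function `σ_a(n) = ∑_{d ∣ n} d^a`. -/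
def csigma (a : ℂ) (n : ℕ) : ℂ := ∑ d ∈ n.divisors, (d : ℂ) ^ a

open Complex MeasureTheory Set Filter Topology

/-! ### Laplace integrals -/

/-- Integrability for real exponents `c > 0` carries over to the half-plane `Re z > 0`. -/
theorem laplace_integrable {h : ℝ → ℂ}
    (hint : ∀ c : ℝ, 0 < c → IntegrableOn (fun t : ℝ => h t * cexp (-((c : ℂ) * t))) (Ioi 0))
    {z : ℂ} (hz : 0 < z.re) : IntegrableOn (fun t : ℝ => h t * cexp (-(z * t))) (Ioi 0) := by
  have h1 := hint z.re hz
  have h2 : AEStronglyMeasurable (fun t : ℝ => h t * cexp (-(z * t))) (volume.restrict (Ioi 0)) := by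
    have : (fun t : ℝ => h t * cexp (-(z * t))) =
        fun t : ℝ => (h t * cexp (-((z.re : ℂ) * t))) * cexp (-((z - z.re) * t)) := by
      ext t
      rw [mul_assoc, ← Complex.exp_add]; ring_nf
    rw [this]
    exact h1.aestronglyMeasurable.mul (by fun_prop)
  refine Integrable.mono h1 h2 (ae_of_all _ fun t => le_of_eq ?_)
  simp [Complex.norm_exp]

/-- The extra factor `t` is absorbed by halving the exponent. -/
theorem laplace_integrable_mul {h : ℝ → ℂ}
    (hint : ∀ c : ℝ, 0 < c → IntegrableOn (fun t : ℝ => h t * cexp (-((c : ℂ) * t))) (Ioi 0))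
    (c : ℝ) (hc : 0 < c) :
    IntegrableOn (fun t : ℝ => ((t : ℂ) * h t) * cexp (-((c : ℂ) * t))) (Ioi 0) := by
  have h1 := (hint (c / 2) (by positivity)).norm.const_mul (2 / c)
  refine h1.mono' ?_ ?_
  · have : (fun t : ℝ => ((t : ℂ) * h t) * cexp (-((c : ℂ) * t))) =
        fun t : ℝ => (t : ℂ) * (h t * cexp (-((c : ℂ) * t))) := by
      ext t; ring
    rw [this]
    exact AEStronglyMeasurable.mul (by fun_prop) (hint c hc).aestronglyMeasurable
  · refine (ae_restrict_iff' measurableSet_Ioi).2 (ae_of_all _ fun t ht => ?_)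
    have ht0 : (0 : ℝ) < t := ht
    simp only [norm_mul, Complex.norm_exp, Complex.norm_real, Real.norm_eq_abs, abs_of_pos ht0]
    have e1 : (-((c : ℂ) * t)).re = -(c / 2 * t) - (c / 2 * t) := by simp; ring
    have e2 : (-(((c / 2 : ℝ) : ℂ) * t)).re = -(c / 2 * t) := by
      rw [← ofReal_mul, ← ofReal_neg, ofReal_re]
    rw [e1, e2, Real.exp_sub]
    have h3 : c / 2 * t ≤ Real.exp (c / 2 * t) := by
      linarith [Real.add_one_le_exp (c / 2 * t)]
    have h4 : t / Real.exp (c / 2 * t) ≤ 2 / c := by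
      rw [div_le_div_iff₀ (Real.exp_pos _) hc]; nlinarith
    calc t * ‖h t‖ * (Real.exp (-(c / 2 * t)) / Real.exp (c / 2 * t))
        = (t / Real.exp (c / 2 * t)) * (‖h t‖ * Real.exp (-(c / 2 * t))) := by ring
      _ ≤ _ := by gcongr

/-- Differentiation under the integral sign for Laplace transforms. -/
theorem laplace_hasDerivAt {h : ℝ → ℂ}
    (hint : ∀ c : ℝ, 0 < c → IntegrableOn (fun t : ℝ => h t * cexp (-((c : ℂ) * t))) (Ioi 0))
    {z : ℂ} (hz : 0 < z.re) :
    HasDerivAt (fun z : ℂ => ∫ t in Ioi (0 : ℝ), h t * cexp (-(z * t)))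
      (∫ t in Ioi (0 : ℝ), -(((t : ℂ) * h t) * cexp (-(z * t)))) z := by
  have hz2 : 0 < z.re / 2 := by positivity
  have hs : {w : ℂ | z.re / 2 < w.re} ∈ 𝓝 z :=
    (isOpen_lt continuous_const Complex.continuous_re).mem_nhds (by simp; linarith)
  refine (hasDerivAt_integral_of_dominated_loc_of_deriv_le (𝕜 := ℂ)
    (μ := volume.restrict (Ioi 0)) (F := fun (z : ℂ) (t : ℝ) => h t * cexp (-(z * t)))
    (F' := fun (z : ℂ) (t : ℝ) => -(((t : ℂ) * h t) * cexp (-(z * t))))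
    (bound := fun t : ℝ => ‖((t : ℂ) * h t) * cexp (-(((z.re / 2 : ℝ) : ℂ) * t))‖)
    hs ?_ (laplace_integrable hint hz) ?_ ?_ ?_ ?_).2
  · filter_upwards [hs] with w hw
    exact (laplace_integrable hint (hz2.trans hw)).aestronglyMeasurable
  · exact (laplace_integrable (laplace_integrable_mul hint) hz).aestronglyMeasurable.neg
  · refine (ae_restrict_iff' measurableSet_Ioi).2 (ae_of_all _ fun t ht w hw => ?_)
    have ht0 : (0 : ℝ) < t := ht
    simp only [norm_neg, norm_mul, Complex.norm_exp]
    have e2 : (-(((z.re / 2 : ℝ) : ℂ) * t)).re = -(z.re / 2 * t) := by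
      rw [← ofReal_mul, ← ofReal_neg, ofReal_re]
    have e1 : (-(w * t)).re = -(w.re * t) := by simp
    rw [e1, e2]
    have : z.re / 2 < w.re := hw
    gcongr
  · exact (laplace_integrable_mul hint _ hz2).norm
  · refine ae_of_all _ fun t w hw => ?_
    have : HasDerivAt (fun w : ℂ => cexp (-(w * t))) (cexp (-(w * t)) * (-(1 * (t : ℂ)))) w :=
      (((hasDerivAt_id w).mul_const (t : ℂ)).neg).cexp
    convert! this.const_mul (h t) using 1
    ring

theorem rpow_exp_integrable {b c : ℝ} (hb : -1 < b) (hc : 0 < c) :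
    IntegrableOn (fun t : ℝ => t ^ b * Real.exp (-(c * t))) (Ioi 0) := by
  simpa using integrableOn_rpow_mul_exp_neg_mul_rpow hb (zero_lt_one' ℝ) hc

theorem cpow_exp_integrable {p : ℂ} (hp : -1 < p.re) (c : ℝ) (hc : 0 < c) :
    IntegrableOn (fun t : ℝ => (t : ℂ) ^ p * cexp (-((c : ℂ) * t))) (Ioi 0) := by
  refine (rpow_exp_integrable hp hc).mono' ?_ ?_
  · refine ContinuousOn.aestronglyMeasurable (fun t ht => ContinuousAt.continuousWithinAt ?_)
      measurableSet_Ioi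
    have ht0 : (0 : ℝ) < t := ht
    refine ContinuousAt.mul (continuousAt_ofReal_cpow_const _ _ (Or.inr ht0.ne')) (by fun_prop)
  · refine (ae_restrict_iff' measurableSet_Ioi).2 (ae_of_all _ fun t ht => ?_)
    have ht0 : (0 : ℝ) < t := ht
    rw [norm_mul, norm_cpow_eq_rpow_re_of_pos ht0, Complex.norm_exp]
    simp

theorem gamma_laplace {a r : ℂ} (ha : 0 < a.re) (hr : 0 < r.re) :
    ∫ t in Ioi (0 : ℝ), (t : ℂ) ^ (a - 1) * cexp (-(r * t)) = r ^ (-a) * Gamma a := by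
  have hU : IsOpen {z : ℂ | 0 < z.re} := isOpen_lt continuous_const Complex.continuous_re
  have hp : -1 < (a - 1).re := by simp; linarith
  have h1 : AnalyticOnNhd ℂ (fun z : ℂ => ∫ t in Ioi (0 : ℝ), (t : ℂ) ^ (a - 1) * cexp (-(z * t)))
      {z : ℂ | 0 < z.re} :=
    DifferentiableOn.analyticOnNhd (fun z hz =>
      (laplace_hasDerivAt (cpow_exp_integrable hp) hz).differentiableAt.differentiableWithinAt) hU
  have h2 : AnalyticOnNhd ℂ (fun z : ℂ => z ^ (-a) * Gamma a) {z : ℂ | 0 < z.re} :=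
    DifferentiableOn.analyticOnNhd (fun z hz =>
      ((differentiableAt_id.cpow_const (Or.inl hz)).mul_const _).differentiableWithinAt) hU
  refine h1.eqOn_of_preconnected_of_frequently_eq h2 (convex_halfSpace_re_gt 0).isPreconnected
    (z₀ := 1) (by simp) ?_ hr
  have ht : Tendsto (fun n : ℕ => ((1 + 1 / ((n : ℝ) + 1) : ℝ) : ℂ)) atTop (𝓝[≠] 1) := by
    refine tendsto_nhdsWithin_iff.2 ⟨?_, Eventually.of_forall fun n => ?_⟩
    · have := (tendsto_one_div_add_atTop_nhds_zero_nat (𝕜 := ℝ)).const_add 1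
      have h3 := (Complex.continuous_ofReal.tendsto _).comp this
      rw [add_zero, ofReal_one] at h3
      exact h3
    · have : (0 : ℝ) < 1 / ((n : ℝ) + 1) := by positivity
      simp only [mem_compl_iff, mem_singleton_iff]
      intro h
      have := congrArg Complex.re h
      simp at this
      norm_cast at this
  refine ht.frequently (Frequently.of_forall fun n => ?_)
  have hpos : (0 : ℝ) < 1 + 1 / ((n : ℝ) + 1) := by positivity
  set x : ℝ := 1 + 1 / ((n : ℝ) + 1)
  rw [integral_cpow_mul_exp_neg_mul_Ioi ha hpos, one_div, cpow_neg, inv_cpow]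
  rw [arg_ofReal_of_nonneg hpos.le]; exact Real.pi_pos.ne

/-! ### The zeta function as a regularised sum -/

/-- The difference between the value of `x ↦ x⁻ʷ e⁻ʸˣ` at `n + 1` and its integral over
`[n + 1, n + 2]`. -/
noncomputable def emTerm (w : ℂ) (y : ℝ) (n : ℕ) : ℂ :=
  (((n : ℝ) + 1 : ℝ) : ℂ) ^ (-w) * cexp (-((y : ℂ) * (((n : ℝ) + 1 : ℝ) : ℂ))) -
    ∫ x in ((n : ℝ) + 1)..((n : ℝ) + 1 + 1), (x : ℂ) ^ (-w) * cexp (-((y : ℂ) * x))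

theorem hasDerivAt_cpow_real (w : ℂ) {x : ℝ} (hx : 0 < x) :
    HasDerivAt (fun x : ℝ => (x : ℂ) ^ w) (w * (x : ℂ) ^ (w - 1)) x := by
  have h : HasDerivAt (fun z : ℂ => z ^ w) (w * (x : ℂ) ^ (w - 1) * 1) (x : ℂ) :=
    (hasDerivAt_id (x : ℂ)).cpow_const (Or.inl (by simpa using hx))
  simpa using h.comp_ofReal

theorem hasDerivAt_exp_real (y : ℂ) (x : ℝ) :
    HasDerivAt (fun x : ℝ => cexp (-(y * x))) (-y * cexp (-(y * x))) x := by
  have h : HasDerivAt (fun z : ℂ => cexp (-(y * z))) (cexp (-(y * x)) * (-(y * 1))) (x : ℂ) :=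
    (((hasDerivAt_id (x : ℂ)).const_mul y).neg).cexp
  convert! h.comp_ofReal using 1
  ring

/-- By the mean value theorem. The bound is uniform in `y ≥ 0`, which permits dominated convergence as
`y → 0⁺`. -/
theorem emTerm_bound {w : ℂ} (hw : 0 < w.re) {y : ℝ} (hy : 0 ≤ y) (n : ℕ) :
    ‖emTerm w y n‖ ≤ (‖w‖ + 1) * ((n : ℝ) + 1) ^ (-w.re - 1) := by
  set a : ℝ := (n : ℝ) + 1 with ha
  have ha0 : 0 < a := by positivity
  set C := (‖w‖ + 1) * a ^ (-w.re - 1) with hC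
  let f : ℝ → ℂ := fun x => (x : ℂ) ^ (-w) * cexp (-((y : ℂ) * x))
  have hd : ∀ x ∈ Icc a (a + 1), HasDerivAt f
      ((-w * (x : ℂ) ^ (-w - 1)) * cexp (-((y : ℂ) * x)) +
        (x : ℂ) ^ (-w) * (-(y : ℂ) * cexp (-((y : ℂ) * x)))) x := fun x hx =>
    (hasDerivAt_cpow_real (-w) (ha0.trans_le hx.1)).mul (hasDerivAt_exp_real y x)
  have hb : ∀ x ∈ Icc a (a + 1), ‖(-w * (x : ℂ) ^ (-w - 1)) * cexp (-((y : ℂ) * x)) +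
        (x : ℂ) ^ (-w) * (-(y : ℂ) * cexp (-((y : ℂ) * x)))‖ ≤ C := by
    intro x hx
    have hx0 : 0 < x := ha0.trans_le hx.1
    have e : (-((y : ℂ) * x)).re = -(y * x) := by simp
    have hyx : 0 ≤ y * x := by positivity
    have h1 : Real.exp (-(y * x)) ≤ 1 := by simpa using hyx
    have h2 : y * x * Real.exp (-(y * x)) ≤ 1 := by
      have := Real.add_one_le_exp (y * x)
      rw [Real.exp_neg, ← div_eq_mul_inv, div_le_one (Real.exp_pos _)]
      linarith
    have h3 : x ^ (-w.re) = x ^ (-w.re - 1) * x := by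
      rw [Real.rpow_sub_one hx0.ne', div_mul_cancel₀ _ hx0.ne']
    have h4 : x ^ (-w.re - 1) ≤ a ^ (-w.re - 1) :=
      Real.rpow_le_rpow_of_nonpos ha0 hx.1 (by linarith)
    have hp : 0 ≤ x ^ (-w.re - 1) := by positivity
    refine (norm_add_le _ _).trans ?_
    rw [norm_mul, norm_mul, norm_mul, norm_mul, norm_neg, norm_neg,
      norm_cpow_eq_rpow_re_of_pos hx0, norm_cpow_eq_rpow_re_of_pos hx0, Complex.norm_exp, e]
    simp only [sub_re, neg_re, one_re, norm_real, Real.norm_eq_abs, abs_of_nonneg hy]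
    rw [h3]
    calc ‖w‖ * x ^ (-w.re - 1) * Real.exp (-(y * x)) +
          x ^ (-w.re - 1) * x * (y * Real.exp (-(y * x)))
        = ‖w‖ * x ^ (-w.re - 1) * Real.exp (-(y * x)) +
          x ^ (-w.re - 1) * (y * x * Real.exp (-(y * x))) := by ring
      _ ≤ ‖w‖ * x ^ (-w.re - 1) * 1 + x ^ (-w.re - 1) * 1 := by gcongr
      _ = (‖w‖ + 1) * x ^ (-w.re - 1) := by ring
      _ ≤ C := by rw [hC]; gcongr
  have hcont : ContinuousOn f (Icc a (a + 1)) := fun x hx =>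
    (hd x hx).continuousAt.continuousWithinAt
  have hint : IntervalIntegrable f volume a (a + 1) :=
    ContinuousOn.intervalIntegrable (by rwa [uIcc_of_le (by linarith)])
  have e1 : emTerm w y n = ∫ x in a..(a + 1), (f a - f x) := by
    rw [intervalIntegral.integral_sub (by simp) hint]
    simp [emTerm, f, ha]
  rw [e1]
  have h5 : ∀ x ∈ Set.uIoc a (a + 1), ‖f a - f x‖ ≤ C := by
    intro x hx
    rw [uIoc_of_le (by linarith)] at hx
    have hC0 : 0 ≤ C := by positivity
    have := (convex_Icc a (a + 1)).norm_image_sub_le_of_norm_hasDerivWithin_le (f := f)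
      (fun x hx => (hd x hx).hasDerivWithinAt) hb (x := x) (y := a) ⟨hx.1.le, hx.2⟩
      ⟨le_refl _, by linarith⟩
    refine this.trans ?_
    rw [Real.norm_eq_abs, abs_of_nonpos (by linarith [hx.1])]
    nlinarith [hx.1, hx.2]
  simpa using intervalIntegral.norm_integral_le_of_norm_le_const h5

theorem summable_succ_rpow {b : ℝ} (hb : b < -1) : Summable fun n : ℕ => ((n : ℝ) + 1) ^ b := by
  have := (summable_nat_add_iff 1).2 (Real.summable_nat_rpow.2 hb)
  simpa using this

theorem emTerm_zero {w : ℂ} (hw : w ≠ 1) (n : ℕ) :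
    (w - 1) * emTerm w 0 n = (w - 1) * (((n : ℝ) + 1 : ℝ) : ℂ) ^ (-w) +
      ((((n : ℝ) + 1 + 1 : ℝ) : ℂ) ^ (1 - w) - (((n : ℝ) + 1 : ℝ) : ℂ) ^ (1 - w)) := by
  have h1 : (1 - w) ≠ 0 := sub_ne_zero.2 hw.symm
  have : ∫ x in ((n : ℝ) + 1)..((n : ℝ) + 1 + 1), (x : ℂ) ^ (-w) =
      ((((n : ℝ) + 1 + 1 : ℝ) : ℂ) ^ (-w + 1) - (((n : ℝ) + 1 : ℝ) : ℂ) ^ (-w + 1)) / (-w + 1) := by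
    refine integral_cpow (Or.inr ⟨fun h => h1 (by linear_combination h), ?_⟩)
    rw [uIcc_of_le (by linarith)]
    intro h
    have : (0 : ℝ) < (n : ℝ) + 1 := by positivity
    linarith [h.1]
  have h2 : -w + 1 ≠ 0 := by intro h; apply h1; linear_combination h
  rw [emTerm]
  simp only [ofReal_zero, zero_mul, neg_zero, Complex.exp_zero, mul_one]
  rw [this, show (1 - w) = -w + 1 by ring]
  field_simp
  ring

/-- For `Re w > 1` the integrals telescope against the series of `ζ(w)`; both sides, extended over `w = 1`
(the right one by the entire function `riemannZeta₁`), are analytic on `Re w > 0`, so the identity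
holds there. -/
theorem tsum_emTerm_zero {w : ℂ} (hw : 0 < w.re) (hw1 : w ≠ 1) :
    (w - 1) * ∑' n, emTerm w 0 n = (w - 1) * riemannZeta w - 1 := by
  -- `G n w = (w - 1) * emTerm w 0 n` for `w ≠ 1`, in a closed form that is entire in `w`.
  let G : ℕ → ℂ → ℂ := fun n w => (w - 1) * (((n : ℝ) + 1 : ℝ) : ℂ) ^ (-w) +
      ((((n : ℝ) + 1 + 1 : ℝ) : ℂ) ^ (1 - w) - (((n : ℝ) + 1 : ℝ) : ℂ) ^ (1 - w))
  have hU : IsOpen {z : ℂ | 0 < z.re} := isOpen_lt continuous_const Complex.continuous_re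
  have hne : ∀ n : ℕ, (((n : ℝ) + 1 : ℝ) : ℂ) ≠ 0 := fun n => by
    rw [ofReal_ne_zero]; positivity
  have hne' : ∀ n : ℕ, (((n : ℝ) + 1 + 1 : ℝ) : ℂ) ≠ 0 := fun n => by
    rw [ofReal_ne_zero]; positivity
  have hGd : ∀ n, Differentiable ℂ (G n) := by
    intro n
    refine Differentiable.add (Differentiable.mul (by fun_prop) ?_) (Differentiable.sub ?_ ?_)
    · exact (differentiable_id.neg).const_cpow (Or.inl (hne n))
    · exact ((differentiable_const _).sub differentiable_id).const_cpow (Or.inl (hne' n))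
    · exact ((differentiable_const _).sub differentiable_id).const_cpow (Or.inl (hne n))
  have hGb : ∀ n z, 0 < z.re → ‖G n z‖ ≤ ‖z - 1‖ * ((‖z‖ + 1) * ((n : ℝ) + 1) ^ (-z.re - 1)) := by
    intro n z hz
    by_cases h : z = 1
    · subst h; simp [G]
    · rw [show G n z = (z - 1) * emTerm z 0 n from (emTerm_zero h n).symm, norm_mul]
      gcongr
      exact emTerm_bound hz le_rfl n
  have hA : AnalyticOnNhd ℂ (fun z => ∑' n, G n z) {z : ℂ | 0 < z.re} := by
    refine DifferentiableOn.analyticOnNhd (fun z hz => ?_) hU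
    have hz' : 0 < z.re := hz
    let V : Set ℂ := {v : ℂ | z.re / 2 < v.re} ∩ Metric.ball 0 (‖z‖ + 1)
    have hV : IsOpen V := (isOpen_lt continuous_const Complex.continuous_re).inter Metric.isOpen_ball
    have hzV : z ∈ V := ⟨by simp; linarith, by simp⟩
    have hs : Summable fun n : ℕ => (‖z‖ + 2) * ((‖z‖ + 2) * ((n : ℝ) + 1) ^ (-(z.re / 2) - 1)) :=
      ((summable_succ_rpow (by linarith)).mul_left _).mul_left _
    have := differentiableOn_tsum_of_summable_norm hs (F := G) (U := V)
      (fun n => (hGd n).differentiableOn) hV (fun n v hv => by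
        have hv1 : z.re / 2 < v.re := hv.1
        have hv2 : ‖v‖ < ‖z‖ + 1 := by simpa using hv.2
        refine (hGb n v (by linarith)).trans ?_
        have h1 : ‖v - 1‖ ≤ ‖z‖ + 2 := (norm_sub_le _ _).trans (by simp; linarith)
        have h2 : ‖v‖ + 1 ≤ ‖z‖ + 2 := by linarith
        have h3 : (1 : ℝ) ≤ (n : ℝ) + 1 := by linarith [(Nat.cast_nonneg n : (0 : ℝ) ≤ n)]
        gcongr)
    exact (this.differentiableAt (hV.mem_nhds hzV)).differentiableWithinAt
  have hB : AnalyticOnNhd ℂ (fun z => riemannZeta₁ z - 1) {z : ℂ | 0 < z.re} :=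
    DifferentiableOn.analyticOnNhd
      (differentiable_riemannZeta₁.sub_const 1).differentiableOn hU
  have key : (∑' n, G n w) = riemannZeta₁ w - 1 := by
    refine hA.eqOn_of_preconnected_of_eventuallyEq hB (convex_halfSpace_re_gt 0).isPreconnected
      (z₀ := 2) (by simp) ?_ hw
    have : {z : ℂ | 1 < z.re} ∈ 𝓝 (2 : ℂ) :=
      (isOpen_lt continuous_const Complex.continuous_re).mem_nhds (by simp)
    filter_upwards [this] with z hz
    have hz1 : 1 < z.re := hz
    have hzne : z ≠ 1 := fun h => by rw [h] at hz1; simp at hz1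
    have hsG : Summable fun n => G n z :=
      Summable.of_norm_bounded (((summable_succ_rpow (by linarith)).mul_left _).mul_left _)
        (fun n => hGb n z (by linarith))
    have hs1 : Summable fun n : ℕ => (((n : ℝ) + 1 : ℝ) : ℂ) ^ (-z) := by
      refine Summable.of_norm_bounded (summable_succ_rpow (b := -z.re) (by linarith)) fun n => ?_
      rw [norm_cpow_eq_rpow_re_of_pos (by positivity), neg_re]
    have hz2 : riemannZeta z = ∑' n : ℕ, (((n : ℝ) + 1 : ℝ) : ℂ) ^ (-z) := by
      rw [zeta_eq_tsum_one_div_nat_add_one_cpow hz1]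
      refine tsum_congr fun n => ?_
      rw [cpow_neg]; push_cast; simp
    have h0 : Tendsto (fun N : ℕ => (((N : ℝ) + 1 : ℝ) : ℂ) ^ (1 - z)) atTop (𝓝 0) := by
      rw [tendsto_zero_iff_norm_tendsto_zero]
      have h1 : ∀ N : ℕ, ‖(((N : ℝ) + 1 : ℝ) : ℂ) ^ (1 - z)‖ = ((N : ℝ) + 1) ^ (-(z.re - 1)) := by
        intro N
        rw [norm_cpow_eq_rpow_re_of_pos (by positivity)]; simp
      simp_rw [h1]
      exact (tendsto_rpow_neg_atTop (by linarith)).comp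
        (tendsto_atTop_add_const_right _ _ tendsto_natCast_atTop_atTop)
    have hlim : Tendsto (fun N => ∑ n ∈ Finset.range N, G n z) atTop
        (𝓝 ((z - 1) * riemannZeta z + (0 - 1))) := by
      have e : ∀ N, ∑ n ∈ Finset.range N, G n z =
          (z - 1) * (∑ n ∈ Finset.range N, (((n : ℝ) + 1 : ℝ) : ℂ) ^ (-z)) +
            ((((N : ℝ) + 1 : ℝ) : ℂ) ^ (1 - z) - 1) := by
        intro N
        simp only [G]
        rw [Finset.sum_add_distrib, Finset.mul_sum]
        congr 1
        have := Finset.sum_range_sub (fun n : ℕ => (((n : ℝ) + 1 : ℝ) : ℂ) ^ (1 - z)) N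
        simpa using this
      simp_rw [e]
      rw [hz2]
      exact (hs1.hasSum.tendsto_sum_nat.const_mul _).add (h0.sub_const 1)
    have := tendsto_nhds_unique hsG.hasSum.tendsto_sum_nat hlim
    rw [this]
    have h6 : (z - 1) ≠ 0 := sub_ne_zero.2 hzne
    rw [riemannZeta₁, riemannZeta₀, if_neg hzne]
    field_simp
    ring
  have h6 : (w - 1) ≠ 0 := sub_ne_zero.2 hw1
  have e2 : (w - 1) * ∑' n, emTerm w 0 n = ∑' n, G n w := by
    rw [← tsum_mul_left]
    exact tsum_congr fun n => emTerm_zero hw1 n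
  rw [e2, key, riemannZeta₁, riemannZeta₀, if_neg hw1]
  field_simp
  ring

theorem summable_cpow_exp (p : ℂ) {y : ℝ} (hy : 0 < y) :
    Summable fun n : ℕ => (((n : ℝ) + 1 : ℝ) : ℂ) ^ p * cexp (-((y : ℂ) * (((n : ℝ) + 1 : ℝ) : ℂ))) := by
  obtain ⟨k, hk⟩ := exists_nat_ge p.re
  have h := (summable_nat_add_iff 1).2 (Real.summable_pow_mul_exp_neg_nat_mul k hy)
  refine Summable.of_norm_bounded h fun n => ?_
  have hn : (1 : ℝ) ≤ (n : ℝ) + 1 := by linarith [(Nat.cast_nonneg n : (0 : ℝ) ≤ n)]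
  rw [norm_mul, norm_cpow_eq_rpow_re_of_pos (by linarith), Complex.norm_exp]
  have e : (-((y : ℂ) * (((n : ℝ) + 1 : ℝ) : ℂ))).re = -y * ((n : ℝ) + 1) := by
    rw [← ofReal_mul, ← ofReal_neg, ofReal_re]; ring
  rw [e]
  push_cast
  gcongr
  rw [← Real.rpow_natCast]
  exact Real.rpow_le_rpow_of_exponent_le hn hk

/-- The series is compared with `∫₀^∞ x⁻ʷ e⁻ʸˣ dx = Γ(1 - w) y^{w-1}`, split at the positive integers. -/
theorem tsum_eq_emTerm {w : ℂ} (hw0 : 0 < w.re) (hw1 : w.re < 1) {y : ℝ} (hy : 0 < y) :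
    (∑' n : ℕ, (((n : ℝ) + 1 : ℝ) : ℂ) ^ (-w) * cexp (-((y : ℂ) * (((n : ℝ) + 1 : ℝ) : ℂ)))) -
      Gamma (1 - w) * (y : ℂ) ^ (w - 1) =
    ∑' n, emTerm w y n - ∫ x in (0 : ℝ)..1, (x : ℂ) ^ (-w) * cexp (-((y : ℂ) * x)) := by
  let f : ℝ → ℂ := fun x => (x : ℂ) ^ (-w) * cexp (-((y : ℂ) * x))
  have hf : IntegrableOn f (Ioi 0) := cpow_exp_integrable (p := -w) (by simpa using hw1) y hy
  have hG : ∫ x in Ioi (0 : ℝ), f x = Gamma (1 - w) * (y : ℂ) ^ (w - 1) := by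
    have := gamma_laplace (a := 1 - w) (r := y) (by simpa using hw1) (by simpa using hy)
    rw [mul_comm, show w - 1 = -(1 - w) by ring, ← this]
    simp [f]
  have hf1 : IntegrableOn f (Ioi 1) := hf.mono_set (Ioi_subset_Ioi zero_le_one)
  have hii : ∀ a b : ℝ, 0 ≤ a → 0 ≤ b → IntervalIntegrable f volume a b := by
    intro a b ha hb
    rw [intervalIntegrable_iff]
    refine hf.mono_set fun x hx => ?_
    rw [uIoc, mem_Ioc] at hx
    exact lt_of_le_of_lt (le_min ha hb) hx.1
  have hsplit := intervalIntegral.integral_interval_add_Ioi (μ := volume) hf hf1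
  have hs := summable_cpow_exp (-w) hy
  have hse : Summable fun n => emTerm w y n :=
    Summable.of_norm_bounded ((summable_succ_rpow (b := -w.re - 1) (by linarith)).mul_left _)
      (fun n => emTerm_bound hw0 hy.le n)
  have hlim : Tendsto (fun N => ∑ n ∈ Finset.range N, emTerm w y n) atTop
      (𝓝 ((∑' n : ℕ, (((n : ℝ) + 1 : ℝ) : ℂ) ^ (-w) *
        cexp (-((y : ℂ) * (((n : ℝ) + 1 : ℝ) : ℂ)))) - ∫ x in Ioi (1 : ℝ), f x)) := by
    have e : ∀ N, ∑ n ∈ Finset.range N, emTerm w y n =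
        (∑ n ∈ Finset.range N, (((n : ℝ) + 1 : ℝ) : ℂ) ^ (-w) *
        cexp (-((y : ℂ) * (((n : ℝ) + 1 : ℝ) : ℂ)))) - ∫ x in (1 : ℝ)..((N : ℝ) + 1), f x := by
      intro N
      simp only [emTerm]
      rw [Finset.sum_sub_distrib]
      congr 1
      have := intervalIntegral.sum_integral_adjacent_intervals (f := f) (μ := volume)
        (a := fun n : ℕ => (n : ℝ) + 1) (n := N) (fun k _ => hii _ _ (by positivity) (by positivity))
      simpa [f] using this
    simp_rw [e]
    refine hs.hasSum.tendsto_sum_nat.sub ?_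
    exact intervalIntegral_tendsto_integral_Ioi 1 hf1
      (tendsto_atTop_add_const_right _ _ tendsto_natCast_atTop_atTop)
  have h := tendsto_nhds_unique hse.hasSum.tendsto_sum_nat hlim
  rw [h, ← hG, ← hsplit]
  ring

/-- Inside the strip `0 < Re w < 1`, where `∑ n⁻ʷ` diverges, `ζ(w)` is still the limit of `∑ n⁻ʷ e⁻ⁿʸ`
once the singular part at `y = 0` is removed. -/
theorem zeta_limit {w : ℂ} (hw0 : 0 < w.re) (hw1 : w.re < 1) :
    Tendsto (fun y : ℝ => (∑' n : ℕ, (((n : ℝ) + 1 : ℝ) : ℂ) ^ (-w) *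
      cexp (-((y : ℂ) * (((n : ℝ) + 1 : ℝ) : ℂ)))) - Gamma (1 - w) * (y : ℂ) ^ (w - 1))
      (𝓝[>] 0) (𝓝 (riemannZeta w)) := by
  have hw1' : w ≠ 1 := fun h => by rw [h] at hw1; simp at hw1
  have h6 : (w - 1) ≠ 0 := sub_ne_zero.2 hw1'
  have hI : ∫ x in (0 : ℝ)..1, (x : ℂ) ^ (-w) = 1 / (1 - w) := by
    rw [integral_cpow (Or.inl (by simpa using hw1))]
    have : -w + 1 ≠ 0 := by intro h; apply h6; linear_combination -h
    rw [ofReal_zero, ofReal_one, one_cpow, zero_cpow this]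
    congr 1 <;> ring
  have hz : riemannZeta w = ∑' n, emTerm w 0 n - ∫ x in (0 : ℝ)..1, (x : ℂ) ^ (-w) := by
    have h := tsum_emTerm_zero hw0 hw1'
    rw [hI]
    apply mul_left_cancel₀ h6
    rw [mul_sub, h]
    have : (1 - w) ≠ 0 := by intro h; apply h6; linear_combination -h
    field_simp
    ring
  rw [hz]
  have h1 : Tendsto (fun y : ℝ => ∑' n, emTerm w y n -
      ∫ x in (0 : ℝ)..1, (x : ℂ) ^ (-w) * cexp (-((y : ℂ) * x))) (𝓝[>] 0)
      (𝓝 (∑' n, emTerm w 0 n - ∫ x in (0 : ℝ)..1, (x : ℂ) ^ (-w))) := by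
    refine Tendsto.sub ?_ ?_
    · refine tendsto_tsum_of_dominated_convergence
        (bound := fun n : ℕ => (‖w‖ + 1) * ((n : ℝ) + 1) ^ (-w.re - 1))
        ((summable_succ_rpow (by linarith)).mul_left _) ?_ ?_
      · intro n
        have hc : Continuous fun y : ℝ => emTerm w y n := by
          unfold emTerm
          refine Continuous.sub (by fun_prop) ?_
          have hpos : (0 : ℝ) < (n : ℝ) + 1 := by positivity
          -- The `max` changes nothing on `[n+1, n+2]` and makes the integrand jointly continuous everywhere.
          let F : ℝ → ℝ → ℂ := fun y x =>
            ((max x ((n : ℝ) + 1) : ℝ) : ℂ) ^ (-w) * cexp (-((y : ℂ) * x))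
          have hF : Continuous (Function.uncurry F) := by
            refine Continuous.mul ?_ (by fun_prop)
            refine Continuous.cpow (by fun_prop) (by fun_prop) fun p => Or.inl ?_
            rw [ofReal_re]
            exact hpos.trans_le (le_max_right _ _)
          have := intervalIntegral.continuous_parametric_intervalIntegral_of_continuous'
            (μ := volume) hF ((n : ℝ) + 1) ((n : ℝ) + 1 + 1)
          convert! this using 2 with y
          refine intervalIntegral.integral_congr fun x hx => ?_
          rw [uIcc_of_le (by linarith)] at hx
          simp only [F]
          rw [max_eq_left hx.1]
        exact (hc.tendsto 0).mono_left nhdsWithin_le_nhds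
      · filter_upwards [self_mem_nhdsWithin] with y hy n
        exact emTerm_bound hw0 (le_of_lt hy) n
    · refine intervalIntegral.tendsto_integral_filter_of_dominated_convergence
        (fun x => x ^ (-w.re)) ?_ ?_ ?_ ?_
      · refine Eventually.of_forall fun y => ?_
        rw [uIoc_of_le zero_le_one]
        refine ContinuousOn.aestronglyMeasurable (fun t ht => ContinuousAt.continuousWithinAt ?_)
          measurableSet_Ioc
        exact ContinuousAt.mul (continuousAt_ofReal_cpow_const _ _ (Or.inr ht.1.ne')) (by fun_prop)
      · filter_upwards [self_mem_nhdsWithin] with y hy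
        refine ae_of_all _ fun x hx => ?_
        rw [uIoc_of_le zero_le_one] at hx
        have hy0 : 0 < y := hy
        rw [norm_mul, norm_cpow_eq_rpow_re_of_pos hx.1, Complex.norm_exp, neg_re]
        refine mul_le_of_le_one_right (Real.rpow_nonneg hx.1.le _) ?_
        have : 0 ≤ y * x := mul_nonneg hy0.le hx.1.le
        simpa using this
      · exact intervalIntegral.intervalIntegrable_rpow' (by linarith)
      · refine ae_of_all _ fun x hx => ?_
        have hc : Continuous fun y : ℝ => (x : ℂ) ^ (-w) * cexp (-((y : ℂ) * x)) := by fun_prop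
        have := (hc.tendsto 0).mono_left (nhdsWithin_le_nhds (s := Ioi 0))
        simpa using this
  refine h1.congr' ?_
  filter_upwards [self_mem_nhdsWithin] with y hy
  exact (tsum_eq_emTerm hw0 hw1 hy).symm

/-! ### Lipschitz's formula -/

theorem norm_cpow_le_of_le_norm {z q : ℂ} {r : ℝ} (hr : 0 < r) (hz : r ≤ ‖z‖) (hq : q.re ≤ 0) :
    ‖z ^ q‖ ≤ Real.exp (Real.pi * |q.im|) * r ^ q.re := by
  refine (Complex.norm_cpow_le z q).trans ?_
  rw [div_eq_mul_inv, ← Real.exp_neg, mul_comm]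
  have h1 : ‖z‖ ^ q.re ≤ r ^ q.re := Real.rpow_le_rpow_of_nonpos hr hz hq
  have h2 : -(arg z * q.im) ≤ Real.pi * |q.im| := by
    refine (neg_le_abs _).trans ?_
    rw [abs_mul]
    exact mul_le_mul_of_nonneg_right (abs_arg_le_pi z) (abs_nonneg _)
  gcongr

/-- The positive frequency `2π(k+1)`. -/
noncomputable def freq (k : ℕ) : ℝ := 2 * Real.pi * ((k : ℝ) + 1)

theorem freq_pos (k : ℕ) : 0 < freq k := by unfold freq; positivity

theorem succ_le_freq (k : ℕ) : (k : ℝ) + 1 ≤ freq k := by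
  unfold freq
  have := Real.pi_gt_three
  have h : (0 : ℝ) ≤ k := Nat.cast_nonneg k
  nlinarith

theorem norm_shift_ge {ε : ℝ} (hε : ε = 1 ∨ ε = -1) (y : ℝ) (k : ℕ) :
    (k : ℝ) + 1 ≤ ‖(y : ℂ) + ε * freq k * I‖ := by
  have h1 : |((y : ℂ) + ε * freq k * I).im| ≤ _ := abs_im_le_norm _
  have e : ((y : ℂ) + ε * freq k * I).im = ε * freq k := by simp
  rw [e, abs_mul, abs_of_pos (freq_pos k)] at h1
  have : |ε| = 1 := by rcases hε with h | h <;> simp [h]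
  rw [this, one_mul] at h1
  exact (succ_le_freq k).trans h1

theorem shift_cpow_bound {ε : ℝ} (hε : ε = 1 ∨ ε = -1) (y : ℝ) (k : ℕ) {q : ℂ} (hq : q.re ≤ 0) :
    ‖((y : ℂ) + ε * freq k * I) ^ q‖ ≤
      Real.exp (Real.pi * |q.im|) * ((k : ℝ) + 1) ^ q.re :=
  norm_cpow_le_of_le_norm (by positivity) (norm_shift_ge hε y k) hq

theorem summable_shift_cpow {ε : ℝ} (hε : ε = 1 ∨ ε = -1) (y : ℝ) {q : ℂ} (hq : q.re < -1) :
    Summable fun k : ℕ => ((y : ℂ) + ε * freq k * I) ^ q :=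
  Summable.of_norm_bounded ((summable_succ_rpow hq).mul_left _)
    fun k => shift_cpow_bound hε y k (by linarith)

/-- Poisson summation for `x ↦ xᵖ e⁻ʸˣ` on `x > 0`, extended by zero. The zero frequency is the first
term; the others are paired as `±2π(k+1)`. -/
theorem lipschitz_formula {p : ℂ} (hp : 0 < p.re) {y : ℝ} (hy : 0 < y) :
    ∑' n : ℕ, (((n : ℝ) + 1 : ℝ) : ℂ) ^ p * cexp (-((y : ℂ) * (((n : ℝ) + 1 : ℝ) : ℂ))) =
      Gamma (p + 1) * ((y : ℂ) ^ (-(p + 1)) +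
        ∑' k : ℕ, (((y : ℂ) + ((1 : ℝ) : ℂ) * freq k * I) ^ (-(p + 1)) +
          ((y : ℂ) + ((-1 : ℝ) : ℂ) * freq k * I) ^ (-(p + 1)))) := by
  have hp0 : p ≠ 0 := fun h => by rw [h] at hp; simp at hp
  -- The `max` extends `xᵖ e⁻ʸˣ` by zero: `0ᵖ = 0` because `p ≠ 0`.
  let f : ℝ → ℂ := fun x => ((max x 0 : ℝ) : ℂ) ^ p * cexp (-((y : ℂ) * x))
  have hfneg : ∀ x ≤ 0, f x = 0 := by
    intro x hx
    simp only [f]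
    rw [max_eq_right hx, ofReal_zero, zero_cpow hp0, zero_mul]
  have hfpos : ∀ x, 0 < x → f x = (x : ℂ) ^ p * cexp (-((y : ℂ) * x)) := by
    intro x hx
    simp only [f]
    rw [max_eq_left hx.le]
  have hc : Continuous f := by
    refine Continuous.mul ?_ (by fun_prop)
    exact (Complex.continuous_ofReal_cpow_const hp).comp (continuous_id.max continuous_const)
  have hO : f =O[cocompact ℝ] fun x : ℝ => |x| ^ (-(2 : ℝ)) := by
    rw [cocompact_eq_atBot_atTop, Asymptotics.isBigO_sup]
    constructor
    · refine Asymptotics.IsBigO.of_bound 1 ?_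
      filter_upwards [eventually_le_atBot 0] with x hx
      rw [hfneg x hx, norm_zero]; positivity
    · have h1 := (isLittleO_exp_neg_mul_rpow_atTop hy (-2 - p.re)).isBigO.bound
      obtain ⟨C, hC⟩ := h1
      refine Asymptotics.IsBigO.of_bound C ?_
      filter_upwards [hC, eventually_gt_atTop 0] with x hx hx0
      rw [hfpos x hx0, norm_mul, norm_cpow_eq_rpow_re_of_pos hx0, Complex.norm_exp]
      have e : (-((y : ℂ) * x)).re = -y * x := by simp
      rw [e]
      rw [Real.norm_of_nonneg (Real.exp_pos _).le, Real.norm_of_nonneg (by positivity)] at hx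
      rw [abs_of_pos hx0, Real.norm_of_nonneg (by positivity)]
      calc x ^ p.re * Real.exp (-y * x) ≤ x ^ p.re * (C * x ^ (-2 - p.re)) := by gcongr
        _ = C * x ^ (-(2 : ℝ)) := by
          rw [mul_left_comm, ← Real.rpow_add hx0]; ring_nf
  have hF : ∀ k : ℤ, (FourierTransform.fourier f : ℝ → ℂ) (k : ℝ) =
      Gamma (p + 1) * ((y : ℂ) + 2 * Real.pi * k * I) ^ (-(p + 1)) := by
    intro k
    rw [Real.fourier_real_eq_integral_exp_smul]
    have hg := gamma_laplace (a := p + 1) (r := (y : ℂ) + 2 * Real.pi * k * I)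
      (by simp; linarith) (by simpa using hy)
    rw [mul_comm (Gamma (p + 1)), ← hg, ← integral_indicator measurableSet_Ioi]
    refine integral_congr_ae (ae_of_all _ fun v => ?_)
    by_cases hv : 0 < v
    · rw [indicator_of_mem (mem_Ioi.2 hv)]
      simp only [smul_eq_mul]
      rw [hfpos v hv, mul_left_comm, ← Complex.exp_add]
      congr 2
      · ring
      · push_cast; ring
    · rw [indicator_of_notMem (s := Ioi (0 : ℝ)) (by simpa using hv)]
      simp only [smul_eq_mul]
      rw [hfneg v (not_lt.1 hv), mul_zero]
  have hpq : (-(p + 1)).re < -1 := by simp; exact hp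
  have e1 : ∀ k : ℕ, (y : ℂ) + 2 * Real.pi * ((k + 1 : ℕ) : ℤ) * I =
      (y : ℂ) + ((1 : ℝ) : ℂ) * freq k * I := by
    intro k; simp [freq]
  have e2 : ∀ k : ℕ, (y : ℂ) + 2 * Real.pi * ((-((k : ℤ) + 1) : ℤ) : ℂ) * I =
      (y : ℂ) + ((-1 : ℝ) : ℂ) * freq k * I := by
    intro k; simp [freq]; ring
  let F : ℤ → ℂ := fun k => Gamma (p + 1) * ((y : ℂ) + 2 * Real.pi * k * I) ^ (-(p + 1))
  have hs1 : Summable fun k : ℕ => F ((k + 1 : ℕ) : ℤ) := by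
    have := (summable_shift_cpow (Or.inl rfl) y hpq).mul_left (Gamma (p + 1))
    refine this.congr fun k => ?_
    simp only [F]; rw [← e1 k]
  have hs1' : Summable fun k : ℕ => F (k : ℤ) :=
    (summable_nat_add_iff (f := fun k : ℕ => F (k : ℤ)) 1).1 hs1
  have hs2 : Summable fun k : ℕ => F (-((k : ℤ) + 1)) := by
    have := (summable_shift_cpow (Or.inr rfl) y hpq).mul_left (Gamma (p + 1))
    refine this.congr fun k => ?_
    simp only [F]; rw [← e2 k]
  have hsF : Summable F := Summable.of_nat_of_neg_add_one hs1' hs2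
  have hP := Real.tsum_eq_tsum_fourier_of_rpow_decay_of_summable hc (b := 2) (by norm_num) hO
    (by simp_rw [hF]; exact hsF) 0
  simp only [hF, zero_add] at hP
  have hL : ∑' n : ℤ, f n = ∑' n : ℕ, (((n : ℝ) + 1 : ℝ) : ℂ) ^ p *
      cexp (-((y : ℂ) * (((n : ℝ) + 1 : ℝ) : ℂ))) := by
    have hfn : ∀ n : ℕ, f (((n + 1 : ℕ) : ℤ) : ℝ) = (((n : ℝ) + 1 : ℝ) : ℂ) ^ p *
      cexp (-((y : ℂ) * (((n : ℝ) + 1 : ℝ) : ℂ))) := by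
      intro n
      rw [hfpos _ (by push_cast; positivity)]
      push_cast; rfl
    have hsf1 : Summable fun n : ℕ => f (((n + 1 : ℕ) : ℤ) : ℝ) := by
      simp_rw [hfn]; exact summable_cpow_exp p hy
    have hsf : Summable fun n : ℕ => f ((n : ℤ) : ℝ) :=
      (summable_nat_add_iff (f := fun n : ℕ => f ((n : ℤ) : ℝ)) 1).1 hsf1
    have hz : ∀ n : ℕ, f ((-((n : ℤ) + 1) : ℤ) : ℝ) = 0 := by
      intro n
      apply hfneg
      push_cast
      have : (0 : ℝ) ≤ n := Nat.cast_nonneg n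
      linarith
    rw [tsum_of_nat_of_neg_add_one (f := fun n : ℤ => f (n : ℝ)) hsf
      (by simp_rw [hz]; exact summable_zero), hsf.tsum_eq_zero_add]
    simp_rw [hz, hfn]
    rw [tsum_zero, hfneg _ (by simp)]; simp
  have hR : ∑' n : ℤ, F n = Gamma (p + 1) * ((y : ℂ) ^ (-(p + 1)) +
        ∑' k : ℕ, (((y : ℂ) + ((1 : ℝ) : ℂ) * freq k * I) ^ (-(p + 1)) +
          ((y : ℂ) + ((-1 : ℝ) : ℂ) * freq k * I) ^ (-(p + 1)))) := by
    rw [tsum_of_nat_of_neg_add_one hs1' hs2, hs1'.tsum_eq_zero_add]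
    rw [Summable.tsum_add (summable_shift_cpow (Or.inl rfl) y hpq)
      (summable_shift_cpow (Or.inr rfl) y hpq)]
    simp only [F]
    simp_rw [e1, e2, tsum_mul_left]
    simp; ring
  rw [← hL, ← hR, hP]
  refine tsum_congr fun n => ?_
  have : ((0 : ℝ) : UnitAddCircle) = 0 := by simp
  rw [this, fourier_eval_zero, mul_one]

/-! ### Expansion of the polylogarithm -/

/-- A function on `(0, ∞)` with zero derivative is equal to its limit at `0⁺`. -/
theorem eq_of_hasDerivAt_zero_of_tendsto {D : ℝ → ℂ} {c : ℂ}
    (hD : ∀ y, 0 < y → HasDerivAt D 0 y) (hl : Tendsto D (𝓝[>] 0) (𝓝 c)) {y : ℝ} (hy : 0 < y) :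
    D y = c := by
  have h : ∀ x, 0 < x → D x = D y := by
    intro x hx
    have := (convex_Ioi (0 : ℝ)).norm_image_sub_le_of_norm_hasDerivWithin_le (f := D) (C := 0)
      (f' := fun _ => 0) (fun x hx => (hD x hx).hasDerivWithinAt) (by simp) (x := y) (y := x) hy hx
    rw [zero_mul] at this
    exact sub_eq_zero.1 (norm_le_zero_iff.1 this)
  refine tendsto_nhds_unique ?_ hl
  refine (tendsto_const_nhds (x := D y)).congr' ?_
  filter_upwards [self_mem_nhdsWithin] with x hx
  exact (h x hx).symm

/-- The series `∑_{n ≥ 1} nᵖ e⁻ⁿʸ`, that is, the polylogarithm `Li_{-p}(e⁻ʸ)`. -/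
noncomputable def polyExp (p : ℂ) (y : ℝ) : ℂ :=
  ∑' n : ℕ, (((n : ℝ) + 1 : ℝ) : ℂ) ^ p * cexp (-((y : ℂ) * (((n : ℝ) + 1 : ℝ) : ℂ)))

theorem polyExp_hasDerivAt (p : ℂ) {y : ℝ} (hy : 0 < y) :
    HasDerivAt (polyExp p) (-polyExp (p + 1) y) y := by
  have hy2 : 0 < y / 2 := by positivity
  have h := hasDerivAt_tsum_of_isPreconnected (𝕜 := ℝ) (F := ℂ)
    (g := fun (n : ℕ) (y : ℝ) => (((n : ℝ) + 1 : ℝ) : ℂ) ^ p *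
      cexp (-((y : ℂ) * (((n : ℝ) + 1 : ℝ) : ℂ))))
    (g' := fun (n : ℕ) (y : ℝ) => -((((n : ℝ) + 1 : ℝ) : ℂ) ^ (p + 1) *
      cexp (-((y : ℂ) * (((n : ℝ) + 1 : ℝ) : ℂ)))))
    (u := fun n : ℕ => ‖(((n : ℝ) + 1 : ℝ) : ℂ) ^ (p + 1) *
      cexp (-(((y / 2 : ℝ) : ℂ) * (((n : ℝ) + 1 : ℝ) : ℂ)))‖)
    (t := Ioi (y / 2)) (y₀ := y) (y := y) (summable_cpow_exp (p + 1) hy2).norm isOpen_Ioi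
    (convex_Ioi _).isPreconnected ?_ ?_ (by simp; linarith) (summable_cpow_exp p hy)
    (by simp; linarith)
  · rw [tsum_neg] at h
    exact h
  · intro n x hx
    have h1 := (hasDerivAt_exp_real ((((n : ℝ) + 1 : ℝ) : ℂ)) x).const_mul
      ((((n : ℝ) + 1 : ℝ) : ℂ) ^ p)
    have hn : (((n : ℝ) + 1 : ℝ) : ℂ) ≠ 0 := by rw [ofReal_ne_zero]; positivity
    convert! h1 using 1
    · ext t; rw [mul_comm (t : ℂ)]
    · rw [cpow_add _ _ hn, cpow_one, mul_comm (x : ℂ)]; ring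
  · intro n x hx
    have hx' : y / 2 < x := hx
    have hn : (0 : ℝ) < (n : ℝ) + 1 := by positivity
    rw [norm_neg, norm_mul, norm_mul]
    refine mul_le_mul_of_nonneg_left ?_ (norm_nonneg _)
    rw [Complex.norm_exp, Complex.norm_exp, ← ofReal_mul, ← ofReal_mul, ← ofReal_neg, ← ofReal_neg,
      ofReal_re, ofReal_re]
    gcongr

theorem polyExp_tendsto {s : ℂ} (hs : 1 < s.re) :
    Tendsto (polyExp (-s)) (𝓝[>] 0) (𝓝 (riemannZeta s)) := by
  have hz : riemannZeta s = ∑' n : ℕ, (((n : ℝ) + 1 : ℝ) : ℂ) ^ (-s) := by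
    rw [zeta_eq_tsum_one_div_nat_add_one_cpow hs]
    refine tsum_congr fun n => ?_
    rw [cpow_neg]; push_cast; simp
  rw [hz]
  refine tendsto_tsum_of_dominated_convergence
    (bound := fun n : ℕ => ((n : ℝ) + 1) ^ (-s.re)) (summable_succ_rpow (by linarith)) ?_ ?_
  · intro n
    have hc : Continuous fun y : ℝ => (((n : ℝ) + 1 : ℝ) : ℂ) ^ (-s) *
      cexp (-((y : ℂ) * (((n : ℝ) + 1 : ℝ) : ℂ))) := by fun_prop
    have := (hc.tendsto 0).mono_left (nhdsWithin_le_nhds (s := Ioi 0))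
    simpa using this
  · filter_upwards [self_mem_nhdsWithin] with y hy n
    have hy0 : 0 < y := hy
    have hn : (0 : ℝ) < (n : ℝ) + 1 := by positivity
    rw [norm_mul, norm_cpow_eq_rpow_re_of_pos hn, neg_re]
    refine mul_le_of_le_one_right (by positivity) ?_
    rw [Complex.norm_exp, ← ofReal_mul, ← ofReal_neg, ofReal_re]
    rw [Real.exp_le_one_iff]
    have := mul_pos hy0 hn
    linarith

/-- `y + ε · 2π(k+1) i`; used with `ε = ±1`. -/
noncomputable def shift (ε : ℝ) (k : ℕ) (y : ℝ) : ℂ := (y : ℂ) + ε * freq k * I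

theorem shift_mem_slitPlane {ε : ℝ} (hε : ε = 1 ∨ ε = -1) (k : ℕ) (y : ℝ) :
    shift ε k y ∈ slitPlane := by
  refine Or.inr ?_
  have := (freq_pos k).ne'
  rcases hε with h | h <;> simp [shift, h, this]

theorem shift_cpow_hasDerivAt {ε : ℝ} (hε : ε = 1 ∨ ε = -1) (k : ℕ) (q : ℂ) (y : ℝ) :
    HasDerivAt (fun y => shift ε k y ^ q) (q * shift ε k y ^ (q - 1)) y := by
  have h : HasDerivAt (fun z : ℂ => (z + ε * freq k * I) ^ q)
      (q * ((y : ℂ) + ε * freq k * I) ^ (q - 1) * 1) (y : ℂ) :=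
    ((hasDerivAt_id (y : ℂ)).add_const _).cpow_const (shift_mem_slitPlane hε k y)
  convert! h.comp_ofReal using 1
  simp [shift]

/-- Zeroth-order Taylor remainder at `0` of `y ↦ (y + ε 2π(k+1) i)^q`. -/
noncomputable def remOne (q : ℂ) (ε : ℝ) (k : ℕ) (y : ℝ) : ℂ := shift ε k y ^ q - shift ε k 0 ^ q

/-- First-order Taylor remainder at `0` of `y ↦ (y + ε 2π(k+1) i)^q`. -/
noncomputable def remTwo (q : ℂ) (ε : ℝ) (k : ℕ) (y : ℝ) : ℂ :=
  shift ε k y ^ q - shift ε k 0 ^ q - q * shift ε k 0 ^ (q - 1) * y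

theorem remOne_hasDerivAt {ε : ℝ} (hε : ε = 1 ∨ ε = -1) (k : ℕ) (q : ℂ) (y : ℝ) :
    HasDerivAt (remOne q ε k) (q * shift ε k y ^ (q - 1)) y :=
  (shift_cpow_hasDerivAt hε k q y).sub_const _

theorem remTwo_hasDerivAt {ε : ℝ} (hε : ε = 1 ∨ ε = -1) (k : ℕ) (q : ℂ) (y : ℝ) :
    HasDerivAt (remTwo q ε k) (q * remOne (q - 1) ε k y) y := by
  have h1 : HasDerivAt (fun y : ℝ => q * shift ε k 0 ^ (q - 1) * (y : ℂ))
      (q * shift ε k 0 ^ (q - 1) * 1) y := (hasDerivAt_id (y : ℂ)).comp_ofReal.const_mul _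
  have h := ((shift_cpow_hasDerivAt hε k q y).sub_const (shift ε k 0 ^ q)).sub h1
  convert! h using 1
  rw [remOne]; ring

/-- Subtracting the value at `0` gains one power of `k`, so that the series over the frequencies converges
for `Re q < 0`. -/
theorem remOne_bound {q : ℂ} (hq : q.re < 0) {ε : ℝ} (hε : ε = 1 ∨ ε = -1) (k : ℕ) (y : ℝ) :
    ‖remOne q ε k y‖ ≤
      ‖q‖ * Real.exp (Real.pi * |q.im|) * ((k : ℝ) + 1) ^ (q.re - 1) * |y| := by
  have h := (convex_univ (𝕜 := ℝ) (E := ℝ)).norm_image_sub_le_of_norm_hasDerivWithin_le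
    (f := remOne q ε k) (f' := fun y => q * shift ε k y ^ (q - 1))
    (C := ‖q‖ * Real.exp (Real.pi * |q.im|) * ((k : ℝ) + 1) ^ (q.re - 1))
    (fun x _ => (remOne_hasDerivAt hε k q x).hasDerivWithinAt) (fun x _ => by
      rw [norm_mul, mul_assoc]
      refine mul_le_mul_of_nonneg_left ?_ (norm_nonneg _)
      have := shift_cpow_bound hε x k (q := q - 1) (by simp; linarith)
      simpa [shift] using this) (mem_univ 0) (mem_univ y)
  have e : remOne q ε k 0 = 0 := by simp [remOne]
  rwa [e, sub_zero, sub_zero, Real.norm_eq_abs] at h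

/-- Subtracting the first-order Taylor polynomial gains two powers of `k`, so that the series over the
frequencies converges for `Re q < 1`. -/
theorem remTwo_bound {q : ℂ} (hq : q.re < 1) {ε : ℝ} (hε : ε = 1 ∨ ε = -1) (k : ℕ) (y : ℝ) :
    ‖remTwo q ε k y‖ ≤
      ‖q‖ * ‖q - 1‖ * Real.exp (Real.pi * |q.im|) * ((k : ℝ) + 1) ^ (q.re - 2) * |y| ^ 2 := by
  have h := (convex_Icc (-|y|) |y|).norm_image_sub_le_of_norm_hasDerivWithin_le
    (f := remTwo q ε k) (f' := fun y => q * remOne (q - 1) ε k y)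
    (C := ‖q‖ * (‖q - 1‖ * Real.exp (Real.pi * |q.im|) * ((k : ℝ) + 1) ^ (q.re - 2) * |y|))
    (fun x _ => (remTwo_hasDerivAt hε k q x).hasDerivWithinAt) (fun x hx => by
      rw [norm_mul]
      refine mul_le_mul_of_nonneg_left ?_ (norm_nonneg _)
      have h1 := remOne_bound (q := q - 1) (by simp; linarith) hε k x
      refine h1.trans ?_
      have e1 : (q - 1).im = q.im := by simp
      have e2 : (q - 1).re - 1 = q.re - 2 := by simp; ring
      rw [e1, e2]
      have : |x| ≤ |y| := abs_le.2 hx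
      gcongr) (x := 0) (y := y) ⟨by simp, abs_nonneg y⟩ ⟨neg_abs_le y, le_abs_self y⟩
  have e : remTwo q ε k 0 = 0 := by simp [remTwo]
  rw [e, sub_zero, sub_zero, Real.norm_eq_abs] at h
  refine h.trans (le_of_eq ?_)
  ring

theorem summable_remOne {q : ℂ} (hq : q.re < 0) {ε : ℝ} (hε : ε = 1 ∨ ε = -1) (y : ℝ) :
    Summable fun k => remOne q ε k y :=
  Summable.of_norm_bounded (((summable_succ_rpow (b := q.re - 1) (by linarith)).mul_left
    (‖q‖ * Real.exp (Real.pi * |q.im|))).mul_right |y|) fun k => remOne_bound hq hε k y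

theorem summable_remTwo {q : ℂ} (hq : q.re < 1) {ε : ℝ} (hε : ε = 1 ∨ ε = -1) (y : ℝ) :
    Summable fun k => remTwo q ε k y :=
  Summable.of_norm_bounded (((summable_succ_rpow (b := q.re - 2) (by linarith)).mul_left
    (‖q‖ * ‖q - 1‖ * Real.exp (Real.pi * |q.im|))).mul_right (|y| ^ 2))
    fun k => remTwo_bound hq hε k y

theorem tsum_remOne_hasDerivAt {q : ℂ} (hq : q.re < 0) {ε : ℝ} (hε : ε = 1 ∨ ε = -1) (y : ℝ) :
    HasDerivAt (fun y => ∑' k, remOne q ε k y) (q * ∑' k, shift ε k y ^ (q - 1)) y := by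
  have h := hasDerivAt_tsum_of_isPreconnected (𝕜 := ℝ) (F := ℂ)
    (g := fun (k : ℕ) (y : ℝ) => remOne q ε k y)
    (g' := fun (k : ℕ) (y : ℝ) => q * shift ε k y ^ (q - 1))
    (u := fun k : ℕ => ‖q‖ * (Real.exp (Real.pi * |(q - 1).im|) * ((k : ℝ) + 1) ^ (q - 1).re))
    (t := univ) (y₀ := y) (y := y)
    (((summable_succ_rpow (by simp; linarith)).mul_left _).mul_left _) isOpen_univ
    isPreconnected_univ (fun k x _ => remOne_hasDerivAt hε k q x) (fun k x _ => by
      rw [norm_mul]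
      exact mul_le_mul_of_nonneg_left
        (shift_cpow_bound hε x k (by simp; linarith)) (norm_nonneg _))
    (mem_univ _) (summable_remOne hq hε y) (mem_univ _)
  rwa [tsum_mul_left] at h

theorem tsum_remTwo_hasDerivAt {q : ℂ} (hq : q.re < 1) {ε : ℝ} (hε : ε = 1 ∨ ε = -1) (y : ℝ) :
    HasDerivAt (fun y => ∑' k, remTwo q ε k y) (q * ∑' k, remOne (q - 1) ε k y) y := by
  have hy : y ∈ Ioo (-(|y| + 1)) (|y| + 1) := by
    rw [mem_Ioo, ← abs_lt]; linarith
  have h := hasDerivAt_tsum_of_isPreconnected (𝕜 := ℝ) (F := ℂ)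
    (g := fun (k : ℕ) (y : ℝ) => remTwo q ε k y)
    (g' := fun (k : ℕ) (y : ℝ) => q * remOne (q - 1) ε k y)
    (u := fun k : ℕ => ‖q‖ * (‖q - 1‖ * Real.exp (Real.pi * |(q - 1).im|) *
      ((k : ℝ) + 1) ^ ((q - 1).re - 1) * (|y| + 1)))
    (t := Ioo (-(|y| + 1)) (|y| + 1)) (y₀ := y) (y := y)
    ((((summable_succ_rpow (by simp; linarith)).mul_left _).mul_right _).mul_left _) isOpen_Ioo
    (convex_Ioo _ _).isPreconnected (fun k x _ => remTwo_hasDerivAt hε k q x) (fun k x hx => by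
      rw [norm_mul]
      refine mul_le_mul_of_nonneg_left ?_ (norm_nonneg _)
      refine (remOne_bound (q := q - 1) (by simp; linarith) hε k x).trans ?_
      rw [mem_Ioo, ← abs_lt] at hx
      gcongr)
    hy (summable_remTwo hq hε y) hy
  rwa [tsum_mul_left] at h

theorem tendsto_tsum_remOne {q : ℂ} (hq : q.re < 0) {ε : ℝ} (hε : ε = 1 ∨ ε = -1) :
    Tendsto (fun y => ∑' k, remOne q ε k y) (𝓝[>] 0) (𝓝 0) := by
  have h := (tsum_remOne_hasDerivAt hq hε 0).continuousAt.tendsto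
  have e : ∑' k, remOne q ε k 0 = 0 := by simp [remOne]
  rw [e] at h
  exact h.mono_left nhdsWithin_le_nhds

theorem tendsto_tsum_remTwo {q : ℂ} (hq : q.re < 1) {ε : ℝ} (hε : ε = 1 ∨ ε = -1) :
    Tendsto (fun y => ∑' k, remTwo q ε k y) (𝓝[>] 0) (𝓝 0) := by
  have h := (tsum_remTwo_hasDerivAt hq hε 0).continuousAt.tendsto
  have e : ∑' k, remTwo q ε k 0 = 0 := by simp [remTwo]
  rw [e] at h
  exact h.mono_left nhdsWithin_le_nhds

theorem one_or : (1 : ℝ) = 1 ∨ (1 : ℝ) = -1 := Or.inl rfl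
theorem neg_one_or : (-1 : ℝ) = 1 ∨ (-1 : ℝ) = -1 := Or.inr rfl

/-- The derivative of the left-hand side vanishes by Lipschitz's formula; the constant is the limit at
`0⁺`, supplied by `zeta_limit`. -/
theorem polyExp_one_sub {s : ℂ} (hs1 : 1 < s.re) (hs2 : s.re < 2) {y : ℝ} (hy : 0 < y) :
    polyExp (1 - s) y - Gamma (2 - s) * (y : ℂ) ^ (s - 2) -
      Gamma (2 - s) * ((∑' k, remOne (s - 2) 1 k y) + ∑' k, remOne (s - 2) (-1) k y) =
    riemannZeta (s - 1) := by
  have hq : (s - 2).re < 0 := by simp; linarith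
  refine eq_of_hasDerivAt_zero_of_tendsto (D := fun y => polyExp (1 - s) y -
    Gamma (2 - s) * (y : ℂ) ^ (s - 2) -
      Gamma (2 - s) * ((∑' k, remOne (s - 2) 1 k y) + ∑' k, remOne (s - 2) (-1) k y)) ?_ ?_ hy
  · intro y hy
    have h := ((polyExp_hasDerivAt (1 - s) hy).sub
      ((hasDerivAt_cpow_real (s - 2) hy).const_mul (Gamma (2 - s)))).sub
      (((tsum_remOne_hasDerivAt hq one_or y).add
        (tsum_remOne_hasDerivAt hq neg_one_or y)).const_mul (Gamma (2 - s)))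
    convert! h using 1
    have hL := lipschitz_formula (p := 2 - s) (by simp; linarith) hy
    have hG : Gamma (2 - s + 1) = (2 - s) * Gamma (2 - s) := Gamma_add_one _ (by
      intro h0
      have := congrArg re h0
      simp at this; linarith)
    rw [show 1 - s + 1 = 2 - s by ring]
    change _ = -(∑' n : ℕ, (((n : ℝ) + 1 : ℝ) : ℂ) ^ (2 - s) *
      cexp (-((y : ℂ) * (((n : ℝ) + 1 : ℝ) : ℂ)))) - _ - _
    have e2 : -(2 - s + 1) = s - 2 - 1 := by ring
    have hsum : (s - 2 - 1).re < -1 := by simp; linarith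
    rw [hL, hG, e2, Summable.tsum_add (summable_shift_cpow one_or y hsum)
      (summable_shift_cpow neg_one_or y hsum)]
    simp only [shift]
    ring
  · have h1 := zeta_limit (w := s - 1) (by simp; linarith) (by simp; linarith)
    have h2 := ((tendsto_tsum_remOne hq one_or).add (tendsto_tsum_remOne hq neg_one_or)).const_mul
      (Gamma (2 - s))
    have h3 := h1.sub h2
    rw [add_zero, mul_zero, sub_zero] at h3
    refine h3.congr fun y => ?_
    rw [polyExp, show 1 - (s - 1) = 2 - s by ring, show s - 1 - 1 = s - 2 by ring,
      show -(s - 1) = 1 - s by ring]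

/-- Expansion of the polylogarithm `Li_s(e⁻ʸ)`, valid for every `y > 0`: the antiderivative of
`polyExp_one_sub`, with constant `ζ(s)` read off as `y → 0⁺`. -/
theorem polyExp_neg {s : ℂ} (hs1 : 1 < s.re) (hs2 : s.re < 2) {y : ℝ} (hy : 0 < y) :
    polyExp (-s) y = Gamma (1 - s) * (y : ℂ) ^ (s - 1) + riemannZeta s - riemannZeta (s - 1) * y +
      Gamma (1 - s) * ((∑' k, remTwo (s - 1) 1 k y) + ∑' k, remTwo (s - 1) (-1) k y) := by
  have hq : (s - 1).re < 1 := by simp; linarith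
  have key := eq_of_hasDerivAt_zero_of_tendsto (c := riemannZeta s) (D := fun y => polyExp (-s) y -
    Gamma (1 - s) * (y : ℂ) ^ (s - 1) -
      Gamma (1 - s) * ((∑' k, remTwo (s - 1) 1 k y) + ∑' k, remTwo (s - 1) (-1) k y) +
      riemannZeta (s - 1) * y) ?_ ?_ hy
  · linear_combination key
  · intro y hy
    have hid : HasDerivAt (fun y : ℝ => riemannZeta (s - 1) * (y : ℂ)) (riemannZeta (s - 1) * 1) y :=
      (hasDerivAt_id (y : ℂ)).comp_ofReal.const_mul _
    have h := (((polyExp_hasDerivAt (-s) hy).sub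
      ((hasDerivAt_cpow_real (s - 1) hy).const_mul (Gamma (1 - s)))).sub
      (((tsum_remTwo_hasDerivAt hq one_or y).add
        (tsum_remTwo_hasDerivAt hq neg_one_or y)).const_mul (Gamma (1 - s)))).add hid
    convert! h using 1
    have hG : Gamma (2 - s) = (1 - s) * Gamma (1 - s) := by
      rw [← Gamma_add_one]
      · congr 1; ring
      · intro h0
        have := congrArg re h0
        simp at this; linarith
    have hL := polyExp_one_sub hs1 hs2 hy
    rw [← hL, hG, show -s + 1 = 1 - s by ring, show s - 1 - 1 = s - 2 by ring]
    ring
  · have h1 := polyExp_tendsto hs1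
    have h2 := ((tendsto_tsum_remTwo hq one_or).add (tendsto_tsum_remTwo hq neg_one_or)).const_mul
      (Gamma (1 - s))
    have hc : Tendsto (fun y : ℝ => Gamma (1 - s) * (y : ℂ) ^ (s - 1)) (𝓝[>] 0) (𝓝 0) := by
      have hre : 0 < (s - 1).re := by simp; linarith
      have := ((continuous_ofReal_cpow_const hre).tendsto 0).const_mul (Gamma (1 - s))
      have hne : s - 1 ≠ 0 := fun h => by rw [h] at hre; simp at hre
      rw [ofReal_zero, zero_cpow hne, mul_zero] at this
      exact this.mono_left nhdsWithin_le_nhds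
    have hid : Tendsto (fun y : ℝ => riemannZeta (s - 1) * (y : ℂ)) (𝓝[>] 0) (𝓝 0) := by
      have : Continuous fun y : ℝ => riemannZeta (s - 1) * (y : ℂ) := by fun_prop
      have := (this.tendsto 0).mono_left (nhdsWithin_le_nhds (s := Ioi 0))
      simpa using this
    have h3 := ((h1.sub hc).sub h2).add hid
    simpa using h3

/-! ### The inner sum -/

/-- Termwise integration under a bound of the form `cₙ g(t)` with `∑ cₙ < ∞` and `g` integrable. -/
theorem hasSum_integral_of_bound {F : ℕ → ℝ → ℂ} {c : ℕ → ℝ} {g : ℝ → ℝ}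
    (hm : ∀ k, AEStronglyMeasurable (F k) (volume.restrict (Ioi 0)))
    (hb : ∀ k, ∀ t, 0 < t → ‖F k t‖ ≤ c k * g t) (hc : Summable c) (hg : IntegrableOn g (Ioi 0)) :
    (∀ k, IntegrableOn (F k) (Ioi 0)) ∧
      HasSum (fun k => ∫ t in Ioi (0 : ℝ), F k t) (∫ t in Ioi (0 : ℝ), ∑' k, F k t) := by
  have hae : ∀ k, ∀ᵐ t ∂(volume.restrict (Ioi (0 : ℝ))), ‖F k t‖ ≤ c k * g t := fun k =>
    (ae_restrict_iff' measurableSet_Ioi).2 (ae_of_all _ fun t ht => hb k t ht)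
  have hi : ∀ k, IntegrableOn (F k) (Ioi 0) := fun k => (hg.const_mul (c k)).mono' (hm k) (hae k)
  refine ⟨hi, hasSum_integral_of_summable_integral_norm hi ?_⟩
  refine Summable.of_nonneg_of_le (fun k => integral_nonneg fun _ => norm_nonneg _)
    (fun k => ?_) (hc.mul_right (∫ t in Ioi (0 : ℝ), g t))
  rw [← integral_const_mul]
  exact integral_mono_ae (hi k).norm (hg.const_mul _) (hae k)

theorem cpow_mul_exp_continuousOn (p r : ℂ) :
    ContinuousOn (fun t : ℝ => (t : ℂ) ^ p * cexp (-(r * t))) (Ioi 0) := fun t ht =>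
  (ContinuousAt.mul (continuousAt_ofReal_cpow_const _ _ (Or.inr (ne_of_gt ht)))
    (by fun_prop)).continuousWithinAt

theorem norm_cpow_mul_exp (p : ℂ) (r : ℝ) {t : ℝ} (ht : 0 < t) :
    ‖(t : ℂ) ^ p * cexp (-((r : ℂ) * t))‖ = t ^ p.re * Real.exp (-(r * t)) := by
  rw [norm_mul, norm_cpow_eq_rpow_re_of_pos ht, Complex.norm_exp, ← ofReal_mul, ← ofReal_neg,
    ofReal_re]

/-- The Gamma integral, applied to each term of `polyExp (-s)`, gives the sum of `n⁻ˢ (n + M)⁻ˢ`. -/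
theorem integral_polyExp {s : ℂ} (hs1 : 1 < s.re) {M : ℝ} (hM : 0 < M) :
    ∫ y in Ioi (0 : ℝ), (y : ℂ) ^ (s - 1) * cexp (-((M : ℂ) * y)) * polyExp (-s) y =
      Gamma s * ∑' n : ℕ, (((n : ℝ) + 1 : ℝ) : ℂ) ^ (-s) * (((n : ℝ) + 1 + M : ℝ) : ℂ) ^ (-s) := by
  have h := (hasSum_integral_of_bound
    (F := fun (n : ℕ) (y : ℝ) => (y : ℂ) ^ (s - 1) * cexp (-((M : ℂ) * y)) *
      ((((n : ℝ) + 1 : ℝ) : ℂ) ^ (-s) * cexp (-((y : ℂ) * (((n : ℝ) + 1 : ℝ) : ℂ)))))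
    (c := fun n : ℕ => ((n : ℝ) + 1) ^ (-s.re))
    (g := fun y : ℝ => y ^ (s - 1).re * Real.exp (-(M * y))) ?_ ?_
    (summable_succ_rpow (by linarith)) (rpow_exp_integrable (by simp; linarith) hM)).2
  · rw [← tsum_mul_left]
    simp_rw [tsum_mul_left] at h
    refine h.tsum_eq.symm.trans (tsum_congr fun n => ?_)
    have hn : (0 : ℝ) < (n : ℝ) + 1 + M := by positivity
    have hg := gamma_laplace (a := s) (r := (((n : ℝ) + 1 + M : ℝ) : ℂ)) (by linarith)
      (by rw [ofReal_re]; exact hn)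
    calc ∫ y in Ioi (0 : ℝ), (y : ℂ) ^ (s - 1) * cexp (-((M : ℂ) * y)) *
          ((((n : ℝ) + 1 : ℝ) : ℂ) ^ (-s) * cexp (-((y : ℂ) * (((n : ℝ) + 1 : ℝ) : ℂ))))
        = ∫ y in Ioi (0 : ℝ), (((n : ℝ) + 1 : ℝ) : ℂ) ^ (-s) * ((y : ℂ) ^ (s - 1) *
            cexp (-((((n : ℝ) + 1 + M : ℝ) : ℂ) * y))) := by
          congr 1
          ext y
          have : -((((n : ℝ) + 1 + M : ℝ) : ℂ) * y) =
            -((M : ℂ) * y) + -((y : ℂ) * (((n : ℝ) + 1 : ℝ) : ℂ)) := by push_cast; ring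
          rw [this, Complex.exp_add]; ring
      _ = _ := by rw [integral_const_mul, hg]; ring
  · intro k
    refine ContinuousOn.aestronglyMeasurable ?_ measurableSet_Ioi
    exact (cpow_mul_exp_continuousOn _ _).mul (by fun_prop)
  · intro k t ht
    have hk : (0 : ℝ) < (k : ℝ) + 1 := by positivity
    rw [norm_mul, norm_cpow_mul_exp _ _ ht, mul_comm]
    refine mul_le_mul_of_nonneg_right ?_ (by positivity)
    rw [norm_mul, norm_cpow_eq_rpow_re_of_pos hk, neg_re]
    refine mul_le_of_le_one_right (by positivity) ?_
    rw [Complex.norm_exp, ← ofReal_mul, ← ofReal_neg, ofReal_re, Real.exp_le_one_iff]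
    have := mul_pos ht hk
    linarith

/-- The contribution of the frequencies `±2π(k+1)` to the Laplace transform of `Li_s(e⁻ʸ) yˢ⁻¹`. -/
noncomputable def freqInt (s : ℂ) (M : ℝ) (k : ℕ) : ℂ :=
  ∫ y in Ioi (0 : ℝ), (y : ℂ) ^ (s - 1) * cexp (-((M : ℂ) * y)) *
    (remTwo (s - 1) 1 k y + remTwo (s - 1) (-1) k y)

theorem remTwo_continuous (q : ℂ) {ε : ℝ} (hε : ε = 1 ∨ ε = -1) (k : ℕ) :
    Continuous (remTwo q ε k) :=
  continuous_iff_continuousAt.2 fun y => (remTwo_hasDerivAt hε k q y).continuousAt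

/-- The constant in the bound for the integrand of `freqInt`. -/
noncomputable def remConst (s : ℂ) : ℝ :=
  2 * (‖s - 1‖ * ‖s - 1 - 1‖ * Real.exp (Real.pi * |(s - 1).im|))

theorem freqInt_integrand_bound {s : ℂ} (hs2 : s.re < 2) (M : ℝ) (k : ℕ) {t : ℝ} (ht : 0 < t) :
    ‖(t : ℂ) ^ (s - 1) * cexp (-((M : ℂ) * t)) *
      (remTwo (s - 1) 1 k t + remTwo (s - 1) (-1) k t)‖ ≤
      remConst s * ((k : ℝ) + 1) ^ (s.re - 3) * (t ^ (s.re + 1) * Real.exp (-(M * t))) := by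
  have hq : (s - 1).re < 1 := by simp; linarith
  rw [norm_mul, norm_cpow_mul_exp _ _ ht]
  have h := (norm_add_le (remTwo (s - 1) 1 k t) (remTwo (s - 1) (-1) k t)).trans
    (add_le_add (remTwo_bound hq one_or k t) (remTwo_bound hq neg_one_or k t))
  have e1 : (s - 1).re - 2 = s.re - 3 := by simp; ring
  have e2 : t ^ (s.re + 1) = t ^ (s - 1).re * t ^ 2 := by
    rw [← Real.rpow_natCast, ← Real.rpow_add ht]
    congr 1; simp; ring
  rw [e1, abs_of_pos ht] at h
  calc _ ≤ t ^ (s - 1).re * Real.exp (-(M * t)) * _ := mul_le_mul_of_nonneg_left h (by positivity)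
    _ = _ := by rw [e2, remConst]; ring

theorem hasSum_freqInt {s : ℂ} (hs1 : 1 < s.re) (hs2 : s.re < 2) {M : ℝ} (hM : 0 < M) :
    (IntegrableOn (fun y : ℝ => (y : ℂ) ^ (s - 1) * cexp (-((M : ℂ) * y)) *
      ((∑' k, remTwo (s - 1) 1 k y) + ∑' k, remTwo (s - 1) (-1) k y)) (Ioi 0)) ∧
    HasSum (freqInt s M) (∫ y in Ioi (0 : ℝ), (y : ℂ) ^ (s - 1) * cexp (-((M : ℂ) * y)) *
      ((∑' k, remTwo (s - 1) 1 k y) + ∑' k, remTwo (s - 1) (-1) k y)) := by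
  have hq : (s - 1).re < 1 := by simp; linarith
  constructor
  · have hcont : ∀ ε : ℝ, (ε = 1 ∨ ε = -1) → Continuous fun y => ∑' k, remTwo (s - 1) ε k y :=
      fun ε hε => continuous_iff_continuousAt.2 fun y =>
        (tsum_remTwo_hasDerivAt hq hε y).continuousAt
    have hg := (rpow_exp_integrable (b := s.re + 1) (by linarith) hM).const_mul
      (∑' k : ℕ, remConst s * ((k : ℝ) + 1) ^ (s.re - 3))
    refine hg.mono' ?_ ?_
    · refine ContinuousOn.aestronglyMeasurable ?_ measurableSet_Ioi
      exact (cpow_mul_exp_continuousOn _ _).mul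
        ((hcont 1 one_or).add (hcont (-1) neg_one_or)).continuousOn
    · refine (ae_restrict_iff' measurableSet_Ioi).2 (ae_of_all _ fun t ht => ?_)
      have ht' : 0 < t := ht
      rw [← Summable.tsum_add (summable_remTwo hq one_or t) (summable_remTwo hq neg_one_or t),
        ← tsum_mul_left, ← tsum_mul_right]
      refine tsum_of_norm_bounded ?_ fun k => freqInt_integrand_bound hs2 M k ht'
      exact (((summable_succ_rpow (by linarith)).mul_left _).mul_right _).hasSum
  · have h := (hasSum_integral_of_bound
      (F := fun (k : ℕ) (y : ℝ) => (y : ℂ) ^ (s - 1) * cexp (-((M : ℂ) * y)) *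
        (remTwo (s - 1) 1 k y + remTwo (s - 1) (-1) k y))
      (c := fun k : ℕ => remConst s * ((k : ℝ) + 1) ^ (s.re - 3))
      (g := fun y : ℝ => y ^ (s.re + 1) * Real.exp (-(M * y))) ?_ ?_
      ((summable_succ_rpow (by linarith)).mul_left _)
      (rpow_exp_integrable (by linarith) hM)).2
    · convert! h using 3
      rename_i y
      rw [← Summable.tsum_add (summable_remTwo hq one_or y) (summable_remTwo hq neg_one_or y),
        ← tsum_mul_left]
    · intro k
      refine ContinuousOn.aestronglyMeasurable ?_ measurableSet_Ioi
      exact (cpow_mul_exp_continuousOn _ _).mul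
        ((remTwo_continuous _ one_or k).add (remTwo_continuous _ neg_one_or k)).continuousOn
    · intro k t ht
      exact freqInt_integrand_bound hs2 M k ht

theorem freqInt_bound {s : ℂ} (hs1 : 1 < s.re) (hs2 : s.re < 2) {M : ℝ} (hM : 0 < M) (k : ℕ) :
    ‖freqInt s M k‖ ≤ remConst s * Real.Gamma (s.re + 2) *
      (((k : ℝ) + 1) ^ (s.re - 3) * M ^ (-(s.re + 2))) := by
  have h := norm_integral_le_of_norm_le
    (((rpow_exp_integrable (b := s.re + 1) (by linarith) hM).const_mul
      (remConst s * ((k : ℝ) + 1) ^ (s.re - 3))))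
    ((ae_restrict_iff' measurableSet_Ioi).2 (ae_of_all _ fun t ht =>
      freqInt_integrand_bound hs2 M k ht))
  refine h.trans (le_of_eq ?_)
  have hi := Real.integral_rpow_mul_exp_neg_mul_Ioi (a := s.re + 2) (by linarith) hM
  rw [show s.re + 2 - 1 = s.re + 1 by ring] at hi
  rw [integral_const_mul, hi, one_div, Real.inv_rpow hM.le, ← Real.rpow_neg hM.le]
  ring

theorem integral_add_sub_add {α : Type*} [MeasurableSpace α] {μ : Measure α} {A B C D : α → ℂ}
    (hA : Integrable A μ) (hB : Integrable B μ) (hC : Integrable C μ) (hD : Integrable D μ) :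
    ∫ y, (A y + B y - C y + D y) ∂μ =
      ∫ y, A y ∂μ + ∫ y, B y ∂μ - ∫ y, C y ∂μ + ∫ y, D y ∂μ := by
  have h1 : ∫ y, (A y + B y) ∂μ = ∫ y, A y ∂μ + ∫ y, B y ∂μ := integral_add hA hB
  have h2 : ∫ y, (A y + B y - C y) ∂μ = ∫ y, (A y + B y) ∂μ - ∫ y, C y ∂μ :=
    integral_sub (hA.add hB) hC
  have h3 : ∫ y, (A y + B y - C y + D y) ∂μ = ∫ y, (A y + B y - C y) ∂μ + ∫ y, D y ∂μ :=
    integral_add ((hA.add hB).sub hC) hD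
  rw [h3, h2, h1]

/-- The expansion `polyExp_neg`, integrated termwise against `yˢ⁻¹ e⁻ᴹʸ`. -/
theorem tsum_inner_eq {s : ℂ} (hs1 : 1 < s.re) (hs2 : s.re < 2) {M : ℝ} (hM : 0 < M) :
    Summable (freqInt s M) ∧
    ∑' n : ℕ, (((n : ℝ) + 1 : ℝ) : ℂ) ^ (-s) * (((n : ℝ) + 1 + M : ℝ) : ℂ) ^ (-s) =
      riemannZeta s * (M : ℂ) ^ (-s) - s * riemannZeta (s - 1) * (M : ℂ) ^ (-(s + 1)) +
        Gamma (1 - s) * Gamma (2 * s - 1) / Gamma s * (M : ℂ) ^ (-(2 * s - 1)) +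
        Gamma (1 - s) / Gamma s * ∑' k, freqInt s M k := by
  obtain ⟨hint, hsum⟩ := hasSum_freqInt hs1 hs2 hM
  refine ⟨hsum.summable, ?_⟩
  have hGs : Gamma s ≠ 0 := Gamma_ne_zero_of_re_pos (by linarith)
  have hMre : 0 < (M : ℂ).re := by simpa using hM
  have i1 : IntegrableOn (fun y : ℝ => Gamma (1 - s) * ((y : ℂ) ^ (2 * s - 1 - 1) *
      cexp (-((M : ℂ) * y)))) (Ioi 0) :=
    (cpow_exp_integrable (by simp; linarith) M hM).const_mul _
  have i2 : IntegrableOn (fun y : ℝ => riemannZeta s * ((y : ℂ) ^ (s - 1) *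
      cexp (-((M : ℂ) * y)))) (Ioi 0) :=
    (cpow_exp_integrable (by simp; linarith) M hM).const_mul _
  have i3 : IntegrableOn (fun y : ℝ => riemannZeta (s - 1) * ((y : ℂ) ^ (s + 1 - 1) *
      cexp (-((M : ℂ) * y)))) (Ioi 0) :=
    (cpow_exp_integrable (by simp; linarith) M hM).const_mul _
  have i4 := hint.const_mul (Gamma (1 - s))
  have key : ∫ y in Ioi (0 : ℝ), (y : ℂ) ^ (s - 1) * cexp (-((M : ℂ) * y)) * polyExp (-s) y =
      ∫ y in Ioi (0 : ℝ), (Gamma (1 - s) * ((y : ℂ) ^ (2 * s - 1 - 1) * cexp (-((M : ℂ) * y))) +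
        riemannZeta s * ((y : ℂ) ^ (s - 1) * cexp (-((M : ℂ) * y))) -
        riemannZeta (s - 1) * ((y : ℂ) ^ (s + 1 - 1) * cexp (-((M : ℂ) * y))) +
        Gamma (1 - s) * ((y : ℂ) ^ (s - 1) * cexp (-((M : ℂ) * y)) *
      ((∑' k, remTwo (s - 1) 1 k y) + ∑' k, remTwo (s - 1) (-1) k y))) := by
    refine setIntegral_congr_fun measurableSet_Ioi fun y hy => ?_
    have hy0 : (y : ℂ) ≠ 0 := by rw [ofReal_ne_zero]; exact ne_of_gt hy
    rw [polyExp_neg hs1 hs2 hy]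
    have e1 : (y : ℂ) ^ (2 * s - 1 - 1) = (y : ℂ) ^ (s - 1) * (y : ℂ) ^ (s - 1) := by
      rw [← cpow_add _ _ hy0]; ring_nf
    have e2 : (y : ℂ) ^ (s + 1 - 1) = (y : ℂ) ^ (s - 1) * y := by
      rw [show s + 1 - 1 = s - 1 + 1 by ring, cpow_add _ _ hy0, cpow_one]
    rw [e1, e2]; ring
  rw [integral_polyExp hs1 hM, integral_add_sub_add i1 i2 i3 i4, integral_const_mul, integral_const_mul, integral_const_mul,
    integral_const_mul, ← hsum.tsum_eq, gamma_laplace (by simp; linarith) hMre,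
    gamma_laplace (by linarith) hMre, gamma_laplace (by simp; linarith) hMre,
    Gamma_add_one s (fun h => by rw [h] at hs1; simp at hs1; linarith)] at key
  apply mul_left_cancel₀ hGs
  rw [key]
  field_simp
  ring

/-! ### Rescaling the remainder integrals -/

theorem mul_cpow_of_arg {x y : ℂ} (hx : x ≠ 0) (hy : y ≠ 0)
    (h : arg x + arg y ∈ Ioc (-Real.pi) Real.pi) (q : ℂ) : (x * y) ^ q = x ^ q * y ^ q := by
  rw [cpow_def_of_ne_zero (mul_ne_zero hx hy), cpow_def_of_ne_zero hx, cpow_def_of_ne_zero hy,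
    (log_mul_eq_add_log_iff hx hy).2 h, add_mul, Complex.exp_add]

theorem ofReal_mul_cpow {x : ℝ} (hx : 0 < x) (y q : ℂ) :
    ((x : ℂ) * y) ^ q = (x : ℂ) ^ q * y ^ q := by
  by_cases hy : y = 0
  · subst hy
    by_cases hq : q = 0
    · simp [hq]
    · simp [zero_cpow hq]
  · refine mul_cpow_of_arg (ofReal_ne_zero.2 hx.ne') hy ?_ q
    rw [arg_ofReal_of_nonneg hx.le, zero_add]
    exact arg_mem_Ioc y

/-- The two square roots of `-1`. -/
def IsUnitI (ω : ℂ) : Prop := ω = I ∨ ω = -I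

theorem IsUnitI.sq {ω : ℂ} (h : IsUnitI ω) : ω * ω = -1 := by
  rcases h with rfl | rfl <;> simp

theorem IsUnitI.ne_zero {ω : ℂ} (h : IsUnitI ω) : ω ≠ 0 := by
  rcases h with rfl | rfl <;> simp

theorem IsUnitI.re {ω : ℂ} (h : IsUnitI ω) : ω.re = 0 := by
  rcases h with rfl | rfl <;> simp

theorem IsUnitI.norm {ω : ℂ} (h : IsUnitI ω) : ‖ω‖ = 1 := by
  rcases h with rfl | rfl <;> simp

theorem IsUnitI.neg {ω : ℂ} (h : IsUnitI ω) : IsUnitI (-ω) := by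
  rcases h with rfl | rfl <;> simp [IsUnitI]

theorem IsUnitI.abs_arg {ω : ℂ} (h : IsUnitI ω) : |arg ω| = Real.pi / 2 := by
  rcases h with rfl | rfl <;> simp <;> positivity

theorem IsUnitI.one_add_re {ω : ℂ} (h : IsUnitI ω) (t : ℝ) : (1 + ω * t).re = 1 := by
  simp [h.re]

theorem IsUnitI.one_add_ne {ω : ℂ} (h : IsUnitI ω) (t : ℝ) : 1 + ω * t ≠ 0 := fun h0 => by
  have := h.one_add_re t
  rw [h0] at this; simp at this

theorem IsUnitI.one_add_mem {ω : ℂ} (h : IsUnitI ω) (t : ℝ) : 1 + ω * t ∈ slitPlane :=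
  Or.inl (by rw [h.one_add_re]; exact one_pos)

theorem IsUnitI.mul_cpow {ω z : ℂ} (h : IsUnitI ω) (hz : 0 < z.re) (q : ℂ) :
    (ω * z) ^ q = ω ^ q * z ^ q := by
  have hz0 : z ≠ 0 := fun h0 => by rw [h0] at hz; simp at hz
  refine mul_cpow_of_arg h.ne_zero hz0 ?_ q
  have h1 : |arg z| < Real.pi / 2 := abs_arg_lt_pi_div_two_iff.2 (Or.inl hz)
  have h2 := h.abs_arg
  have h3 := abs_add_le (arg ω) (arg z)
  have h4 := abs_lt.1 (lt_of_le_of_lt h3 (b := |arg ω| + |arg z|) (c := Real.pi) (by linarith))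
  exact ⟨h4.1, h4.2.le⟩

/-- First-order Taylor remainder at `0` of `t ↦ (1 + ωt)^q`. -/
noncomputable def taylorRem (q ω : ℂ) (t : ℝ) : ℂ := (1 + ω * t) ^ q - 1 - q * ω * t

/-- The substitution `y = 2π(k+1) t` factors the frequency out of the remainder. -/
theorem remTwo_eq {q : ℂ} (ε : ℝ) (k : ℕ) {ω : ℂ} (hω : IsUnitI ω) (hε : (ε : ℂ) * I = ω)
    (t : ℝ) :
    remTwo q ε k (freq k * t) = (freq k : ℂ) ^ q * (ω ^ q * taylorRem q (-ω) t) := by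
  have hf := freq_pos k
  have hf0 : (freq k : ℂ) ≠ 0 := ofReal_ne_zero.2 hf.ne'
  have e0 : ∀ t : ℝ, shift ε k (freq k * t) = (freq k : ℂ) * (ω * (1 + -ω * t)) := by
    intro t
    have : ω * (1 + -ω * t) = ω + t := by linear_combination -(t : ℂ) * hω.sq
    rw [this, shift, ← hε]; push_cast; ring
  have e1 : shift ε k 0 = (freq k : ℂ) * ω := by
    have := e0 0
    simpa using this
  rw [remTwo, e0, e1, ofReal_mul_cpow hf, ofReal_mul_cpow hf, ofReal_mul_cpow hf,
    hω.mul_cpow (by rw [hω.neg.one_add_re]; exact one_pos), taylorRem,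
    cpow_sub _ _ hf0, cpow_sub _ _ hω.ne_zero, cpow_one, cpow_one]
  have hinv : ω⁻¹ = -ω := by
    apply inv_eq_of_mul_eq_one_right
    linear_combination -hω.sq
  rw [div_eq_mul_inv (ω ^ q), hinv]
  push_cast
  field_simp

/-- The Laplace-type integral to which every frequency contribution reduces after rescaling. -/
noncomputable def remInt (s : ℂ) (x : ℝ) : ℂ :=
  ∫ t in Ioi (0 : ℝ), (t : ℂ) ^ (s - 1) * cexp (-((x : ℂ) * t)) *
    (I ^ (s - 1) * taylorRem (s - 1) (-I) t + (-I) ^ (s - 1) * taylorRem (s - 1) I t)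

/-- After the substitution `y = freq k * t` the integral depends on `M` only through `freq k * M`. This is
what makes the divisor function appear. -/
theorem freqInt_eq (s : ℂ) (M : ℝ) (k : ℕ) :
    freqInt s M k = (freq k : ℂ) ^ (2 * s - 1) * remInt s (freq k * M) := by
  have hf := freq_pos k
  have hf0 : (freq k : ℂ) ≠ 0 := ofReal_ne_zero.2 hf.ne'
  have h := integral_comp_mul_left_Ioi' (fun y : ℝ => (y : ℂ) ^ (s - 1) * cexp (-((M : ℂ) * y)) *
    (remTwo (s - 1) 1 k y + remTwo (s - 1) (-1) k y)) 0 hf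
  rw [mul_zero] at h
  rw [freqInt, ← h, remInt, real_smul, ← integral_const_mul, ← integral_const_mul]
  refine setIntegral_congr_fun measurableSet_Ioi fun t ht => ?_
  have ht0 : (0 : ℝ) < t := ht
  rw [remTwo_eq 1 k (Or.inl rfl) (by simp) t, remTwo_eq (-1) k (Or.inr rfl) (by simp) t,
    neg_neg, ofReal_mul (freq k) t, ofReal_mul_cpow hf]
  have e : (freq k : ℂ) ^ (2 * s - 1) = (freq k : ℂ) ^ (s - 1) * (freq k : ℂ) ^ (s - 1) * freq k := by
    rw [← cpow_add _ _ hf0]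
    nth_rewrite 3 [← cpow_one (freq k : ℂ)]
    rw [← cpow_add _ _ hf0]
    ring_nf
  rw [e, show -((M : ℂ) * (freq k * t)) = -(((freq k * M : ℝ) : ℂ) * t) by push_cast; ring]
  ring

/-! ### Laplace integrals of `tᵖ (1 + ωt)^q` -/

theorem IsUnitI.norm_one_add_ge {ω : ℂ} (h : IsUnitI ω) (t : ℝ) : 1 ≤ ‖1 + ω * t‖ := by
  have := abs_re_le_norm (1 + ω * t)
  rwa [h.one_add_re, abs_one] at this

theorem IsUnitI.norm_one_add_le {ω : ℂ} (h : IsUnitI ω) {t : ℝ} (ht : 0 ≤ t) :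
    ‖1 + ω * t‖ ≤ 1 + t := by
  refine (norm_add_le _ _).trans ?_
  rw [norm_mul, h.norm, norm_one, norm_real, Real.norm_of_nonneg ht, one_mul]

theorem norm_cpow_le_exp_mul (z q : ℂ) :
    ‖z ^ q‖ ≤ Real.exp (Real.pi * |q.im|) * ‖z‖ ^ q.re := by
  refine (Complex.norm_cpow_le z q).trans ?_
  rw [div_eq_mul_inv, ← Real.exp_neg, mul_comm]
  have h2 : -(arg z * q.im) ≤ Real.pi * |q.im| := by
    refine (neg_le_abs _).trans ?_
    rw [abs_mul]
    exact mul_le_mul_of_nonneg_right (abs_arg_le_pi z) (abs_nonneg _)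
  gcongr

theorem IsUnitI.cpow_bound {ω : ℂ} (h : IsUnitI ω) {q : ℂ} (hq : q.re ≤ 1) {t : ℝ} (ht : 0 ≤ t) :
    ‖(1 + ω * t) ^ q‖ ≤ Real.exp (Real.pi * |q.im|) * (1 + t) := by
  refine (norm_cpow_le_exp_mul _ _).trans ?_
  refine mul_le_mul_of_nonneg_left ?_ (Real.exp_pos _).le
  calc ‖1 + ω * t‖ ^ q.re ≤ ‖1 + ω * t‖ ^ (1 : ℝ) :=
        Real.rpow_le_rpow_of_exponent_le (h.norm_one_add_ge t) hq
    _ = ‖1 + ω * t‖ := Real.rpow_one _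
    _ ≤ _ := h.norm_one_add_le ht

theorem IsUnitI.cpow_bound' {ω : ℂ} (h : IsUnitI ω) {q : ℂ} (hq : q.re ≤ 0) (t : ℝ) :
    ‖(1 + ω * t) ^ q‖ ≤ Real.exp (Real.pi * |q.im|) := by
  have := norm_cpow_le_of_le_norm one_pos (h.norm_one_add_ge t) hq
  simpa using this

/-- `tᵖ (1 + ωt)^q`, the density whose Laplace transform represents Bessel functions. -/
noncomputable def kDens (p q ω : ℂ) (t : ℝ) : ℂ := (t : ℂ) ^ p * (1 + ω * t) ^ q

/-- The Laplace transform of `kDens`. -/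
noncomputable def kInt (p q ω z : ℂ) : ℂ :=
  ∫ t in Ioi (0 : ℝ), kDens p q ω t * cexp (-(z * t))

theorem kDens_continuousOn {ω : ℂ} (h : IsUnitI ω) (p q : ℂ) :
    ContinuousOn (kDens p q ω) (Ioi 0) := fun t ht => by
  refine (ContinuousAt.mul (continuousAt_ofReal_cpow_const _ _ (Or.inr (ne_of_gt ht)))
    ?_).continuousWithinAt
  exact ContinuousAt.cpow (by fun_prop) continuousAt_const (h.one_add_mem t)

theorem kDens_integrable {ω : ℂ} (h : IsUnitI ω) {p q : ℂ} (hp : -1 < p.re) (hq : q.re ≤ 1)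
    (c : ℝ) (hc : 0 < c) :
    IntegrableOn (fun t : ℝ => kDens p q ω t * cexp (-((c : ℂ) * t))) (Ioi 0) := by
  have h1 := ((rpow_exp_integrable hp hc).add
    (rpow_exp_integrable (b := p.re + 1) (by linarith) hc)).const_mul (Real.exp (Real.pi * |q.im|))
  refine Integrable.mono' h1 ?_ ?_
  · exact ((kDens_continuousOn h p q).mul (by fun_prop)).aestronglyMeasurable measurableSet_Ioi
  · refine (ae_restrict_iff' measurableSet_Ioi).2 (ae_of_all _ fun t ht => ?_)
    have ht0 : (0 : ℝ) < t := ht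
    have e : kDens p q ω t * cexp (-((c : ℂ) * t)) =
      ((t : ℂ) ^ p * cexp (-((c : ℂ) * t))) * (1 + ω * t) ^ q := by rw [kDens]; ring
    rw [e, norm_mul, norm_cpow_mul_exp _ _ ht0]
    have hb := h.cpow_bound hq ht0.le
    calc _ ≤ t ^ p.re * Real.exp (-(c * t)) * _ := mul_le_mul_of_nonneg_left hb (by positivity)
      _ = _ := by
        simp only [Pi.add_apply]
        rw [Real.rpow_add_one ht0.ne']; ring

theorem kInt_integrable {ω : ℂ} (h : IsUnitI ω) {p q z : ℂ} (hp : -1 < p.re) (hq : q.re ≤ 1)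
    (hz : 0 < z.re) : IntegrableOn (fun t : ℝ => kDens p q ω t * cexp (-(z * t))) (Ioi 0) :=
  laplace_integrable (kDens_integrable h hp hq) hz

theorem kInt_hasDerivAt {ω : ℂ} (h : IsUnitI ω) {p q z : ℂ} (hp : -1 < p.re) (hq : q.re ≤ 1)
    (hz : 0 < z.re) : HasDerivAt (kInt p q ω) (-kInt (p + 1) q ω z) z := by
  have := laplace_hasDerivAt (kDens_integrable h hp hq) hz
  convert! this using 1
  rw [integral_neg, kInt]
  congr 1
  refine setIntegral_congr_fun measurableSet_Ioi fun t ht => ?_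
  have ht0 : (t : ℂ) ≠ 0 := ofReal_ne_zero.2 (ne_of_gt ht)
  simp only [kDens]
  rw [cpow_add _ _ ht0, cpow_one]; ring

/-- From `(1 + ωt)^{q+1} = (1 + ωt)^q + ωt (1 + ωt)^q`. -/
theorem kInt_contig {ω : ℂ} (h : IsUnitI ω) {p q z : ℂ} (hp : -1 < p.re) (hq : q.re ≤ 0)
    (hz : 0 < z.re) : kInt p (q + 1) ω z = kInt p q ω z + ω * kInt (p + 1) q ω z := by
  have i1 := kInt_integrable h hp (q := q) (by linarith) hz
  have i2 := (kInt_integrable h (p := p + 1) (q := q) (by simp; linarith) (by linarith) hz).const_mul ω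
  rw [kInt, kInt, kInt, ← integral_const_mul, ← integral_add i1 i2]
  refine setIntegral_congr_fun measurableSet_Ioi fun t ht => ?_
  have ht0 : (t : ℂ) ≠ 0 := ofReal_ne_zero.2 (ne_of_gt ht)
  simp only [kDens]
  rw [cpow_add _ _ ht0, cpow_one, cpow_add _ _ (h.one_add_ne t), cpow_one]; ring

theorem IsUnitI.one_add_cpow_hasDerivAt {ω : ℂ} (h : IsUnitI ω) (q : ℂ) (t : ℝ) :
    HasDerivAt (fun t : ℝ => (1 + ω * t) ^ q) (q * ω * (1 + ω * t) ^ (q - 1)) t := by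
  have h1 : HasDerivAt (fun z : ℂ => (1 + ω * z) ^ q) (q * (1 + ω * (t : ℂ)) ^ (q - 1) * (ω * 1))
      (t : ℂ) := (((hasDerivAt_id (t : ℂ)).const_mul ω).const_add 1).cpow_const (h.one_add_mem t)
  convert! h1.comp_ofReal using 1
  ring

/-- Integration by parts; the boundary terms vanish because `Re p > 0` and `x > 0`. -/
theorem kInt_ibp {ω : ℂ} (h : IsUnitI ω) {p q : ℂ} (hp : 0 < p.re) (hq : q.re ≤ 1)
    {x : ℝ} (hx : 0 < x) :
    p * kInt (p - 1) q ω x + q * ω * kInt p (q - 1) ω x = x * kInt p q ω x := by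
  have hx' : 0 < (x : ℂ).re := by simpa using hx
  have i1 := (kInt_integrable h (p := p - 1) (q := q) (by simp; linarith) hq hx').const_mul p
  have i2 := (kInt_integrable h (p := p) (q := q - 1) (by linarith) (by simp; linarith)
    hx').const_mul (q * ω)
  have i3 := (kInt_integrable h (p := p) (q := q) (by linarith) hq hx').const_mul (x : ℂ)
  let f : ℝ → ℂ := fun t => kDens p q ω t * cexp (-((x : ℂ) * t))
  have hd : ∀ t ∈ Ioi (0 : ℝ), HasDerivAt f
      (p * (kDens (p - 1) q ω t * cexp (-((x : ℂ) * t))) +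
        q * ω * (kDens p (q - 1) ω t * cexp (-((x : ℂ) * t))) -
        x * (kDens p q ω t * cexp (-((x : ℂ) * t)))) t := by
    intro t ht
    have := ((hasDerivAt_cpow_real p ht).mul (h.one_add_cpow_hasDerivAt q t)).mul
      (hasDerivAt_exp_real (x : ℂ) t)
    convert! this using 1
    simp only [kDens, Pi.mul_apply]; ring
  have hc : ContinuousAt f 0 := by
    refine ContinuousAt.mul (ContinuousAt.mul ?_ ?_) (by fun_prop)
    · exact (continuous_ofReal_cpow_const hp).continuousAt
    · exact ContinuousAt.cpow (by fun_prop) continuousAt_const (h.one_add_mem 0)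
  have hp0 : p ≠ 0 := fun h => by rw [h] at hp; simp at hp
  have e : f 0 = 0 := by simp [f, kDens, hp0]
  have hinf : Tendsto f atTop (𝓝 0) := by
    have hb : ∀ᶠ t : ℝ in atTop, ‖f t‖ ≤
        Real.exp (Real.pi * |q.im|) * 2 * (t ^ (p.re + 1) * Real.exp (-x * t)) := by
      filter_upwards [eventually_ge_atTop 1] with t ht
      have ht0 : 0 < t := by linarith
      have e : f t = ((t : ℂ) ^ p * cexp (-((x : ℂ) * t))) * (1 + ω * t) ^ q := by
        simp only [f, kDens]; ring
      rw [e, norm_mul, norm_cpow_mul_exp _ _ ht0]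
      have hb := h.cpow_bound hq ht0.le
      calc _ ≤ t ^ p.re * Real.exp (-(x * t)) * (Real.exp (Real.pi * |q.im|) * (1 + t)) :=
            mul_le_mul_of_nonneg_left hb (by positivity)
        _ ≤ t ^ p.re * Real.exp (-(x * t)) * (Real.exp (Real.pi * |q.im|) * (2 * t)) := by
            gcongr; linarith
        _ = _ := by rw [Real.rpow_add_one ht0.ne', neg_mul]; ring
    refine squeeze_zero_norm' hb ?_
    have := (tendsto_rpow_mul_exp_neg_mul_atTop_nhds_zero (p.re + 1) x hx).const_mul
      (Real.exp (Real.pi * |q.im|) * 2)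
    simpa using this
  have hint := integral_Ioi_of_hasDerivAt_of_tendsto (f := f) (a := 0) (m := 0)
    hc.continuousWithinAt hd ((i1.add i2).sub i3) hinf
  rw [e, sub_zero] at hint
  have e1 : ∫ t in Ioi (0 : ℝ), (p * (kDens (p - 1) q ω t * cexp (-((x : ℂ) * t))) +
      q * ω * (kDens p (q - 1) ω t * cexp (-((x : ℂ) * t))) -
      x * (kDens p q ω t * cexp (-((x : ℂ) * t)))) =
      (∫ t in Ioi (0 : ℝ), (p * (kDens (p - 1) q ω t * cexp (-((x : ℂ) * t))) +
      q * ω * (kDens p (q - 1) ω t * cexp (-((x : ℂ) * t))))) -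
      ∫ t in Ioi (0 : ℝ), x * (kDens p q ω t * cexp (-((x : ℂ) * t))) :=
    integral_sub (i1.add i2) i3
  rw [e1, integral_add i1 i2, integral_const_mul, integral_const_mul, integral_const_mul] at hint
  simp only [kInt]
  linear_combination hint

/-! ### The power series of the Bessel functions -/

/-- The `m`-th term `(-w)ᵐ / (m! Γ(m+1+μ))` of `besselG`. -/
noncomputable def besselGTerm (μ w : ℂ) (m : ℕ) : ℂ :=
  (-w) ^ m / (Nat.factorial m : ℂ) * (Gamma ((m : ℂ) + 1 + μ))⁻¹

/-- The entire function `∑ (-w)ᵐ / (m! Γ(m+1+μ))`, so that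
`J_μ(x) = (x/2)^μ * besselG μ ((x/2)²)`. -/
noncomputable def besselG (μ w : ℂ) : ℂ := ∑' m : ℕ, besselGTerm μ w m

theorem inv_Gamma_step (z : ℂ) : (Gamma z)⁻¹ = z * (Gamma (z + 1))⁻¹ := by
  have := Complex.one_div_Gamma_eq_self_mul_one_div_Gamma_add_one z
  simpa using this

theorem besselGTerm_succ (μ w : ℂ) (m : ℕ) :
    ((m : ℂ) + 1) * besselGTerm μ w (m + 1) = -w * besselGTerm (μ + 1) w m := by
  have h1 : (Nat.factorial m : ℂ) ≠ 0 := Nat.cast_ne_zero.2 (Nat.factorial_ne_zero m)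
  have h2 : (m : ℂ) + 1 ≠ 0 := Nat.cast_add_one_ne_zero m
  simp only [besselGTerm, Nat.factorial_succ]
  push_cast
  rw [show (m : ℂ) + 1 + 1 + μ = (m : ℂ) + 1 + (μ + 1) by ring]
  field_simp
  ring

theorem besselGTerm_bound_summable (μ : ℂ) (R : ℝ) :
    Summable fun m : ℕ => ‖besselGTerm μ (R : ℂ) m‖ := by
  rcases eq_or_ne R 0 with h0 | h0
  · refine summable_of_ne_finset_zero (s := {0}) fun m hm => ?_
    have hm : m ≠ 0 := by simpa using hm
    simp [besselGTerm, h0, hm]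
  refine summable_of_ratio_norm_eventually_le (r := 1 / 2) (by norm_num) ?_
  obtain ⟨N, hN⟩ := exists_nat_ge (‖μ‖ + 2 * |R|)
  filter_upwards [eventually_ge_atTop N] with m hm
  have hmN : (N : ℝ) ≤ m := by exact_mod_cast hm
  have hz : 1 ≤ ‖(m : ℂ) + 1 + μ‖ := by
    have h3 : ‖(m : ℂ) + 1‖ ≤ ‖(m : ℂ) + 1 + μ‖ + ‖μ‖ := by
      have := norm_sub_le ((m : ℂ) + 1 + μ) μ
      simpa using this
    have h4 : ‖(m : ℂ) + 1‖ = (m : ℝ) + 1 := by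
      rw [show (m : ℂ) + 1 = ((m + 1 : ℕ) : ℂ) by push_cast; rfl, norm_natCast]; push_cast; rfl
    have := abs_nonneg R
    linarith
  have hstep : besselGTerm μ R m =
      ((m : ℂ) + 1 + μ) * ((-R : ℂ) ^ m / (Nat.factorial m : ℂ) * (Gamma ((m : ℂ) + 1 + μ + 1))⁻¹) := by
    rw [besselGTerm, inv_Gamma_step]; ring
  have hnext : besselGTerm μ R (m + 1) = (-R : ℂ) / ((m : ℂ) + 1) *
      ((-R : ℂ) ^ m / (Nat.factorial m : ℂ) * (Gamma ((m : ℂ) + 1 + μ + 1))⁻¹) := by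
    have h1 : (Nat.factorial m : ℂ) ≠ 0 := Nat.cast_ne_zero.2 (Nat.factorial_ne_zero m)
    have h2 : (m : ℂ) + 1 ≠ 0 := Nat.cast_add_one_ne_zero m
    simp only [besselGTerm, Nat.factorial_succ]
    push_cast
    rw [show (m : ℂ) + 1 + 1 + μ = (m : ℂ) + 1 + μ + 1 by ring]
    field_simp
    ring
  rw [norm_norm, norm_norm, hstep, hnext, norm_mul, norm_mul ((m : ℂ) + 1 + μ), ← mul_assoc]
  refine mul_le_mul_of_nonneg_right ?_ (norm_nonneg _)
  have h5 : ‖(-R : ℂ) / ((m : ℂ) + 1)‖ ≤ 1 / 2 := by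
    rw [norm_div, norm_neg, norm_real, Real.norm_eq_abs,
      show (m : ℂ) + 1 = ((m + 1 : ℕ) : ℂ) by push_cast; rfl, norm_natCast]
    push_cast
    rw [div_le_iff₀ (by positivity)]
    have := norm_nonneg μ
    linarith
  linarith

theorem besselGTerm_norm_le (μ : ℂ) {w : ℂ} {R : ℝ} (h : ‖w‖ ≤ R) (m : ℕ) :
    ‖besselGTerm μ w m‖ ≤ ‖besselGTerm μ (R : ℂ) m‖ := by
  have hR : 0 ≤ R := (norm_nonneg _).trans h
  simp only [besselGTerm, norm_mul, norm_div, norm_pow, norm_neg, norm_real, Real.norm_of_nonneg hR]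
  gcongr

theorem besselGTerm_summable (μ w : ℂ) : Summable (besselGTerm μ w) :=
  Summable.of_norm_bounded (besselGTerm_bound_summable μ ‖w‖) fun m => besselGTerm_norm_le μ le_rfl m

theorem besselG_hasDerivAt (μ w : ℂ) : HasDerivAt (besselG μ) (-besselG (μ + 1) w) w := by
  let d : ℕ → ℂ → ℂ := fun m w => match m with
    | 0 => 0
    | k + 1 => -besselGTerm (μ + 1) w k
  have hd : ∀ m : ℕ, ∀ w : ℂ, HasDerivAt (fun w => besselGTerm μ w m) (d m w) w := by
    intro m w
    rcases m with _ | k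
    · simp only [besselGTerm, pow_zero, d]; exact hasDerivAt_const _ _
    · have h1 := ((((hasDerivAt_id w).neg.pow (k + 1)).div_const
        (Nat.factorial (k + 1) : ℂ)).mul_const (Gamma (((k + 1 : ℕ) : ℂ) + 1 + μ))⁻¹)
      have h2 : (k : ℂ) + 1 ≠ 0 := Nat.cast_add_one_ne_zero k
      have h3 : (Nat.factorial k : ℂ) ≠ 0 := Nat.cast_ne_zero.2 (Nat.factorial_ne_zero k)
      convert! h1 using 1
      simp only [d, besselGTerm, Nat.factorial_succ, Nat.add_sub_cancel, Pi.neg_apply, id]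
      push_cast
      rw [show (k : ℂ) + 1 + 1 + μ = (k : ℂ) + 1 + (μ + 1) by ring]
      field_simp
  let R := ‖w‖ + 1
  have hu : Summable fun m : ℕ => ‖d m (R : ℂ)‖ := by
    refine (summable_nat_add_iff 1).1 ?_
    have := besselGTerm_bound_summable (μ + 1) R
    simpa [d] using this
  have key := hasDerivAt_tsum_of_isPreconnected (g := fun m w => besselGTerm μ w m) (g' := d)
    (t := Metric.ball (0 : ℂ) R) (y₀ := w) (y := w) hu Metric.isOpen_ball
    (convex_ball _ _).isPreconnected (fun m y _ => hd m y) ?_ ?_ (besselGTerm_summable μ w) ?_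
  · have e : ∑' m, d m w = -besselG (μ + 1) w := by
      have hs : Summable (fun m => d m w) := by
        refine (summable_nat_add_iff 1).1 ?_
        simpa [d] using (besselGTerm_summable (μ + 1) w).neg
      rw [hs.tsum_eq_zero_add]
      simp only [d, zero_add, besselG, tsum_neg]
    rw [e] at key
    exact key
  · intro m y hy
    have hy' : ‖y‖ ≤ R := (mem_ball_zero_iff.1 hy).le
    rcases m with _ | k
    · simp [d]
    · simp only [d, norm_neg]; exact besselGTerm_norm_le _ hy' k
  · simp [R]
  · simp [R]

/-- The three-term recurrence of the Bessel functions. -/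
theorem besselG_rec (μ w : ℂ) :
    besselG (μ - 1) w = μ * besselG μ w - w * besselG (μ + 1) w := by
  have hA : HasSum (fun m : ℕ => (m : ℂ) * besselGTerm μ w m) (-w * besselG (μ + 1) w) := by
    have h1 : HasSum (fun m : ℕ => ((m + 1 : ℕ) : ℂ) * besselGTerm μ w (m + 1))
        (-w * besselG (μ + 1) w) := by
      have := (besselGTerm_summable (μ + 1) w).hasSum.mul_left (-w)
      refine this.congr_fun ?_
      intro m
      rw [← besselGTerm_succ]; push_cast; rfl
    have := (hasSum_nat_add_iff (f := fun m : ℕ => (m : ℂ) * besselGTerm μ w m) 1).1 h1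
    simpa using this
  have hB := (besselGTerm_summable μ w).hasSum.mul_left μ
  have hC := hB.add hA
  have e : (fun m : ℕ => μ * besselGTerm μ w m + (m : ℂ) * besselGTerm μ w m) =
      besselGTerm (μ - 1) w := by
    funext m
    simp only [besselGTerm]
    rw [show (m : ℂ) + 1 + (μ - 1) = m + μ by ring, inv_Gamma_step ((m : ℂ) + μ),
      show (m : ℂ) + μ + 1 = m + 1 + μ by ring]
    ring
  rw [e] at hC
  rw [besselG, hC.tsum_eq, ← besselG]
  ring

theorem besselG_zero (μ : ℂ) : besselG μ 0 = (Gamma (1 + μ))⁻¹ := by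
  rw [besselG, tsum_eq_single 0]
  · simp [besselGTerm]
  · intro m hm; simp [besselGTerm, hm]

theorem besselG_continuous (μ : ℂ) : Continuous (besselG μ) :=
  continuous_iff_continuousAt.2 fun w => (besselG_hasDerivAt μ w).continuousAt

/-- `besselG μ ((x/2)²)`, the regular factor of the Bessel function. -/
noncomputable def gBes (μ : ℂ) (x : ℝ) : ℂ := besselG μ ((((x / 2) ^ 2 : ℝ)) : ℂ)

theorem gBes_hasDerivAt (μ : ℂ) (x : ℝ) :
    HasDerivAt (gBes μ) (-(x / 2 : ℂ) * gBes (μ + 1) x) x := by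
  have h1 : HasDerivAt (fun z : ℂ => (z / 2) ^ 2) ((x : ℂ) / 2) (x : ℂ) := by
    have := ((hasDerivAt_id (x : ℂ)).div_const 2).pow 2
    convert! this using 1
    simp; ring
  have h2 := (HasDerivAt.comp (x : ℂ) (besselG_hasDerivAt μ (((x : ℂ) / 2) ^ 2)) h1).comp_ofReal
  convert! h2 using 1
  · funext y; simp [gBes]
  · simp [gBes]; ring

theorem gBes_rec (μ : ℂ) (x : ℝ) :
    gBes (μ - 1) x = μ * gBes μ x - (x / 2 : ℂ) ^ 2 * gBes (μ + 1) x := by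
  have := besselG_rec μ ((((x / 2) ^ 2 : ℝ)) : ℂ)
  simp only [gBes]
  rw [this]; push_cast; rfl

theorem gBes_tendsto (μ : ℂ) : Tendsto (gBes μ) (𝓝[>] 0) (𝓝 (Gamma (1 + μ))⁻¹) := by
  have := (gBes_hasDerivAt μ 0).continuousAt.tendsto
  rw [show gBes μ 0 = (Gamma (1 + μ))⁻¹ by rw [← besselG_zero]; simp [gBes]] at this
  exact this.mono_left nhdsWithin_le_nhds

/-! ### The Bessel system and its Wronskian -/

/-- Solutions of `A' = xB`, `xB' = -(A + (2a+1)B)`: the first-order system that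
`x^{-ν+1} Z_{ν-1}(x)` and `x^{-ν} Z_ν(x)` satisfy up to constant factors for cylinder functions `Z` of
order `ν = a + 1/2`. -/
def IsBesselPair (a : ℂ) (A B : ℝ → ℂ) : Prop :=
  (∀ x : ℝ, 0 < x → HasDerivAt A (x * B x) x) ∧
    ∀ x : ℝ, 0 < x → HasDerivAt B (-(A x + (2 * a + 1) * B x) / x) x

/-- The rescaled Wronskian of two Bessel pairs is constant. -/
theorem IsBesselPair.wronskian_eq {a c : ℂ} {A₁ B₁ A₂ B₂ : ℝ → ℂ} (h₁ : IsBesselPair a A₁ B₁)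
    (h₂ : IsBesselPair a A₂ B₂)
    (hl : Tendsto (fun x : ℝ => (x : ℂ) ^ (2 * a + 1) * (A₁ x * B₂ x - A₂ x * B₁ x)) (𝓝[>] 0) (𝓝 c))
    {x : ℝ} (hx : 0 < x) : (x : ℂ) ^ (2 * a + 1) * (A₁ x * B₂ x - A₂ x * B₁ x) = c := by
  refine eq_of_hasDerivAt_zero_of_tendsto
    (D := fun x : ℝ => (x : ℂ) ^ (2 * a + 1) * (A₁ x * B₂ x - A₂ x * B₁ x)) ?_ hl hx
  intro y hy
  have hy0 : (y : ℂ) ≠ 0 := ofReal_ne_zero.2 hy.ne'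
  have := (hasDerivAt_cpow_real (2 * a + 1) hy).mul
    (((h₁.1 y hy).mul (h₂.2 y hy)).sub ((h₂.1 y hy).mul (h₁.2 y hy)))
  convert! this using 1
  simp only [Pi.sub_apply, Pi.mul_apply]
  rw [show (2 * a + 1 - 1 : ℂ) = 2 * a by ring, cpow_add _ _ hy0, cpow_one]
  field_simp
  ring

/-- The pair coming from the Bessel function `J_{a+1/2}`. -/
theorem pairJ (a : ℂ) :
    IsBesselPair a (gBes (a - 1 / 2)) (fun x => -(1 / 2) * gBes (a + 1 / 2) x) := by
  refine ⟨fun x hx => ?_, fun x hx => ?_⟩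
  · have := gBes_hasDerivAt (a - 1 / 2) x
    rw [show a - 1 / 2 + 1 = a + 1 / 2 by ring] at this
    convert! this using 1; ring
  · have hx0 : (x : ℂ) ≠ 0 := ofReal_ne_zero.2 hx.ne'
    have := (gBes_hasDerivAt (a + 1 / 2) x).const_mul (-(1 / 2) : ℂ)
    convert! this using 1
    have hr := gBes_rec (a + 1 / 2) x
    rw [show a + 1 / 2 - 1 = a - 1 / 2 by ring] at hr
    rw [hr]
    field_simp
    ring

theorem half_cpow_hasDerivAt (w : ℂ) {x : ℝ} (hx : 0 < x) :
    HasDerivAt (fun x : ℝ => ((x / 2 : ℝ) : ℂ) ^ w) (w / 2 * ((x / 2 : ℝ) : ℂ) ^ (w - 1)) x := by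
  have h1 := hasDerivAt_cpow_real w (x := x / 2) (by positivity)
  have h2 : HasDerivAt (fun x : ℝ => x / 2) (1 / 2) x := (hasDerivAt_id x).div_const 2
  have := HasDerivAt.scomp x h1 h2
  convert! this using 1
  rw [real_smul]; push_cast; ring

/-- The pair coming from the Bessel function `J_{-a-1/2}`. -/
theorem pairF (a : ℂ) :
    IsBesselPair a (fun x => ((x / 2 : ℝ) : ℂ) ^ (1 - 2 * a) * gBes (1 / 2 - a) x)
      (fun x => 1 / 2 * (((x / 2 : ℝ) : ℂ) ^ (-2 * a - 1) * gBes (-1 / 2 - a) x)) := by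
  refine ⟨fun x hx => ?_, fun x hx => ?_⟩
  · have hx0 : (x : ℂ) ≠ 0 := ofReal_ne_zero.2 hx.ne'
    have hx2 : ((x / 2 : ℝ) : ℂ) ≠ 0 := ofReal_ne_zero.2 (by positivity)
    have := (half_cpow_hasDerivAt (1 - 2 * a) hx).mul (gBes_hasDerivAt (1 / 2 - a) x)
    convert! this using 1
    beta_reduce
    have hr := gBes_rec (1 / 2 - a) x
    rw [show 1 / 2 - a - 1 = -1 / 2 - a by ring] at hr
    rw [hr, show 1 - 2 * a - 1 = (-2 * a - 1) + 1 by ring, show 1 - 2 * a = (-2 * a - 1) + 2 by ring,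
      cpow_add _ _ hx2, cpow_add _ _ hx2, cpow_one, cpow_ofNat]
    push_cast
    ring
  · have hx0 : (x : ℂ) ≠ 0 := ofReal_ne_zero.2 hx.ne'
    have hx2 : ((x / 2 : ℝ) : ℂ) ≠ 0 := ofReal_ne_zero.2 (by positivity)
    have := ((half_cpow_hasDerivAt (-2 * a - 1) hx).mul
      (gBes_hasDerivAt (-1 / 2 - a) x)).const_mul (1 / 2 : ℂ)
    convert! this using 1
    beta_reduce
    rw [show -1 / 2 - a + 1 = 1 / 2 - a by ring,
      show 1 - 2 * a = (-2 * a - 1 - 1) + 3 by ring,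
      show ((x / 2 : ℝ) : ℂ) ^ (-2 * a - 1) = ((x / 2 : ℝ) : ℂ) ^ ((-2 * a - 1 - 1) + 1) by ring_nf,
      cpow_add _ _ hx2, cpow_add _ _ hx2, cpow_one, cpow_ofNat]
    push_cast
    field_simp
    ring

theorem kInt_two_hasDerivAt {ω : ℂ} (h : IsUnitI ω) {p q : ℂ} (hp : -1 < p.re) (hq : q.re ≤ 1)
    {x : ℝ} (hx : 0 < x) :
    HasDerivAt (fun x : ℝ => cexp (ω * x) * kInt p q ω ((2 * x : ℝ) : ℂ))
      (cexp (ω * x) * (ω * kInt p q ω ((2 * x : ℝ) : ℂ) - 2 * kInt (p + 1) q ω ((2 * x : ℝ) : ℂ)))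
      x := by
  have hz : 0 < ((2 * x : ℝ) : ℂ).re := by rw [ofReal_re]; positivity
  have h1 : HasDerivAt (fun z : ℂ => 2 * z) 2 (x : ℂ) := by
    simpa using (hasDerivAt_id (x : ℂ)).const_mul (2 : ℂ)
  have h2 : HasDerivAt (fun z : ℂ => kInt p q ω (2 * z)) (-kInt (p + 1) q ω (2 * (x : ℂ)) * 2) x := by
    have := kInt_hasDerivAt h hp hq hz
    push_cast at this
    exact HasDerivAt.comp (x : ℂ) this h1
  have h3 : HasDerivAt (fun z : ℂ => cexp (ω * z)) (cexp (ω * x) * (ω * 1)) (x : ℂ) :=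
    ((hasDerivAt_id (x : ℂ)).const_mul ω).cexp
  have := (h3.mul h2).comp_ofReal
  convert! this using 1
  · funext y; simp
  · push_cast; ring

/-- Three relations among the integrals `kInt p q ω (2x)`, from integration by parts and contiguity. They
are what `pairU` and its Wronskian with `pairF` rest on. -/
theorem kInt_rel {ω a : ℂ} (h : IsUnitI ω) (ha0 : 0 < a.re) (ha1 : a.re < 1) {x : ℝ} (hx : 0 < x) :
    a * (kInt (a - 1) (a - 1) ω ((2 * x : ℝ) : ℂ) + 2 * ω * kInt a (a - 1) ω ((2 * x : ℝ) : ℂ)) =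
        2 * x * kInt a a ω ((2 * x : ℝ) : ℂ) ∧
      2 * x * kInt (a + 1) a ω ((2 * x : ℝ) : ℂ) =
        (2 * a + 1) * kInt a a ω ((2 * x : ℝ) : ℂ) - a * kInt a (a - 1) ω ((2 * x : ℝ) : ℂ) ∧
      2 * x * kInt a (a - 1) ω ((2 * x : ℝ) : ℂ) =
        (2 * a - 1) * kInt (a - 1) (a - 1) ω ((2 * x : ℝ) : ℂ)
          + (1 - a) * kInt (a - 1) (a - 2) ω ((2 * x : ℝ) : ℂ) := by
  have hx2 : 0 < 2 * x := by positivity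
  have hz : 0 < ((2 * x : ℝ) : ℂ).re := by rw [ofReal_re]; positivity
  have b1 := kInt_ibp h (p := a) (q := a) ha0 ha1.le hx2
  have c1 := kInt_contig h (p := a - 1) (q := a - 1) (z := ((2 * x : ℝ) : ℂ)) (by simp; linarith)
    (by simp; linarith) hz
  have b2 := kInt_ibp h (p := a + 1) (q := a) (by simp; linarith) ha1.le hx2
  have c2 := kInt_contig h (p := a) (q := a - 1) (z := ((2 * x : ℝ) : ℂ)) (by linarith)
    (by simp; linarith) hz
  have b3 := kInt_ibp h (p := a) (q := a - 1) ha0 (by simp; linarith) hx2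
  have c3 := kInt_contig h (p := a - 1) (q := a - 2) (z := ((2 * x : ℝ) : ℂ)) (by simp; linarith)
    (by simp; linarith) hz
  rw [show a - 1 + 1 = a by ring] at c1 c2
  rw [show a + 1 - 1 = a by ring] at b2
  rw [show a - 1 - 1 = a - 2 by ring] at b3
  rw [show a - 1 + 1 = a by ring, show a - 2 + 1 = a - 1 by ring] at c3
  have e : ((2 * x : ℝ) : ℂ) = 2 * (x : ℂ) := by push_cast; rfl
  rw [e] at b1 c1 b2 c2 b3 c3 ⊢
  refine ⟨?_, ?_, ?_⟩
  · linear_combination b1 - a * c1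
  · linear_combination -b2 - a * c2
  · linear_combination -b3 - (a - 1) * c3

/-- The pair given by Laplace integrals, one for each `ω = ±I` (Hankel functions in classical terms). -/
theorem pairU {ω a : ℂ} (h : IsUnitI ω) (ha0 : 0 < a.re) (ha1 : a.re < 1) :
    IsBesselPair a (fun x => cexp (ω * x) * kInt (a - 1) (a - 1) ω ((2 * x : ℝ) : ℂ))
      (fun x => 2 * ω / a * (cexp (ω * x) * kInt a a ω ((2 * x : ℝ) : ℂ))) := by
  have ha : a ≠ 0 := fun h => by rw [h] at ha0; simp at ha0
  refine ⟨fun x hx => ?_, fun x hx => ?_⟩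
  · have := kInt_two_hasDerivAt h (p := a - 1) (q := a - 1) (by simp; linarith) (by simp; linarith) hx
    rw [show a - 1 + 1 = a by ring] at this
    convert! this using 1
    obtain ⟨r1, r2, r3⟩ := kInt_rel h ha0 ha1 hx
    field_simp
    linear_combination -ω * r1 + 2 * a * kInt a (a - 1) ω ((2 * x : ℝ) : ℂ) * h.sq
  · have hx0 : (x : ℂ) ≠ 0 := ofReal_ne_zero.2 hx.ne'
    have := (kInt_two_hasDerivAt h (p := a) (q := a) (by linarith) ha1.le hx).const_mul (2 * ω / a)
    convert! this using 1
    obtain ⟨r1, r2, r3⟩ := kInt_rel h ha0 ha1 hx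
    field_simp
    linear_combination -r1 + 2 * ω * r2 - 2 * x * kInt a a ω ((2 * x : ℝ) : ℂ) * h.sq

/-! ### Behaviour of the Laplace integrals at the origin -/

theorem IsUnitI.norm_cexp {ω : ℂ} (h : IsUnitI ω) (x : ℝ) : ‖cexp (ω * x)‖ = 1 := by
  rw [Complex.norm_exp]
  simp [h.re]

theorem IsUnitI.add_mul_norm_le {ω : ℂ} (h : IsUnitI ω) {x r : ℝ} (hx : 0 ≤ x) (hr : 0 ≤ r) :
    ‖(x : ℂ) + ω * r‖ ≤ x + r := by
  refine (norm_add_le _ _).trans ?_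
  rw [norm_mul, h.norm, norm_real, norm_real, Real.norm_of_nonneg hx, Real.norm_of_nonneg hr, one_mul]

theorem IsUnitI.le_norm_add_mul {ω : ℂ} (h : IsUnitI ω) (x r : ℝ) :
    r ≤ ‖(x : ℂ) + ω * r‖ := by
  rcases h with rfl | rfl
  · have := abs_im_le_norm ((x : ℂ) + I * r)
    simp only [add_im, ofReal_im, mul_im, I_re, I_im, ofReal_re] at this
    refine (le_abs_self r).trans ?_
    simpa using this
  · have := abs_im_le_norm ((x : ℂ) + -I * r)
    simp only [add_im, ofReal_im, mul_im, neg_re, neg_im, I_re, I_im, ofReal_re] at this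
    refine (le_abs_self r).trans ?_
    simpa using this

theorem IsUnitI.mul_mem {ω : ℂ} (h : IsUnitI ω) {r : ℝ} (hr : 0 < r) : ω * r ∈ slitPlane := by
  rcases h with rfl | rfl <;> rw [mem_slitPlane_iff] <;> right <;> simp [hr.ne']

theorem IsUnitI.cpow_tendsto {ω : ℂ} (h : IsUnitI ω) {r : ℝ} (hr : 0 < r) (q : ℂ) (c : ℝ) :
    Tendsto (fun x : ℝ => (((c * x : ℝ) : ℂ) + ω * r) ^ q) (𝓝[>] 0) (𝓝 (ω ^ q * (r : ℂ) ^ q)) := by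
  have h1 : ContinuousAt (fun x : ℝ => (((c * x : ℝ) : ℂ) + ω * r) ^ q) 0 :=
    ContinuousAt.cpow (by fun_prop) continuousAt_const (by simpa using h.mul_mem hr)
  have h2 := h1.tendsto
  simp only [mul_zero, ofReal_zero, zero_add] at h2
  rw [h.mul_cpow (by simpa using hr)] at h2
  exact h2.mono_left nhdsWithin_le_nhds

/-- The first component of `pairU` grows at most like `x^{-Re a}` at `0`, hence is killed by any higher
power of `x`. -/
theorem uA_tendsto_zero {ω a : ℂ} (h : IsUnitI ω) (ha0 : 0 < a.re) (ha1 : a.re < 1) {b : ℂ}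
    (hb : a.re < b.re) :
    Tendsto (fun x : ℝ => (x : ℂ) ^ b *
      (cexp (ω * x) * kInt (a - 1) (a - 1) ω ((2 * x : ℝ) : ℂ))) (𝓝[>] 0) (𝓝 0) := by
  have hbd : ∀ᶠ x : ℝ in 𝓝[>] 0, ‖(x : ℂ) ^ b *
      (cexp (ω * x) * kInt (a - 1) (a - 1) ω ((2 * x : ℝ) : ℂ))‖ ≤
      Real.exp (Real.pi * |(a - 1).im|) * Real.Gamma a.re * 2 ^ (-a.re) * x ^ (b.re - a.re) := by
    filter_upwards [self_mem_nhdsWithin] with x hx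
    have hx0 : (0 : ℝ) < x := hx
    rw [norm_mul, norm_mul, h.norm_cexp, one_mul, norm_cpow_eq_rpow_re_of_pos hx0]
    have hK : ‖kInt (a - 1) (a - 1) ω ((2 * x : ℝ) : ℂ)‖ ≤
        Real.exp (Real.pi * |(a - 1).im|) * ((1 / (2 * x)) ^ a.re * Real.Gamma a.re) := by
      rw [← Real.integral_rpow_mul_exp_neg_mul_Ioi ha0 (by positivity), ← integral_const_mul]
      have hi := (rpow_exp_integrable (b := a.re - 1) (c := 2 * x) (by linarith)
        (by positivity)).const_mul (Real.exp (Real.pi * |(a - 1).im|))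
      refine norm_integral_le_of_norm_le hi ?_
      refine (ae_restrict_iff' measurableSet_Ioi).2 (ae_of_all _ fun t ht => ?_)
      have ht0 : (0 : ℝ) < t := ht
      have e : kDens (a - 1) (a - 1) ω t * cexp (-(((2 * x : ℝ) : ℂ) * t)) =
        (1 + ω * t) ^ (a - 1) * ((t : ℂ) ^ (a - 1) * cexp (-(((2 * x : ℝ) : ℂ) * t))) := by
          rw [kDens]; ring
      rw [e, norm_mul, norm_cpow_mul_exp _ _ ht0, sub_re, one_re]
      have := h.cpow_bound' (q := a - 1) (by simp; linarith) t
      gcongr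
    calc x ^ b.re * _ ≤ x ^ b.re * _ := mul_le_mul_of_nonneg_left hK (by positivity)
      _ = _ := by
        rw [one_div, Real.inv_rpow (by positivity), ← Real.rpow_neg (by positivity),
          Real.mul_rpow (by norm_num) hx0.le, sub_eq_add_neg b.re, Real.rpow_add hx0]
        ring
  refine squeeze_zero_norm' hbd ?_
  have h1 : Tendsto (fun x : ℝ => x ^ (b.re - a.re)) (𝓝[>] 0) (𝓝 0) := by
    have := (Real.continuousAt_rpow_const 0 (b.re - a.re) (Or.inr (by linarith))).tendsto
    rw [Real.zero_rpow (by linarith)] at this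
    exact this.mono_left nhdsWithin_le_nhds
  simpa using h1.const_mul (Real.exp (Real.pi * |(a - 1).im|) * Real.Gamma a.re * 2 ^ (-a.re))

/-- The substitution `r = xt`, after which the integral has a limit as `x → 0⁺`. -/
theorem kInt_scale {ω a : ℂ} {x : ℝ} (hx : 0 < x) :
    (x : ℂ) ^ (2 * a + 1) * kInt a a ω ((2 * x : ℝ) : ℂ) =
      ∫ r in Ioi (0 : ℝ), (r : ℂ) ^ a * ((x : ℂ) + ω * r) ^ a * cexp (-(2 * r)) := by
  have hx0 : (x : ℂ) ≠ 0 := ofReal_ne_zero.2 hx.ne'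
  have e := integral_comp_mul_left_Ioi'
    (fun r : ℝ => (r : ℂ) ^ a * ((x : ℂ) + ω * r) ^ a * cexp (-(2 * r))) 0 hx
  rw [mul_zero] at e
  rw [← e, kInt, real_smul, ← integral_const_mul, ← integral_const_mul]
  refine setIntegral_congr_fun measurableSet_Ioi fun t ht => ?_
  have ht0 : (0 : ℝ) < t := ht
  simp only [kDens]
  have e1 : (x : ℂ) + ω * ((x * t : ℝ) : ℂ) = x * (1 + ω * t) := by push_cast; ring
  rw [e1, ofReal_mul x t, ofReal_mul_cpow hx, ofReal_mul_cpow hx, cpow_add _ _ hx0, cpow_one,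
    show 2 * a = a + a by ring, cpow_add _ _ hx0]
  push_cast
  ring_nf

/-- The leading behaviour at `0` of the second component of `pairU`. -/
theorem uB_tendsto {ω a : ℂ} (h : IsUnitI ω) (ha0 : 0 < a.re) (ha1 : a.re < 1) :
    Tendsto (fun x : ℝ => (x : ℂ) ^ (2 * a + 1) * kInt a a ω ((2 * x : ℝ) : ℂ)) (𝓝[>] 0)
      (𝓝 (ω ^ a * (2 ^ (-(2 * a + 1)) * Gamma (2 * a + 1)))) := by
  have hlim : ω ^ a * (2 ^ (-(2 * a + 1)) * Gamma (2 * a + 1)) =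
      ∫ r in Ioi (0 : ℝ), (r : ℂ) ^ a * (ω ^ a * (r : ℂ) ^ a) * cexp (-(2 * r)) := by
    have := gamma_laplace (a := 2 * a + 1) (r := 2) (by simp; linarith) (by norm_num)
    rw [← this, ← integral_const_mul]
    refine setIntegral_congr_fun measurableSet_Ioi fun t ht => ?_
    have ht0 : (t : ℂ) ≠ 0 := ofReal_ne_zero.2 (ne_of_gt ht)
    rw [show 2 * a + 1 - 1 = a + a by ring, cpow_add _ _ ht0]; ring
  rw [hlim]
  have key : Tendsto (fun x : ℝ => ∫ r in Ioi (0 : ℝ),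
      (r : ℂ) ^ a * ((x : ℂ) + ω * r) ^ a * cexp (-(2 * r))) (𝓝[>] 0)
      (𝓝 (∫ r in Ioi (0 : ℝ), (r : ℂ) ^ a * (ω ^ a * (r : ℂ) ^ a) * cexp (-(2 * r)))) := by
    refine tendsto_integral_filter_of_dominated_convergence
      (fun r => Real.exp (Real.pi * |a.im|) * (r ^ a.re * Real.exp (-(2 * r)) +
        r ^ (a.re + 1) * Real.exp (-(2 * r)))) ?_ ?_ ?_ ?_
    · filter_upwards [self_mem_nhdsWithin] with x hx
      have hx0 : (0 : ℝ) < x := hx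
      refine ContinuousOn.aestronglyMeasurable (fun t ht => ContinuousAt.continuousWithinAt ?_)
        measurableSet_Ioi
      refine ContinuousAt.mul (ContinuousAt.mul
        (continuousAt_ofReal_cpow_const _ _ (Or.inr (ne_of_gt ht))) ?_) (by fun_prop)
      refine ContinuousAt.cpow (by fun_prop) continuousAt_const ?_
      rw [mem_slitPlane_iff]; left
      simpa [h.re] using hx0
    · have h1 : ∀ᶠ x : ℝ in 𝓝[>] 0, x < 1 := mem_nhdsWithin_of_mem_nhds (Iio_mem_nhds one_pos)
      filter_upwards [self_mem_nhdsWithin, h1] with x hx hx1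
      have hx0 : (0 : ℝ) < x := hx
      refine (ae_restrict_iff' measurableSet_Ioi).2 (ae_of_all _ fun t ht => ?_)
      have ht0 : (0 : ℝ) < t := ht
      have e : (t : ℂ) ^ a * ((x : ℂ) + ω * t) ^ a * cexp (-(2 * t)) =
        ((x : ℂ) + ω * t) ^ a * ((t : ℂ) ^ a * cexp (-(((2 : ℝ) : ℂ) * t))) := by push_cast; ring
      have hb : ‖((x : ℂ) + ω * t) ^ a‖ ≤ Real.exp (Real.pi * |a.im|) * (1 + t) := by
        refine (norm_cpow_le_exp_mul _ _).trans ?_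
        refine mul_le_mul_of_nonneg_left ?_ (Real.exp_pos _).le
        calc ‖(x : ℂ) + ω * t‖ ^ a.re ≤ (1 + t) ^ a.re := by
              refine Real.rpow_le_rpow (norm_nonneg _) ?_ ha0.le
              exact (h.add_mul_norm_le hx0.le ht0.le).trans (by linarith)
          _ ≤ (1 + t) ^ (1 : ℝ) := Real.rpow_le_rpow_of_exponent_le (by linarith) ha1.le
          _ = 1 + t := Real.rpow_one _
      rw [e, norm_mul, norm_cpow_mul_exp _ _ ht0]
      calc _ ≤ Real.exp (Real.pi * |a.im|) * (1 + t) * (t ^ a.re * Real.exp (-(2 * t))) :=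
            mul_le_mul_of_nonneg_right hb (by positivity)
        _ = _ := by rw [Real.rpow_add_one ht0.ne']; ring
    · exact ((rpow_exp_integrable (b := a.re) (by linarith) two_pos).add
        (rpow_exp_integrable (b := a.re + 1) (by linarith) two_pos)).const_mul _
    · refine (ae_restrict_iff' measurableSet_Ioi).2 (ae_of_all _ fun t ht => ?_)
      have := h.cpow_tendsto ht a 1
      simp only [one_mul] at this
      exact (this.const_mul _).mul_const _
  refine key.congr' ?_
  filter_upwards [self_mem_nhdsWithin] with x hx
  exact (kInt_scale hx).symm

/-- Inserting the Gamma integral for `(1+ωt)^{a-2}` and exchanging the two integrations. -/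
theorem kInt_swap {ω a : ℂ} (h : IsUnitI ω) (ha0 : 0 < a.re) (ha1 : a.re < 1) {x : ℝ} (hx : 0 < x) :
    Gamma (2 - a) * kInt (a - 1) (a - 2) ω (x : ℂ) =
      Gamma a * ∫ r in Ioi (0 : ℝ), (r : ℂ) ^ (1 - a) * cexp (-r) * ((x : ℂ) + ω * r) ^ (-a) := by
  let F : ℝ → ℝ → ℂ := fun t r => ((t : ℂ) ^ (a - 1) * cexp (-((x : ℂ) * t))) *
    ((r : ℂ) ^ (1 - a) * cexp (-(((1 : ℝ) : ℂ) * r))) * cexp (-(ω * t * r))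
  have hF : Integrable (Function.uncurry F)
      ((volume.restrict (Ioi (0 : ℝ))).prod (volume.restrict (Ioi (0 : ℝ)))) := by
    have i1 : IntegrableOn (fun t : ℝ => (t : ℂ) ^ (a - 1) * cexp (-((x : ℂ) * t))) (Ioi 0) :=
      cpow_exp_integrable (by simp; linarith) x hx
    have i2 : IntegrableOn (fun t : ℝ => (t : ℂ) ^ (1 - a) * cexp (-(((1 : ℝ) : ℂ) * t))) (Ioi 0) :=
      cpow_exp_integrable (by simp; linarith) 1 one_pos
    have i3 := Integrable.mul_prod i1 i2
    refine Integrable.mono i3 ?_ ?_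
    · refine i3.aestronglyMeasurable.mul (Continuous.aestronglyMeasurable ?_)
      fun_prop
    · refine ae_of_all _ fun z => ?_
      simp only [Function.uncurry, F, norm_mul]
      have : ‖cexp (-(ω * (z.1 : ℂ) * (z.2 : ℂ)))‖ = 1 := by
        have := h.norm_cexp (-(z.1 * z.2))
        rw [← this]; congr 2; push_cast; ring
      rw [this, mul_one]
  have e1 : Gamma (2 - a) * kInt (a - 1) (a - 2) ω (x : ℂ) =
      ∫ t in Ioi (0 : ℝ), ∫ r in Ioi (0 : ℝ), F t r := by
    rw [kInt, ← integral_const_mul]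
    refine setIntegral_congr_fun measurableSet_Ioi fun t ht => ?_
    have hg := gamma_laplace (a := 2 - a) (r := 1 + ω * t) (by simp; linarith)
      (by rw [h.one_add_re]; exact one_pos)
    simp only [F, kDens, mul_assoc]
    rw [show a - 2 = -(2 - a) by ring, mul_left_comm, ← mul_assoc (Gamma (2 - a)),
      mul_comm (Gamma (2 - a)), ← hg, integral_const_mul, integral_const_mul, mul_comm _ (cexp _)]
    congr 2
    refine setIntegral_congr_fun measurableSet_Ioi fun r hr => ?_
    rw [← Complex.exp_add, show 2 - a - 1 = 1 - a by ring]
    push_cast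
    ring_nf
  rw [e1, integral_integral_swap hF, ← integral_const_mul]
  refine setIntegral_congr_fun measurableSet_Ioi fun r hr => ?_
  have hg := gamma_laplace (a := a) (r := (x : ℂ) + ω * r) ha0 (by simpa [h.re] using hx)
  rw [show Gamma a * ((r : ℂ) ^ (1 - a) * cexp (-r) * ((x : ℂ) + ω * r) ^ (-a)) =
    (r : ℂ) ^ (1 - a) * cexp (-r) * (((x : ℂ) + ω * r) ^ (-a) * Gamma a) by ring, ← hg,
    ← integral_const_mul]
  refine setIntegral_congr_fun measurableSet_Ioi fun t ht => ?_
  simp only [F]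
  rw [show -(((x : ℂ) + ω * r) * t) = -((x : ℂ) * t) + -(ω * t * r) by ring, Complex.exp_add]
  push_cast
  ring_nf

/-- The limit at `0⁺` of the right-hand side of `kInt_swap`, taken at `2x`. -/
theorem kInt_swap_tendsto {ω a : ℂ} (h : IsUnitI ω) (ha0 : 0 < a.re) (ha1 : a.re < 1) :
    Tendsto (fun x : ℝ => Gamma (2 - a) * kInt (a - 1) (a - 2) ω ((2 * x : ℝ) : ℂ)) (𝓝[>] 0)
      (𝓝 (Gamma a * (ω ^ (-a) * Gamma (2 - 2 * a)))) := by
  have hlim : ω ^ (-a) * Gamma (2 - 2 * a) =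
      ∫ r in Ioi (0 : ℝ), (r : ℂ) ^ (1 - a) * cexp (-r) * (ω ^ (-a) * (r : ℂ) ^ (-a)) := by
    have := gamma_laplace (a := 2 - 2 * a) (r := 1) (by simp; linarith) (by norm_num)
    rw [one_cpow, one_mul] at this
    rw [← this, ← integral_const_mul]
    refine setIntegral_congr_fun measurableSet_Ioi fun t ht => ?_
    have ht0 : (t : ℂ) ≠ 0 := ofReal_ne_zero.2 (ne_of_gt ht)
    rw [show 2 - 2 * a - 1 = (1 - a) + (-a) by ring, cpow_add _ _ ht0, one_mul]; ring
  rw [hlim]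
  have key : Tendsto (fun x : ℝ => ∫ r in Ioi (0 : ℝ),
      (r : ℂ) ^ (1 - a) * cexp (-r) * (((2 * x : ℝ) : ℂ) + ω * r) ^ (-a)) (𝓝[>] 0)
      (𝓝 (∫ r in Ioi (0 : ℝ), (r : ℂ) ^ (1 - a) * cexp (-r) * (ω ^ (-a) * (r : ℂ) ^ (-a)))) := by
    refine tendsto_integral_filter_of_dominated_convergence
      (fun r => Real.exp (Real.pi * |(-a).im|) * (r ^ (1 - 2 * a.re) * Real.exp (-(1 * r)))) ?_ ?_ ?_ ?_
    · filter_upwards [self_mem_nhdsWithin] with x hx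
      have hx0 : (0 : ℝ) < x := hx
      refine ContinuousOn.aestronglyMeasurable (fun t ht => ContinuousAt.continuousWithinAt ?_)
        measurableSet_Ioi
      refine ContinuousAt.mul (ContinuousAt.mul
        (continuousAt_ofReal_cpow_const _ _ (Or.inr (ne_of_gt ht))) (by fun_prop)) ?_
      refine ContinuousAt.cpow (by fun_prop) continuousAt_const ?_
      rw [mem_slitPlane_iff]; left
      simpa [h.re] using hx0
    · filter_upwards [self_mem_nhdsWithin] with x hx
      have hx0 : (0 : ℝ) < x := hx
      refine (ae_restrict_iff' measurableSet_Ioi).2 (ae_of_all _ fun t ht => ?_)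
      have ht0 : (0 : ℝ) < t := ht
      have e : (t : ℂ) ^ (1 - a) * cexp (-t) * (((2 * x : ℝ) : ℂ) + ω * t) ^ (-a) =
        (((2 * x : ℝ) : ℂ) + ω * t) ^ (-a) * ((t : ℂ) ^ (1 - a) * cexp (-(((1 : ℝ) : ℂ) * t))) := by
          push_cast; ring_nf
      have hb := norm_cpow_le_of_le_norm ht0 (h.le_norm_add_mul (2 * x) t) (q := -a)
        (by simp; linarith)
      rw [e, norm_mul, norm_cpow_mul_exp _ _ ht0]
      calc _ ≤ _ := mul_le_mul_of_nonneg_right hb (by positivity)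
        _ = _ := by
          rw [show 1 - 2 * a.re = (-a).re + (1 - a).re by simp; ring, Real.rpow_add ht0]; ring
    · exact (rpow_exp_integrable (b := 1 - 2 * a.re) (by linarith) one_pos).const_mul _
    · refine (ae_restrict_iff' measurableSet_Ioi).2 (ae_of_all _ fun t ht => ?_)
      exact (h.cpow_tendsto ht (-a) 2).const_mul _
  refine (key.const_mul (Gamma a)).congr' ?_
  filter_upwards [self_mem_nhdsWithin] with x hx
  have hx0 : (0 : ℝ) < x := hx
  exact (kInt_swap h ha0 ha1 (x := 2 * x) (by positivity)).symm

/-! ### Wronskians and the connection formula -/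

theorem cpow_eq_two_mul_half (q : ℂ) (x : ℝ) :
    (x : ℂ) ^ q = 2 ^ q * ((x / 2 : ℝ) : ℂ) ^ q := by
  have := ofReal_mul_cpow (x := 2) two_pos ((x / 2 : ℝ) : ℂ) q
  rw [ofReal_ofNat] at this
  rw [← this]; congr 1; push_cast; ring

theorem sq_tendsto_zero : Tendsto (fun x : ℝ => (x : ℂ) ^ 2) (𝓝[>] 0) (𝓝 0) := by
  have : ContinuousAt (fun x : ℝ => (x : ℂ) ^ 2) 0 := by fun_prop
  have := this.tendsto
  simp only [ofReal_zero, ne_eq, OfNat.ofNat_ne_zero, not_false_eq_true, zero_pow] at this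
  exact this.mono_left nhdsWithin_le_nhds

theorem weighted_A (a : ℂ) {x : ℝ} (hx : 0 < x) :
    (x : ℂ) ^ (2 * a + 1) * (((x / 2 : ℝ) : ℂ) ^ (1 - 2 * a)) = 2 ^ (2 * a) / 2 * (x : ℂ) ^ 2 := by
  have hx2 : ((x / 2 : ℝ) : ℂ) ≠ 0 := ofReal_ne_zero.2 (by positivity)
  rw [cpow_eq_two_mul_half, mul_assoc, ← cpow_add _ _ hx2,
    show 2 * a + 1 + (1 - 2 * a) = 2 by ring, cpow_ofNat, cpow_add _ _ two_ne_zero, cpow_one]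
  push_cast; ring

theorem weighted_B (a : ℂ) {x : ℝ} (hx : 0 < x) :
    (x : ℂ) ^ (2 * a + 1) * (((x / 2 : ℝ) : ℂ) ^ (-2 * a - 1)) = 2 * 2 ^ (2 * a) := by
  have hx2 : ((x / 2 : ℝ) : ℂ) ≠ 0 := ofReal_ne_zero.2 (by positivity)
  rw [cpow_eq_two_mul_half, mul_assoc, ← cpow_add _ _ hx2,
    show 2 * a + 1 + (-2 * a - 1) = 0 by ring, cpow_zero, cpow_add _ _ two_ne_zero, cpow_one]
  ring

/-- The Wronskian of `pairJ` and `pairF`, evaluated as `x → 0⁺`. -/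
theorem wronskian_JF (a : ℂ) {x : ℝ} (hx : 0 < x) :
    (x : ℂ) ^ (2 * a + 1) * (gBes (a - 1 / 2) x *
        (1 / 2 * (((x / 2 : ℝ) : ℂ) ^ (-2 * a - 1) * gBes (-1 / 2 - a) x)) -
      ((x / 2 : ℝ) : ℂ) ^ (1 - 2 * a) * gBes (1 / 2 - a) x * (-(1 / 2) * gBes (a + 1 / 2) x)) =
    2 ^ (2 * a) * (cos (Real.pi * a) / Real.pi) := by
  refine (pairJ a).wronskian_eq (pairF a) ?_ hx
  have h1 : Tendsto (fun x : ℝ => 2 ^ (2 * a) * (gBes (a - 1 / 2) x * gBes (-1 / 2 - a) x) +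
      2 ^ (2 * a) / 4 * ((x : ℂ) ^ 2 * (gBes (1 / 2 - a) x * gBes (a + 1 / 2) x))) (𝓝[>] 0)
      (𝓝 (2 ^ (2 * a) * ((Gamma (1 + (a - 1 / 2)))⁻¹ * (Gamma (1 + (-1 / 2 - a)))⁻¹) +
        2 ^ (2 * a) / 4 * (0 * ((Gamma (1 + (1 / 2 - a)))⁻¹ * (Gamma (1 + (a + 1 / 2)))⁻¹)))) :=
    (((gBes_tendsto _).mul (gBes_tendsto _)).const_mul _).add
      ((sq_tendsto_zero.mul ((gBes_tendsto _).mul (gBes_tendsto _))).const_mul _)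
  have e : (Gamma (1 + (a - 1 / 2)))⁻¹ * (Gamma (1 + (-1 / 2 - a)))⁻¹ =
      cos (Real.pi * a) / Real.pi := by
    have := Complex.Gamma_mul_Gamma_one_sub (1 + (a - 1 / 2))
    rw [← mul_inv, show 1 + (-1 / 2 - a) = 1 - (1 + (a - 1 / 2)) by ring, this, inv_div,
      show (Real.pi : ℂ) * (1 + (a - 1 / 2)) = Real.pi * a + Real.pi / 2 by ring, sin_add_pi_div_two]
  rw [e, zero_mul, mul_zero, add_zero] at h1
  refine h1.congr' ?_
  filter_upwards [self_mem_nhdsWithin] with y hy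
  have hA := weighted_A a hy
  have hB := weighted_B a hy
  linear_combination (-1 / 2 * gBes (a - 1 / 2) y * gBes (-1 / 2 - a) y) * hB -
    (1 / 2 * gBes (1 / 2 - a) y * gBes (a + 1 / 2) y) * hA

theorem cexp_tendsto_one (ω : ℂ) : Tendsto (fun x : ℝ => cexp (ω * x)) (𝓝[>] 0) (𝓝 1) := by
  have : ContinuousAt (fun x : ℝ => cexp (ω * x)) 0 := by fun_prop
  have := this.tendsto
  simp only [ofReal_zero, mul_zero, Complex.exp_zero] at this
  exact this.mono_left nhdsWithin_le_nhds

theorem sqrt_pi_ne : ((Real.sqrt Real.pi : ℝ) : ℂ) ≠ 0 :=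
  ofReal_ne_zero.2 (Real.sqrt_pos.2 Real.pi_pos).ne'

/-- The Wronskian of `pairU` and `pairJ`, evaluated as `x → 0⁺`. -/
theorem wronskian_uJ {ω a : ℂ} (h : IsUnitI ω) (ha0 : 0 < a.re) (ha1 : a.re < 1)
    {x : ℝ} (hx : 0 < x) :
    (x : ℂ) ^ (2 * a + 1) * (cexp (ω * x) * kInt (a - 1) (a - 1) ω ((2 * x : ℝ) : ℂ) *
        (-(1 / 2) * gBes (a + 1 / 2) x) - gBes (a - 1 / 2) x *
        (2 * ω / a * (cexp (ω * x) * kInt a a ω ((2 * x : ℝ) : ℂ)))) =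
    -(ω ^ (a + 1) * (Gamma a / ((Real.sqrt Real.pi : ℝ) : ℂ))) := by
  have ha : a ≠ 0 := fun h => by rw [h] at ha0; simp at ha0
  refine (pairU h ha0 ha1).wronskian_eq (pairJ a) ?_ hx
  have h1 := ((uA_tendsto_zero h ha0 ha1 (b := 2 * a + 1) (by simp; linarith)).mul
      ((gBes_tendsto (a + 1 / 2)).const_mul (-(1 / 2)))).sub
    (((gBes_tendsto (a - 1 / 2)).mul ((cexp_tendsto_one ω).mul (uB_tendsto h ha0 ha1))).const_mul
      (2 * ω / a))
  have hG : Gamma (a + 1 / 2) ≠ 0 := Gamma_ne_zero_of_re_pos (by simp; linarith)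
  have h2 : (2 : ℂ) ^ (2 * a) ≠ 0 := by simp [cpow_eq_zero_iff]
  have e : 2 * ω / a * ((Gamma (1 + (a - 1 / 2)))⁻¹ *
      (1 * (ω ^ a * (2 ^ (-(2 * a + 1)) * Gamma (2 * a + 1))))) =
      ω ^ (a + 1) * (Gamma a / ((Real.sqrt Real.pi : ℝ) : ℂ)) := by
    have hd := Complex.Gamma_mul_Gamma_add_half a
    have hs := Complex.Gamma_add_one (2 * a) (mul_ne_zero two_ne_zero ha)
    have hp := sqrt_pi_ne
    rw [show 1 + (a - 1 / 2) = a + 1 / 2 by ring, hs, cpow_add _ _ h.ne_zero, cpow_one, cpow_neg,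
      cpow_add _ _ two_ne_zero, cpow_one]
    rw [sub_eq_add_neg, cpow_add _ _ two_ne_zero, cpow_one, cpow_neg] at hd
    generalize Gamma (a + 1 / 2) = G at *
    generalize Gamma (2 * a) = D at *
    generalize (2 : ℂ) ^ (2 * a) = T at *
    generalize ((Real.sqrt Real.pi : ℝ) : ℂ) = p at *
    have hD : D = Gamma a * G * T / (2 * p) := by
      rw [hd]; field_simp
    rw [hD]; field_simp
  rw [e, zero_mul, zero_sub] at h1
  refine h1.congr' ?_
  filter_upwards [self_mem_nhdsWithin] with y hy
  ring

/-- The Wronskian of `pairU` and `pairF`, evaluated as `x → 0⁺`. The two products need not have limits at `0`; the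
divergent parts cancel through `gBes_rec` and `kInt_rel` before the limit is taken. -/
theorem wronskian_uF {ω a : ℂ} (h : IsUnitI ω) (ha0 : 0 < a.re) (ha1 : a.re < 1)
    {x : ℝ} (hx : 0 < x) :
    (x : ℂ) ^ (2 * a + 1) * (cexp (ω * x) * kInt (a - 1) (a - 1) ω ((2 * x : ℝ) : ℂ) *
        (1 / 2 * (((x / 2 : ℝ) : ℂ) ^ (-2 * a - 1) * gBes (-1 / 2 - a) x)) -
        ((x / 2 : ℝ) : ℂ) ^ (1 - 2 * a) * gBes (1 / 2 - a) x *
        (2 * ω / a * (cexp (ω * x) * kInt a a ω ((2 * x : ℝ) : ℂ)))) =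
    ω ^ (-a) * (Gamma a / ((Real.sqrt Real.pi : ℝ) : ℂ)) := by
  have ha : a ≠ 0 := fun h => by rw [h] at ha0; simp at ha0
  have hG2 : Gamma (2 - a) ≠ 0 := Gamma_ne_zero_of_re_pos (by simp; linarith)
  refine (pairU h ha0 ha1).wronskian_eq (pairF a) ?_ hx
  have hA1 := uA_tendsto_zero h ha0 ha1 (b := 1) (by simpa using ha1)
  have hA2 := uA_tendsto_zero h ha0 ha1 (b := 2) (by simp; linarith)
  have h1 := (((gBes_tendsto (1 / 2 - a)).mul ((hA1.const_mul (-ω)).add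
      (((cexp_tendsto_one ω).mul (kInt_swap_tendsto h ha0 ha1)).const_mul
        ((1 - a) / Gamma (2 - a))))).const_mul (2 ^ (2 * a) / 2)).sub
    (((gBes_tendsto (3 / 2 - a)).mul hA2).const_mul (2 ^ (2 * a) / 4))
  have e : 2 ^ (2 * a) / 2 * ((Gamma (1 + (1 / 2 - a)))⁻¹ * (-ω * 0 +
      (1 - a) / Gamma (2 - a) * (1 * (Gamma a * (ω ^ (-a) * Gamma (2 - 2 * a)))))) -
      2 ^ (2 * a) / 4 * ((Gamma (1 + (3 / 2 - a)))⁻¹ * 0) =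
      ω ^ (-a) * (Gamma a / ((Real.sqrt Real.pi : ℝ) : ℂ)) := by
    have hd := Complex.Gamma_mul_Gamma_add_half (1 - a)
    have h1a : 1 - a ≠ 0 := fun h => by
      have := congrArg re h; simp at this; linarith
    have hs := Complex.Gamma_add_one (1 - a) h1a
    rw [show 1 - a + 1 = 2 - a by ring] at hs
    have hG1 : Gamma (1 - a) ≠ 0 := Gamma_ne_zero_of_re_pos (by simp; linarith)
    have hG3 : Gamma (1 - a + 1 / 2) ≠ 0 := Gamma_ne_zero_of_re_pos (by simp; linarith)
    have hp := sqrt_pi_ne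
    have h2 : (2 : ℂ) ^ (2 * a) ≠ 0 := by simp [cpow_eq_zero_iff]
    rw [show 1 + (1 / 2 - a) = 1 - a + 1 / 2 by ring, hs]
    rw [show 2 * (1 - a) = 2 - 2 * a by ring, show 1 - (2 - 2 * a) = 2 * a - 1 by ring,
      cpow_sub _ _ two_ne_zero, cpow_one] at hd
    generalize Gamma (1 - a + 1 / 2) = G at *
    generalize Gamma (2 - 2 * a) = D at *
    generalize (2 : ℂ) ^ (2 * a) = T at *
    generalize ((Real.sqrt Real.pi : ℝ) : ℂ) = p at *
    have hD : D = Gamma (1 - a) * G * 2 / (T * p) := by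
      rw [hd]; field_simp
    rw [hD]; field_simp
    ring
  rw [e] at h1
  refine h1.congr' ?_
  filter_upwards [self_mem_nhdsWithin] with y hy
  have hy0 : (0 : ℝ) < y := hy
  have wA := weighted_A a hy0
  have wB := weighted_B a hy0
  have hr := gBes_rec (1 / 2 - a) y
  rw [show 1 / 2 - a - 1 = -1 / 2 - a by ring, show 1 / 2 - a + 1 = 3 / 2 - a by ring] at hr
  obtain ⟨r1, r2, r3⟩ := kInt_rel h ha0 ha1 hy0
  have r1' : 2 * ω / a * (y * kInt a a ω ((2 * y : ℝ) : ℂ)) =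
      ω * kInt (a - 1) (a - 1) ω ((2 * y : ℝ) : ℂ) - 2 * kInt a (a - 1) ω ((2 * y : ℝ) : ℂ) := by
    field_simp
    linear_combination -ω * r1 + 2 * a * kInt a (a - 1) ω ((2 * y : ℝ) : ℂ) * h.sq
  have hc : (1 - a) / Gamma (2 - a) * (cexp (ω * y) * (Gamma (2 - a) *
      kInt (a - 1) (a - 2) ω ((2 * y : ℝ) : ℂ))) =
      cexp (ω * y) * ((1 - a) * kInt (a - 1) (a - 2) ω ((2 * y : ℝ) : ℂ)) := by
    field_simp
  rw [hc, cpow_one, cpow_ofNat]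
  set E := cexp (ω * y)
  set K1 := kInt (a - 1) (a - 1) ω ((2 * y : ℝ) : ℂ)
  set K2 := kInt a (a - 1) ω ((2 * y : ℝ) : ℂ)
  set K3 := kInt (a - 1) (a - 2) ω ((2 * y : ℝ) : ℂ)
  set K := kInt a a ω ((2 * y : ℝ) : ℂ)
  set g1 := gBes (1 / 2 - a) y
  set g3 := gBes (3 / 2 - a) y
  rw [hr]
  linear_combination (-E * K1 * (1 / 2) * ((1 / 2 - a) * g1 - (y / 2) ^ 2 * g3)) * wB
    + (g1 * (2 * ω / a) * E * K) * wA + 2 ^ (2 * a) / 2 * g1 * E * (y * r1' - r3)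

/-- The Laplace integral `kInt a a ω (2x)` in terms of the two power-series solutions: in the
two-dimensional solution space, the coefficients of `pairU` are quotients of Wronskians. -/
theorem kInt_eq_gBes {ω a : ℂ} (h : IsUnitI ω) (ha0 : 0 < a.re) (ha1 : a.re < 1)
    {x : ℝ} (hx : 0 < x) :
    2 ^ (2 * a) * (cos (Real.pi * a) / Real.pi) *
        (2 * ω / a * (cexp (ω * x) * kInt a a ω ((2 * x : ℝ) : ℂ))) =
      Gamma a / ((Real.sqrt Real.pi : ℝ) : ℂ) * (1 / 2) * (-ω ^ (-a) * gBes (a + 1 / 2) x +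
        ω ^ (a + 1) * (((x / 2 : ℝ) : ℂ) ^ (-2 * a - 1) * gBes (-1 / 2 - a) x)) := by
  rw [← wronskian_JF a hx]
  have h1 := wronskian_uJ h ha0 ha1 hx
  have h2 := wronskian_uF h ha0 ha1 hx
  linear_combination (-(1 / 2) * gBes (a + 1 / 2) x) * h2 -
    (1 / 2 * (((x / 2 : ℝ) : ℂ) ^ (-2 * a - 1) * gBes (-1 / 2 - a) x)) * h1

/-! ### Passage to the Bessel function of the second kind -/

theorem besselJ_eq (ν : ℂ) {x : ℝ} (hx : 0 < x) :
    besselJ ν x = ((x / 2 : ℝ) : ℂ) ^ ν * gBes ν x := by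
  have hx2 : ((x / 2 : ℝ) : ℂ) ≠ 0 := ofReal_ne_zero.2 (by positivity)
  rw [besselJ, gBes, besselG, ← tsum_mul_left]
  refine tsum_congr fun m => ?_
  rw [besselGTerm, cpow_add _ _ hx2, show (2 * (m : ℂ)) = ((2 * m : ℕ) : ℂ) by push_cast; rfl,
    cpow_natCast, pow_mul, neg_pow, ← ofReal_pow]
  rw [div_eq_mul_inv, mul_inv, div_eq_mul_inv]
  ring

theorem I_cpow_eq (q : ℂ) : I ^ q = cexp (Real.pi * q / 2 * I) := by
  rw [cpow_def_of_ne_zero I_ne_zero, log_I]; congr 1; ring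

theorem neg_I_cpow_eq (q : ℂ) : (-I) ^ q = cexp (-(Real.pi * q / 2) * I) := by
  rw [cpow_def_of_ne_zero (neg_ne_zero.2 I_ne_zero), log_neg_I]; congr 1; ring

theorem I_cpow_add (q : ℂ) : I ^ q + (-I) ^ q = 2 * cos (Real.pi * q / 2) := by
  rw [I_cpow_eq, neg_I_cpow_eq, Complex.cos]; ring

theorem I_cpow_sub (q : ℂ) : I ^ q - (-I) ^ q = 2 * I * sin (Real.pi * q / 2) := by
  rw [I_cpow_eq, neg_I_cpow_eq, Complex.sin]
  linear_combination (cexp (Real.pi * q / 2 * I) - cexp (-(Real.pi * q / 2) * I)) * I_mul_I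

theorem I_cpow_mul (q : ℂ) : I ^ q * (-I) ^ q = 1 := by
  rw [I_cpow_eq, neg_I_cpow_eq, ← Complex.exp_add]; simp

theorem cexp_I_pi_nat {ω : ℂ} (h : IsUnitI ω) (n : ℕ) :
    cexp (ω * ((Real.pi * n : ℝ) : ℂ)) = (-1) ^ n := by
  rcases h with rfl | rfl
  · rw [← Complex.exp_pi_mul_I, ← Complex.exp_nat_mul]; congr 1; push_cast; ring
  · have : cexp (-(Real.pi * I)) = -1 := by rw [Complex.exp_neg, Complex.exp_pi_mul_I]; norm_num
    rw [← this, ← Complex.exp_nat_mul]; congr 1; push_cast; ring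

/-- The combination of `kInt` over `ω = ±I` that yields the Bessel function of the second kind. The sign
`(-1)ⁿ` is the value of `exp(ωx)` at `x = πn`. -/
theorem kInt_comb {a : ℂ} (ha0 : 0 < a.re) (ha1 : a.re < 1) (ha : cos (Real.pi * a) ≠ 0) (n : ℕ)
    (hn : 0 < n) :
    2 * 2 ^ (2 * a) * (I ^ a * kInt a a (-I) ((2 * (Real.pi * n) : ℝ) : ℂ) +
      (-I) ^ a * kInt a a I ((2 * (Real.pi * n) : ℝ) : ℂ)) =
    -((-1) ^ n * (((Real.pi * n / 2 : ℝ) : ℂ) ^ (-(a + 1 / 2)) * (Gamma (a + 1) *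
      ((Real.sqrt Real.pi : ℝ) : ℂ))) * besselY (a + 1 / 2) (Real.pi * n)) := by
  have hx : 0 < Real.pi * n := by positivity
  have hx2 : ((Real.pi * n / 2 : ℝ) : ℂ) ≠ 0 := ofReal_ne_zero.2 (by positivity)
  have haz : a ≠ 0 := fun h => by rw [h] at ha0; simp at ha0
  have k1 := kInt_eq_gBes (ω := I) (Or.inl rfl) ha0 ha1 hx
  have k2 := kInt_eq_gBes (ω := -I) (Or.inr rfl) ha0 ha1 hx
  rw [cexp_I_pi_nat (Or.inl rfl)] at k1
  rw [cexp_I_pi_nat (Or.inr rfl)] at k2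
  have hm : ((-1 : ℂ) ^ n) * (-1) ^ n = 1 := by rw [← mul_pow]; simp
  have hsin : sin (Real.pi * (a + 1 / 2)) = cos (Real.pi * a) := by
    rw [show (Real.pi : ℂ) * (a + 1 / 2) = Real.pi * a + Real.pi / 2 by ring, sin_add_pi_div_two]
  have hcos : I ^ a * I ^ (a + 1) + (-I) ^ a * (-I) ^ (a + 1) = 2 * cos (Real.pi * (a + 1 / 2)) := by
    rw [← cpow_add _ _ I_ne_zero, ← cpow_add _ _ (neg_ne_zero.2 I_ne_zero), I_cpow_add]
    congr 2; ring
  have hpi : (Real.pi : ℂ) = ((Real.sqrt Real.pi : ℝ) : ℂ) ^ 2 := by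
    rw [← ofReal_pow, Real.sq_sqrt Real.pi_pos.le]
  have hsp := sqrt_pi_ne
  rw [besselY, hsin, besselJ_eq _ hx, besselJ_eq _ hx]
  have e1 : ((Real.pi * n / 2 : ℝ) : ℂ) ^ (-(a + 1 / 2)) * ((Real.pi * n / 2 : ℝ) : ℂ) ^ (a + 1 / 2) = 1 := by
    rw [← cpow_add _ _ hx2]; simp
  have e2 : ((Real.pi * n / 2 : ℝ) : ℂ) ^ (-(a + 1 / 2)) * ((Real.pi * n / 2 : ℝ) : ℂ) ^ (-(a + 1 / 2)) =
      ((Real.pi * n / 2 : ℝ) : ℂ) ^ (-2 * a - 1) := by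
    rw [← cpow_add _ _ hx2]; congr 1; ring
  rw [show -(a + 1 / 2) = -1 / 2 - a by ring] at *
  rw [Complex.Gamma_add_one _ haz]
  have hp1 := I_cpow_mul a
  have hI1 : I ^ (a + 1) = I * I ^ a := by rw [cpow_add _ _ I_ne_zero, cpow_one, mul_comm]
  have hI2 : (-I) ^ (a + 1) = -I * (-I) ^ a := by
    rw [cpow_add _ _ (neg_ne_zero.2 I_ne_zero), cpow_one, mul_comm]
  have hn1 : I ^ (-a) = (-I) ^ a := by
    rw [I_cpow_eq, neg_I_cpow_eq]; congr 1; ring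
  have hn2 : (-I) ^ (-a) = I ^ a := by
    rw [I_cpow_eq, neg_I_cpow_eq]; congr 1; ring
  rw [hn1, hI1] at k1
  rw [hn2, hI2] at k2
  rw [hI1, hI2] at hcos
  generalize I ^ a = u at *
  generalize (-I) ^ a = v at *
  generalize kInt a a I ((2 * (Real.pi * n) : ℝ) : ℂ) = K1 at *
  generalize kInt a a (-I) ((2 * (Real.pi * n) : ℝ) : ℂ) = K2 at *
  generalize gBes (a + 1 / 2) (Real.pi * n) = g at *
  generalize gBes (-1 / 2 - a) (Real.pi * n) = g' at *
  generalize ((Real.pi * n / 2 : ℝ) : ℂ) ^ (-1 / 2 - a) = X at *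
  generalize ((Real.pi * n / 2 : ℝ) : ℂ) ^ (-2 * a - 1) = X2 at *
  generalize ((Real.pi * n / 2 : ℝ) : ℂ) ^ (a + 1 / 2) = X' at *
  generalize cos (Real.pi * a) = C at *
  generalize cos (Real.pi * (a + 1 / 2)) = C' at *
  generalize Gamma a = G at *
  rw [hpi] at k1 k2
  generalize ((Real.sqrt Real.pi : ℝ) : ℂ) = p at *
  generalize (2 : ℂ) ^ (2 * a) = T at *
  generalize (-1 : ℂ) ^ n = m at *
  have hII := I_mul_I
  have k1' : 4 * T * C * I * (m * K1) = a * p * G * (-v * g + I * u * (X2 * g')) := by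
    field_simp at k1
    linear_combination k1
  have k2' : 4 * T * C * -I * (m * K2) = a * p * G * (-u * g + -I * v * (X2 * g')) := by
    field_simp at k2
    linear_combination k2
  have key : 2 * T * C * (u * K2 + v * K1) = m * (a * p * G) * (X2 * g' - C' * g) := by
    linear_combination (-I * v * m / 2) * k1' + (I * u * m / 2) * k2' +
      2 * T * C * (u * K2 + v * K1) * (m ^ 2 * hII - hm) +
      a * p * G * m / 2 * (-g * hcos + X2 * g' * (-2 * u * v * hII + 2 * hp1))
  rw [← mul_div_assoc, ← neg_div, eq_div_iff ha]
  linear_combination key - m * a * p * G * g' * e2 + m * a * p * G * C' * g * e1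

/-- The two subtracted Taylor terms contribute Gamma integrals. -/
theorem laplace_taylorRem {s ω : ℂ} (hs1 : 1 < s.re) (hs2 : s.re < 2) (h : IsUnitI ω) {x : ℝ}
    (hx : 0 < x) :
    IntegrableOn (fun t : ℝ => (t : ℂ) ^ (s - 1) * cexp (-((x : ℂ) * t)) * taylorRem (s - 1) ω t)
        (Ioi 0) ∧
      ∫ t in Ioi (0 : ℝ), (t : ℂ) ^ (s - 1) * cexp (-((x : ℂ) * t)) * taylorRem (s - 1) ω t =
        kInt (s - 1) (s - 1) ω x - (x : ℂ) ^ (-s) * Gamma s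
          - (s - 1) * ω * ((x : ℂ) ^ (-(s + 1)) * Gamma (s + 1)) := by
  have hx' : 0 < (x : ℂ).re := by simpa using hx
  have i1 := kInt_integrable h (p := s - 1) (q := s - 1) (z := x) (by simp; linarith)
    (by simp; linarith) hx'
  have i2 : IntegrableOn (fun t : ℝ => (t : ℂ) ^ (s - 1) * cexp (-((x : ℂ) * t))) (Ioi 0) :=
    cpow_exp_integrable (by simp; linarith) x hx
  have i3 : IntegrableOn (fun t : ℝ => (s - 1) * ω *
      ((t : ℂ) ^ (s + 1 - 1) * cexp (-((x : ℂ) * t)))) (Ioi 0) :=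
    Integrable.const_mul (cpow_exp_integrable (by simp; linarith) x hx) _
  have e : ∀ t ∈ Ioi (0 : ℝ), kDens (s - 1) (s - 1) ω t * cexp (-((x : ℂ) * t)) -
      (t : ℂ) ^ (s - 1) * cexp (-((x : ℂ) * t)) -
      (s - 1) * ω * ((t : ℂ) ^ (s + 1 - 1) * cexp (-((x : ℂ) * t))) =
      (t : ℂ) ^ (s - 1) * cexp (-((x : ℂ) * t)) * taylorRem (s - 1) ω t := by
    intro t ht
    have ht0 : (t : ℂ) ≠ 0 := ofReal_ne_zero.2 (ne_of_gt ht)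
    rw [kDens, taylorRem, show s + 1 - 1 = (s - 1) + 1 by ring, cpow_add _ _ ht0, cpow_one]
    ring
  refine ⟨((i1.sub i2).sub i3).congr_fun e measurableSet_Ioi, ?_⟩
  rw [← setIntegral_congr_fun measurableSet_Ioi e]
  have e1 : ∫ t in Ioi (0 : ℝ), (kDens (s - 1) (s - 1) ω t * cexp (-((x : ℂ) * t)) -
      (t : ℂ) ^ (s - 1) * cexp (-((x : ℂ) * t)) -
      (s - 1) * ω * ((t : ℂ) ^ (s + 1 - 1) * cexp (-((x : ℂ) * t)))) =
      (∫ t in Ioi (0 : ℝ), (kDens (s - 1) (s - 1) ω t * cexp (-((x : ℂ) * t)) -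
        (t : ℂ) ^ (s - 1) * cexp (-((x : ℂ) * t)))) -
      ∫ t in Ioi (0 : ℝ), (s - 1) * ω * ((t : ℂ) ^ (s + 1 - 1) * cexp (-((x : ℂ) * t))) :=
    integral_sub (i1.sub i2) i3
  rw [e1, integral_sub i1 i2, integral_const_mul, gamma_laplace (by linarith) hx',
    gamma_laplace (by simp; linarith) hx', kInt]

/-- The Gamma integrals of the two Taylor terms become the elementary terms of the Bessel bracket; the
`kInt` part becomes its Bessel function. -/
theorem remInt_eq_kInt {s : ℂ} (hs1 : 1 < s.re) (hs2 : s.re < 2) {x : ℝ} (hx : 0 < x) :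
    remInt s x = I ^ (s - 1) * kInt (s - 1) (s - 1) (-I) x
        + (-I) ^ (s - 1) * kInt (s - 1) (s - 1) I x
      - 2 * sin (Real.pi * s / 2) * ((x : ℂ) ^ (-s) * Gamma s)
      + 2 * (s - 1) * cos (Real.pi * s / 2) * ((x : ℂ) ^ (-(s + 1)) * Gamma (s + 1)) := by
  obtain ⟨i1, e1⟩ := laplace_taylorRem hs1 hs2 (ω := I) (Or.inl rfl) hx
  obtain ⟨i2, e2⟩ := laplace_taylorRem hs1 hs2 (ω := -I) (Or.inr rfl) hx
  have e : remInt s x = (∫ t in Ioi (0 : ℝ), I ^ (s - 1) * ((t : ℂ) ^ (s - 1) *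
        cexp (-((x : ℂ) * t)) * taylorRem (s - 1) (-I) t)) +
      ∫ t in Ioi (0 : ℝ), (-I) ^ (s - 1) * ((t : ℂ) ^ (s - 1) *
        cexp (-((x : ℂ) * t)) * taylorRem (s - 1) I t) := by
    rw [← integral_add (i2.const_mul _) (i1.const_mul _), remInt]
    refine setIntegral_congr_fun measurableSet_Ioi fun t ht => ?_
    ring
  rw [e, integral_const_mul, integral_const_mul, e1, e2]
  have h1 := I_cpow_add (s - 1)
  have h2 := I_cpow_sub (s - 1)
  rw [show (Real.pi : ℂ) * (s - 1) / 2 = Real.pi * s / 2 - Real.pi / 2 by ring,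
    cos_sub_pi_div_two] at h1
  rw [show (Real.pi : ℂ) * (s - 1) / 2 = Real.pi * s / 2 - Real.pi / 2 by ring,
    sin_sub_pi_div_two] at h2
  linear_combination (-((x : ℂ) ^ (-s) * Gamma s)) * h1 +
    (s - 1) * I * ((x : ℂ) ^ (-(s + 1)) * Gamma (s + 1)) * h2 -
    2 * (s - 1) * cos (Real.pi * s / 2) * ((x : ℂ) ^ (-(s + 1)) * Gamma (s + 1)) * I_mul_I

/-! ### The bracket of the Bessel series -/

theorem sin_half_ne {s : ℂ} (hs1 : 1 < s.re) (hs2 : s.re < 2) : sin (Real.pi * s / 2) ≠ 0 := by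
  rw [Ne, Complex.sin_eq_zero_iff]
  rintro ⟨k, hk⟩
  have hpi : (Real.pi : ℂ) ≠ 0 := ofReal_ne_zero.2 Real.pi_ne_zero
  have h2 : s = ((2 * k : ℝ) : ℂ) := by
    push_cast
    field_simp at hk
    linear_combination hk
  rw [h2, ofReal_re] at hs1 hs2
  norm_cast at hs1 hs2
  omega

theorem cos_half_ne {s : ℂ} (hs1 : 1 < s.re) (hs2 : s.re < 2) : cos (Real.pi * s / 2) ≠ 0 := by
  rw [Ne, Complex.cos_eq_zero_iff]
  rintro ⟨k, hk⟩
  have hpi : (Real.pi : ℂ) ≠ 0 := ofReal_ne_zero.2 Real.pi_ne_zero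
  have h2 : s = ((2 * k + 1 : ℝ) : ℂ) := by
    push_cast
    field_simp at hk
    linear_combination hk
  rw [h2, ofReal_re] at hs1 hs2
  norm_cast at hs1 hs2
  omega

theorem cos_shift_ne {s : ℂ} (hs1 : 1 < s.re) (hs2 : s.re < 2) (hs3 : s ≠ 3 / 2) :
    cos (Real.pi * (s - 1)) ≠ 0 := by
  rw [Ne, Complex.cos_eq_zero_iff]
  rintro ⟨k, hk⟩
  have hpi : (Real.pi : ℂ) ≠ 0 := ofReal_ne_zero.2 Real.pi_ne_zero
  have h2 : s = (((2 * k + 3) / 2 : ℝ) : ℂ) := by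
    push_cast
    field_simp at hk
    linear_combination hk / 2
  have hs1' := hs1
  have hs2' := hs2
  rw [h2, ofReal_re] at hs1' hs2'
  have h3 : (2 : ℝ) < 2 * k + 3 := by linarith
  have h4 : 2 * (k : ℝ) + 3 < 4 := by linarith
  norm_cast at h3 h4
  have hk0 : k = 0 := by omega
  apply hs3
  rw [h2, hk0]; push_cast; ring

/-- The bracket multiplying `σ_{2s-1}(n) / n^{s-1/2}` in the Bessel series. -/
noncomputable def bracket (s : ℂ) (n : ℕ) : ℂ :=
  1 / ((Real.sqrt n : ℝ) : ℂ)
    + (Real.pi : ℂ) / ((Real.sqrt 2 : ℝ) : ℂ) *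
        ((-1 : ℂ) ^ n / Complex.sin ((Real.pi : ℂ) * s / 2)) *
        besselY (s - 1 / 2) (Real.pi * n)
    + s * (1 - s) / (2 * (Real.pi : ℂ) * (n : ℂ) ^ ((3 : ℂ) / 2)) *
        (Complex.cos ((Real.pi : ℂ) * s / 2) / Complex.sin ((Real.pi : ℂ) * s / 2))

theorem ofReal_sqrt_eq_cpow {x : ℝ} (hx : 0 ≤ x) : ((Real.sqrt x : ℝ) : ℂ) = (x : ℂ) ^ (1 / 2 : ℂ) := by
  rw [Real.sqrt_eq_rpow, ofReal_cpow hx]; push_cast; rfl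

/-- The remainder integral at the argument `2πn` is, up to an explicit factor, the bracket. -/
theorem remInt_eq_bracket {s : ℂ} (hs1 : 1 < s.re) (hs2 : s.re < 2) (hs3 : s ≠ 3 / 2) {n : ℕ}
    (hn : 0 < n) :
    remInt s (2 * (Real.pi * n)) = -2 * Gamma s * ((2 * (Real.pi * n) : ℝ) : ℂ) ^ (-s) *
      sin (Real.pi * s / 2) * (n : ℂ) ^ (1 / 2 : ℂ) * bracket s n := by
  have hy : 0 < Real.pi * n := by positivity
  have hy0 : ((Real.pi * n : ℝ) : ℂ) ≠ 0 := ofReal_ne_zero.2 hy.ne'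
  have h2y0 : ((2 * (Real.pi * n) : ℝ) : ℂ) ≠ 0 := ofReal_ne_zero.2 (by positivity)
  have hn0 : (n : ℂ) ≠ 0 := Nat.cast_ne_zero.2 hn.ne'
  have hs0 : s ≠ 0 := fun h => by rw [h] at hs1; simp at hs1; linarith
  have hsin := sin_half_ne hs1 hs2
  have hpi : (Real.pi : ℂ) ≠ 0 := ofReal_ne_zero.2 Real.pi_ne_zero
  have hc := kInt_comb (a := s - 1) (by simp; linarith) (by simp; linarith)
    (cos_shift_ne hs1 hs2 hs3) n hn
  rw [remInt_eq_kInt hs1 hs2 (by positivity), bracket]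
  have hrn : ((Real.sqrt n : ℝ) : ℂ) = (n : ℂ) ^ (1 / 2 : ℂ) := by
    rw [ofReal_sqrt_eq_cpow (by positivity)]; norm_cast
  have hrn2 : (n : ℂ) ^ (1 / 2 : ℂ) * (n : ℂ) ^ (1 / 2 : ℂ) = n := by
    rw [← cpow_add _ _ hn0]; norm_num
  have hrn0 : (n : ℂ) ^ (1 / 2 : ℂ) ≠ 0 := fun h => hn0 (by rw [← hrn2, h, zero_mul])
  have h32 : (n : ℂ) ^ ((3 : ℂ) / 2) = n * (n : ℂ) ^ (1 / 2 : ℂ) := by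
    rw [show (3 : ℂ) / 2 = 1 + 1 / 2 by norm_num, cpow_add _ _ hn0, cpow_one]
  have hr2 : ((Real.sqrt 2 : ℝ) : ℂ) ^ 2 = 2 := by
    rw [← ofReal_pow, Real.sq_sqrt (by norm_num)]; norm_num
  have hr20 : ((Real.sqrt 2 : ℝ) : ℂ) ≠ 0 := fun h => by rw [h] at hr2; norm_num at hr2
  have hpp : ((Real.sqrt Real.pi : ℝ) : ℂ) ^ 2 = Real.pi := by
    rw [← ofReal_pow, Real.sq_sqrt Real.pi_pos.le]
  have hTn : (2 : ℂ) ^ s ≠ 0 := by simp [cpow_eq_zero_iff]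
  have hX1 : ((2 * (Real.pi * n) : ℝ) : ℂ) ^ (-(s + 1)) =
      ((2 * (Real.pi * n) : ℝ) : ℂ) ^ (-s) / (2 * (Real.pi * n)) := by
    rw [neg_add, cpow_add _ _ h2y0, cpow_neg_one, div_eq_mul_inv]; push_cast; rfl
  have hX : ((2 * (Real.pi * n) : ℝ) : ℂ) ^ (-s) = (2 ^ s)⁻¹ * ((Real.pi * n : ℝ) : ℂ) ^ (-s) := by
    rw [ofReal_mul, ofReal_mul_cpow two_pos, ofReal_ofNat, cpow_neg]
  have hY : ((Real.pi * n / 2 : ℝ) : ℂ) ^ (-(s - 1 / 2)) = ((Real.pi * n : ℝ) : ℂ) ^ (-s) *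
      (((Real.sqrt Real.pi : ℝ) : ℂ) * (n : ℂ) ^ (1 / 2 : ℂ)) * (2 ^ s / ((Real.sqrt 2 : ℝ) : ℂ)) := by
    have h1 := cpow_eq_two_mul_half (-(s - 1 / 2)) (Real.pi * n)
    have h2 : (2 : ℂ) ^ (s - 1 / 2) * (2 : ℂ) ^ (-(s - 1 / 2)) = 1 := by
      rw [← cpow_add _ _ two_ne_zero]; simp
    have h3 : (2 : ℂ) ^ (s - 1 / 2) = 2 ^ s / ((Real.sqrt 2 : ℝ) : ℂ) := by
      rw [cpow_sub _ _ two_ne_zero, ofReal_sqrt_eq_cpow (by norm_num), ofReal_ofNat]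
    have h4 : ((Real.pi * n : ℝ) : ℂ) ^ (-(s - 1 / 2)) = ((Real.pi * n : ℝ) : ℂ) ^ (-s) *
        (((Real.sqrt Real.pi : ℝ) : ℂ) * (n : ℂ) ^ (1 / 2 : ℂ)) := by
      rw [show -(s - 1 / 2) = -s + 1 / 2 by ring, cpow_add _ _ hy0, ofReal_mul,
        ofReal_mul_cpow Real.pi_pos, ofReal_sqrt_eq_cpow Real.pi_pos.le, ofReal_natCast,
        ofReal_mul_cpow Real.pi_pos]
    rw [← h3, ← h4, h1]
    linear_combination (-((Real.pi * n / 2 : ℝ) : ℂ) ^ (-(s - 1 / 2))) * h2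
  have hT : (2 : ℂ) ^ (2 * (s - 1)) = 2 ^ s * 2 ^ s / 4 := by
    rw [show 2 * (s - 1) = s + s - 2 by ring, cpow_sub _ _ two_ne_zero, cpow_add _ _ two_ne_zero,
      cpow_ofNat]
    norm_num
  rw [show s - 1 + 1 / 2 = s - 1 / 2 by ring, show s - 1 + 1 = s by ring, hY, hT] at hc
  rw [hX1, hX, hrn, h32, Complex.Gamma_add_one _ hs0]
  generalize I ^ (s - 1) * kInt (s - 1) (s - 1) (-I) ((2 * (Real.pi * n) : ℝ) : ℂ) +
    (-I) ^ (s - 1) * kInt (s - 1) (s - 1) I ((2 * (Real.pi * n) : ℝ) : ℂ) = S at *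
  generalize besselY (s - 1 / 2) (Real.pi * n) = Y at *
  generalize ((Real.pi * n : ℝ) : ℂ) ^ (-s) = X at *
  generalize (n : ℂ) ^ (1 / 2 : ℂ) = r at *
  generalize ((Real.sqrt 2 : ℝ) : ℂ) = q at *
  have hS : S = -2 * (2 ^ s)⁻¹ * X * Gamma s * r * (Real.pi / q * (-1) ^ n * Y) := by
    have : S = (2 * (2 ^ s * 2 ^ s / 4) * S) * (2 / (2 ^ s * 2 ^ s)) := by field_simp; ring
    rw [this, hc, ← hpp]
    field_simp
  rw [hS]
  generalize (2 : ℂ) ^ s = T at *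
  generalize sin (Real.pi * s / 2) = sn at *
  generalize cos (Real.pi * s / 2) = cs at *
  field_simp
  ring

/-! ### Summation over both variables -/

theorem hasSum_pnat_zeta {w : ℂ} (hw : 1 < w.re) :
    HasSum (fun N : ℕ+ => ((N : ℕ) : ℂ) ^ (-w)) (riemannZeta w) := by
  have hsum : Summable fun n : ℕ => ((n : ℕ) : ℂ) ^ (-w) := by
    simpa [cpow_neg] using Complex.summable_one_div_nat_cpow.2 hw
  have hsum' : Summable fun N : ℕ+ => ((N : ℕ) : ℂ) ^ (-w) :=
    hsum.comp_injective PNat.coe_injective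
  have h : ∑' N : ℕ+, ((N : ℕ) : ℂ) ^ (-w) = riemannZeta w := by
    rw [tsum_pnat_eq_tsum_succ (f := fun n : ℕ => (n : ℂ) ^ (-w)),
      zeta_eq_tsum_one_div_nat_add_one_cpow hw]
    simp [cpow_neg]
  exact h ▸ hsum'.hasSum

theorem summable_pnat_rpow {b : ℝ} (hb : b < -1) : Summable fun N : ℕ+ => ((N : ℕ) : ℝ) ^ b :=
  (Real.summable_nat_rpow.2 hb).comp_injective PNat.coe_injective

/-- The general term `k^{2s-1} * remInt s (2πkN)` of the double series of remainders, at the pair `(k, N)`. -/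
noncomputable def dblTerm (s : ℂ) (p : ℕ+ × ℕ+) : ℂ :=
  ((p.1 : ℕ) : ℂ) ^ (2 * s - 1) * remInt s (2 * (Real.pi * ((p.1 * p.2 : ℕ+) : ℕ)))

theorem freqInt_eq_dblTerm (s : ℂ) (k N : ℕ+) :
    freqInt s ((N : ℕ) : ℝ) k.natPred = ((2 * Real.pi : ℝ) : ℂ) ^ (2 * s - 1) * dblTerm s (k, N) := by
  have hk : ((k.natPred : ℕ) : ℝ) + 1 = ((k : ℕ) : ℝ) := by
    exact_mod_cast congrArg (Nat.cast (R := ℝ)) k.natPred_add_one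
  rw [freqInt_eq, dblTerm, freq, hk, ← mul_assoc, ofReal_mul,
    ofReal_mul_cpow (by positivity), ofReal_natCast]
  congr 2
  simp only [PNat.mul_coe]; push_cast; ring

/-- Absolute convergence, from `freqInt_bound`: `k` carries the exponent `Re s - 3 < -1` and `N` the
exponent `-(Re s + 2)`. -/
theorem summable_dblTerm {s : ℂ} (hs1 : 1 < s.re) (hs2 : s.re < 2) : Summable (dblTerm s) := by
  have h2 : ((2 * Real.pi : ℝ) : ℂ) ^ (2 * s - 1) ≠ 0 := by
    simp [cpow_eq_zero_iff, Real.pi_ne_zero]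
  rw [← summable_mul_left_iff h2]
  have hb := (summable_pnat_rpow (b := s.re - 3) (by linarith)).mul_of_nonneg
    (summable_pnat_rpow (b := -(s.re + 2)) (by linarith))
    (fun _ => by positivity) (fun _ => by positivity)
  refine Summable.of_norm_bounded (hb.mul_left (remConst s * Real.Gamma (s.re + 2))) ?_
  rintro ⟨k, N⟩
  have hk : ((k.natPred : ℕ) : ℝ) + 1 = ((k : ℕ) : ℝ) := by
    exact_mod_cast congrArg (Nat.cast (R := ℝ)) k.natPred_add_one
  have h := freqInt_bound hs1 hs2 (M := ((N : ℕ) : ℝ)) (by exact_mod_cast N.pos) k.natPred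
  rw [hk, freqInt_eq_dblTerm] at h
  exact h

theorem tsum_freqInt {s : ℂ} (N : ℕ+) :
    ∑' k : ℕ, freqInt s ((N : ℕ) : ℝ) k =
      ((2 * Real.pi : ℝ) : ℂ) ^ (2 * s - 1) * ∑' k : ℕ+, dblTerm s (k, N) := by
  rw [← Equiv.pnatEquivNat.tsum_eq, ← tsum_mul_left]
  exact tsum_congr fun k => freqInt_eq_dblTerm s k N

/-- Grouping the pairs `(k, N)` by the product `n = kN` turns the double series into a divisor sum. -/
theorem hasSum_csigma {s : ℂ} (hs1 : 1 < s.re) (hs2 : s.re < 2) :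
    HasSum (fun n : ℕ+ => csigma (2 * s - 1) n * remInt s (2 * (Real.pi * ((n : ℕ) : ℝ))))
      (∑' p, dblTerm s p) := by
  have h := sigmaAntidiagonalEquivProd.hasSum_iff.2 (summable_dblTerm hs1 hs2).hasSum
  refine h.sigma fun n => ?_
  have h1 := hasSum_fintype fun c : Nat.divisorsAntidiagonal n =>
    (dblTerm s ∘ sigmaAntidiagonalEquivProd) ⟨n, c⟩
  convert! h1 using 1
  rw [csigma, Finset.sum_mul, ← Nat.sum_divisorsAntidiagonal
    (fun d _ => (d : ℂ) ^ (2 * s - 1) * remInt s (2 * (Real.pi * ((n : ℕ) : ℝ)))),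
    ← Finset.sum_coe_sort]
  refine Finset.sum_congr rfl fun c _ => ?_
  have hc := (Nat.mem_divisorsAntidiagonal.1 c.2).1
  simp only [Function.comp, dblTerm, sigmaAntidiagonalEquivProd, Equiv.coe_fn_mk,
    divisorsAntidiagonalFactors, PNat.mk_coe, ← hc]
  rfl

theorem base_cpow_eq (s : ℂ) (n N : ℕ+) :
    ((((n : ℕ) ^ 2 + (n : ℕ) * (N : ℕ) : ℕ)) : ℂ) ^ (-s) =
      ((n : ℕ) : ℂ) ^ (-s) * (((n + N : ℕ+) : ℕ) : ℂ) ^ (-s) := by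
  rw [show (n : ℕ) ^ 2 + (n : ℕ) * (N : ℕ) = (n : ℕ) * ((n + N : ℕ+) : ℕ) by
    rw [PNat.add_coe]; ring, Nat.cast_mul, natCast_mul_natCast_cpow]

theorem summable_base {s : ℂ} (hs1 : 1 < s.re) :
    Summable fun p : ℕ+ × ℕ+ => ((((p.1 : ℕ) ^ 2 + (p.1 : ℕ) * (p.2 : ℕ) : ℕ)) : ℂ) ^ (-s) := by
  have hb := (summable_pnat_rpow (b := -s.re) (by linarith)).mul_of_nonneg
    (summable_pnat_rpow (b := -s.re) (by linarith)) (fun _ => by positivity) (fun _ => by positivity)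
  refine Summable.of_norm_bounded hb ?_
  rintro ⟨n, N⟩
  rw [base_cpow_eq, norm_mul, norm_natCast_cpow_of_pos n.pos, norm_natCast_cpow_of_pos (n + N).pos,
    neg_re]
  refine mul_le_mul_of_nonneg_left ?_ (by positivity)
  refine Real.rpow_le_rpow_of_nonpos (by exact_mod_cast N.pos) ?_ (by linarith)
  rw [PNat.add_coe]; push_cast; linarith [Nat.cast_nonneg (α := ℝ) (n : ℕ)]

theorem tsum_base_inner {s : ℂ} (hs1 : 1 < s.re) (hs2 : s.re < 2) (N : ℕ+) :
    ∑' n : ℕ+, ((((n : ℕ) ^ 2 + (n : ℕ) * (N : ℕ) : ℕ)) : ℂ) ^ (-s) =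
      riemannZeta s * ((N : ℕ) : ℂ) ^ (-s) - s * riemannZeta (s - 1) * ((N : ℕ) : ℂ) ^ (-(s + 1))
        + Gamma (1 - s) * Gamma (2 * s - 1) / Gamma s * ((N : ℕ) : ℂ) ^ (-(2 * s - 1))
        + Gamma (1 - s) / Gamma s *
          (((2 * Real.pi : ℝ) : ℂ) ^ (2 * s - 1) * ∑' k : ℕ+, dblTerm s (k, N)) := by
  have h := (tsum_inner_eq hs1 hs2 (M := ((N : ℕ) : ℝ)) (by exact_mod_cast N.pos)).2
  rw [tsum_freqInt, ofReal_natCast] at h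
  rw [← h, tsum_congr (base_cpow_eq s · N)]
  simp only [PNat.add_coe]
  rw [tsum_pnat_eq_tsum_succ (f := fun n : ℕ => (n : ℂ) ^ (-s) * ((n + (N : ℕ) : ℕ) : ℂ) ^ (-s))]
  refine tsum_congr fun n => ?_
  push_cast; rfl

/-- `tsum_base_inner` summed over `N`: three zeta values and the double series of remainders. -/
theorem tsum_base_eq {s : ℂ} (hs1 : 1 < s.re) (hs2 : s.re < 2) :
    ∑' p : ℕ+ × ℕ+, ((((p.1 : ℕ) ^ 2 + (p.1 : ℕ) * (p.2 : ℕ) : ℕ)) : ℂ) ^ (-s) =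
      riemannZeta s * riemannZeta s - s * riemannZeta (s - 1) * riemannZeta (s + 1)
        + Gamma (1 - s) * Gamma (2 * s - 1) / Gamma s * riemannZeta (2 * s - 1)
        + Gamma (1 - s) / Gamma s *
          (((2 * Real.pi : ℝ) : ℂ) ^ (2 * s - 1) * ∑' p, dblTerm s p) := by
  have hsw := (Equiv.prodComm ℕ+ ℕ+).summable_iff.2 (summable_base hs1)
  have hdw := (Equiv.prodComm ℕ+ ℕ+).summable_iff.2 (summable_dblTerm hs1 hs2)
  rw [← (Equiv.prodComm ℕ+ ℕ+).tsum_eq, ← (Equiv.prodComm ℕ+ ℕ+).tsum_eq (dblTerm s)]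
  have e1 := hsw.tsum_prod
  have e2 := hdw.tsum_prod
  simp only [Function.comp, Equiv.prodComm_apply, Prod.swap] at e1 e2 ⊢
  rw [e1, e2, tsum_congr (tsum_base_inner hs1 hs2)]
  have hd : Summable fun N : ℕ+ => ∑' k : ℕ+, dblTerm s (k, N) := hdw.prod
  exact ((((hasSum_pnat_zeta hs1).mul_left _).sub
    ((hasSum_pnat_zeta (w := s + 1) (by simp; linarith)).mul_left _)).add
    ((hasSum_pnat_zeta (w := 2 * s - 1) (by simp; linarith)).mul_left _)).add
    ((hd.hasSum.mul_left _).mul_left _) |>.tsum_eq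

/-- The `n`-th term of the Bessel series is a constant times the `n`-th divisor-weighted remainder. -/
theorem bessel_term_eq {s : ℂ} (hs1 : 1 < s.re) (hs2 : s.re < 2) (hs3 : s ≠ 3 / 2) (n : ℕ+) :
    csigma (2 * s - 1) n / ((n : ℕ) : ℂ) ^ (s - 1 / 2) * bracket s n =
      -(((2 * Real.pi : ℝ) : ℂ) ^ s / (2 * Gamma s * sin (Real.pi * s / 2))) *
        (csigma (2 * s - 1) n * remInt s (2 * (Real.pi * ((n : ℕ) : ℝ)))) := by
  have hn0 : ((n : ℕ) : ℂ) ≠ 0 := Nat.cast_ne_zero.2 n.pos.ne'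
  have hpi : (Real.pi : ℂ) ≠ 0 := ofReal_ne_zero.2 Real.pi_ne_zero
  have hG : Gamma s ≠ 0 := Gamma_ne_zero_of_re_pos (by linarith)
  have hsin := sin_half_ne hs1 hs2
  have hX : ((2 * (Real.pi * (n : ℕ)) : ℝ) : ℂ) ^ (-s) =
      (((2 * Real.pi : ℝ) : ℂ) ^ s)⁻¹ * (((n : ℕ) : ℂ) ^ s)⁻¹ := by
    rw [← mul_assoc, ofReal_mul, ofReal_mul_cpow (by positivity), ofReal_natCast, cpow_neg,
      cpow_neg]
  have hp : ((2 * Real.pi : ℝ) : ℂ) ^ s ≠ 0 := by simp [cpow_eq_zero_iff, Real.pi_ne_zero]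
  have hns : ((n : ℕ) : ℂ) ^ s ≠ 0 := by simp [cpow_eq_zero_iff]
  have hnh : ((n : ℕ) : ℂ) ^ (1 / 2 : ℂ) ≠ 0 := by simp [cpow_eq_zero_iff]
  rw [remInt_eq_bracket hs1 hs2 hs3 n.pos, hX, cpow_sub _ _ hn0]
  generalize ((n : ℕ) : ℂ) ^ (1 / 2 : ℂ) = r at *
  generalize ((n : ℕ) : ℂ) ^ s = q at *
  generalize ((2 * Real.pi : ℝ) : ℂ) ^ s = P at *
  generalize sin (Real.pi * s / 2) = sn at *
  field_simp

/-- Euler's reflection formula, in the form needed to match the constants. -/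
theorem const_match {s : ℂ} (hs1 : 1 < s.re) (hs2 : s.re < 2) :
    Gamma (1 - s) / Gamma s * ((2 * Real.pi : ℝ) : ℂ) ^ (2 * s - 1) =
      ((2 * Real.pi : ℝ) : ℂ) ^ s / (2 * Gamma s * cos (Real.pi * s / 2)) *
        (((2 * Real.pi : ℝ) : ℂ) ^ s / (2 * Gamma s * sin (Real.pi * s / 2))) := by
  have hpi : (Real.pi : ℂ) ≠ 0 := ofReal_ne_zero.2 Real.pi_ne_zero
  have hG : Gamma s ≠ 0 := Gamma_ne_zero_of_re_pos (by linarith)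
  have hsin := sin_half_ne hs1 hs2
  have hcos := cos_half_ne hs1 hs2
  have hr := Gamma_mul_Gamma_one_sub s
  have hd : sin (Real.pi * s) = 2 * sin (Real.pi * s / 2) * cos (Real.pi * s / 2) := by
    rw [← sin_two_mul]; congr 1; ring
  have h2 : ((2 * Real.pi : ℝ) : ℂ) ≠ 0 := ofReal_ne_zero.2 (by positivity)
  have hg1 : Gamma (1 - s) = Real.pi / sin (Real.pi * s) / Gamma s := by
    rw [← hr]; field_simp
  rw [hg1, hd, cpow_sub _ _ h2, two_mul s, cpow_add _ _ h2, cpow_one]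
  generalize ((2 * Real.pi : ℝ) : ℂ) ^ s = P at *
  generalize sin (Real.pi * s / 2) = sn at *
  generalize cos (Real.pi * s / 2) = cs at *
  push_cast
  field_simp

theorem bessel_series_representation_L2 (s : ℂ) (hs1 : 1 < s.re) (hs2 : s.re < 2)
    (hs3 : s ≠ 3 / 2) :
    Summable (fun n : ℕ+ =>
      csigma (2 * s - 1) n / ((n : ℕ) : ℂ) ^ (s - 1 / 2) *
        (1 / ((Real.sqrt n : ℝ) : ℂ)
          + (Real.pi : ℂ) / ((Real.sqrt 2 : ℝ) : ℂ) *
              ((-1 : ℂ) ^ (n : ℕ) / Complex.sin ((Real.pi : ℂ) * s / 2)) *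
              besselY (s - 1 / 2) (Real.pi * (n : ℕ))
          + s * (1 - s) / (2 * (Real.pi : ℂ) * ((n : ℕ) : ℂ) ^ ((3 : ℂ) / 2)) *
              (Complex.cos ((Real.pi : ℂ) * s / 2) / Complex.sin ((Real.pi : ℂ) * s / 2)))) ∧
    ∑' p : ℕ+ × ℕ+, ((((p.1 : ℕ) ^ 2 + (p.1 : ℕ) * (p.2 : ℕ) : ℕ)) : ℂ) ^ (-s)
      = riemannZeta s ^ 2 - s * riemannZeta (s - 1) * riemannZeta (s + 1)
        + Complex.Gamma (1 - s) * Complex.Gamma (2 * s - 1) * riemannZeta (2 * s - 1) /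
            Complex.Gamma s
        - ((2 * Real.pi : ℝ) : ℂ) ^ s /
            (2 * Complex.Gamma s * Complex.cos ((Real.pi : ℂ) * s / 2)) *
          ∑' n : ℕ+,
            csigma (2 * s - 1) n / ((n : ℕ) : ℂ) ^ (s - 1 / 2) *
              (1 / ((Real.sqrt n : ℝ) : ℂ)
                + (Real.pi : ℂ) / ((Real.sqrt 2 : ℝ) : ℂ) *
                    ((-1 : ℂ) ^ (n : ℕ) / Complex.sin ((Real.pi : ℂ) * s / 2)) *
                    besselY (s - 1 / 2) (Real.pi * (n : ℕ))
                + s * (1 - s) / (2 * (Real.pi : ℂ) * ((n : ℕ) : ℂ) ^ ((3 : ℂ) / 2)) *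
                    (Complex.cos ((Real.pi : ℂ) * s / 2) /
                      Complex.sin ((Real.pi : ℂ) * s / 2))) := by
  have h := (hasSum_csigma hs1 hs2).mul_left
    (-(((2 * Real.pi : ℝ) : ℂ) ^ s / (2 * Gamma s * sin (Real.pi * s / 2))))
  simp_rw [← bessel_term_eq hs1 hs2 hs3] at h
  refine ⟨h.summable, ?_⟩
  have ht := h.tsum_eq
  simp only [bracket] at ht
  rw [tsum_base_eq hs1 hs2, ht]
  linear_combination (∑' p, dblTerm s p) * const_match hs1 hs2
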